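/- Let (Ω, 𝓕, 𝔽, P) satisfy the usual conditions, 0 < L < U, η progressively measurable with L ≤ η ≤ U (P ⊗ dt)-a.e., and λ : [0,∞) × ℕ → [0,∞) measurable with L ≤ λ(·, x) ≤ U Lebesgue-a.e. for each x ∈ ℕ. Suppose X and X′ are two counting processes on Ω (with jump times (τ_k) and (τ′_k) respectively, and associated filtrations 𝔾^k, 𝔾 and 𝔾′^k, 𝔾′ built as right-continuous regularizations of 𝔽 joined with the natural filtrations of the jump-time indicator processes) such that each of X and X′ satisfies: (i) the immersion chain 𝔽 ↪ 𝔾^1 ↪ ⋯ ↪ 𝔾^k ↪ ⋯ ↪ 𝔾 (resp. with primes); (ii) for each k ≥ 1 the process t ↦ P(τ_k > t | 𝓖^{k-1}_t) (resp. with primes) has a continuous strictly positive modification; and (iii) X_t − ∫_0^t (η_s / E[η_s | X_{s−}]) λ(s, X_{s−}) ds is a 𝔾-martingale (resp. with primes). Then X and X′ have the same law: for every n ≥ 1 and all times 0 ≤ t_1 < ⋯ < t_n, the joint distributions of (X_{t_1}, …, X_{t_n}) and (X′_{t_1}, …, X′_{t_n}) coincide. -/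

import Mathlib

open MeasureTheory ProbabilityTheory Filter Set
open scoped ENNReal Topology

noncomputable section

namespace InvMarkovJump

variable {Ω : Type*}

/-- `F` is a filtration (for times `t ≥ 0`) of sub-σ-algebras of `m0`. -/
def IsFiltration (m0 : MeasurableSpace Ω) (F : ℝ → MeasurableSpace Ω) : Prop :=
  (∀ s t : ℝ, 0 ≤ s → s ≤ t → F s ≤ F t) ∧ ∀ t : ℝ, F t ≤ m0

/-- The right-continuous regularization `(⋂_{s > t} F s)_{t ≥ 0}` of a filtration. -/
def rcReg (F : ℝ → MeasurableSpace Ω) : ℝ → MeasurableSpace Ω :=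
  fun t => ⨅ s ∈ Set.Ioi t, F s

/-- All sample paths of `M` are right-continuous (at every time `t ≥ 0`). -/
def RCPaths (M : ℝ → Ω → ℝ) : Prop :=
  ∀ ω, ∀ t : ℝ, 0 ≤ t → ContinuousWithinAt (fun s => M s ω) (Set.Ici t) t

/-- `M` is a martingale (for times `t ≥ 0`) with respect to the filtration `F`
under the measure `μ`: it is adapted, integrable, and `E[M_t | F_s] = M_s` a.s.
for all `0 ≤ s ≤ t`. -/
def IsMartingale {m0 : MeasurableSpace Ω} (μ : Measure Ω)
    (F : ℝ → MeasurableSpace Ω) (M : ℝ → Ω → ℝ) : Prop :=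
  (∀ t : ℝ, 0 ≤ t → Integrable (M t) μ) ∧
  (∀ t : ℝ, 0 ≤ t → Measurable[F t] (M t)) ∧
  ∀ s t : ℝ, 0 ≤ s → s ≤ t → μ[M t|F s] =ᵐ[μ] M s

/-- `F` is immersed in `G`: `F ⊆ G` and every `F`-martingale (with right-continuous
sample paths) is a `G`-martingale. -/
def Immersed {m0 : MeasurableSpace Ω} (μ : Measure Ω)
    (F G : ℝ → MeasurableSpace Ω) : Prop :=
  (∀ t : ℝ, 0 ≤ t → F t ≤ G t) ∧
  ∀ M : ℝ → Ω → ℝ, RCPaths M → IsMartingale μ F M → IsMartingale μ G M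

/-- The usual conditions: the filtration is right-continuous and `F 0` contains
all `μ`-null sets. -/
def UsualConditions {m0 : MeasurableSpace Ω} (μ : Measure Ω)
    (F : ℝ → MeasurableSpace Ω) : Prop :=
  IsFiltration m0 F ∧ (∀ t : ℝ, 0 ≤ t → F t = rcReg F t) ∧
    ∀ s : Set Ω, μ s = 0 → MeasurableSet[F 0] s

/-- `E` is `Exp(1)`-distributed: `P(E > x) = e^{-x}` for all `x ≥ 0`. -/
def IsExpOne {m0 : MeasurableSpace Ω} (μ : Measure Ω) (E : Ω → ℝ) : Prop :=
  Measurable E ∧ ∀ x : ℝ, 0 ≤ x → μ {ω | x < E ω} = ENNReal.ofReal (Real.exp (-x))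

/-- `F_∞ = ⋁_{t ≥ 0} F t`. -/
def Finfty (F : ℝ → MeasurableSpace Ω) : MeasurableSpace Ω :=
  ⨆ t ∈ Set.Ici (0:ℝ), F t

/-- The natural filtration `(σ(Y_s : 0 ≤ s ≤ t))_{t ≥ 0}` of a process `Y`. -/
def natFilt {β : Type*} [MeasurableSpace β] (Y : ℝ → Ω → β) : ℝ → MeasurableSpace Ω :=
  fun t => ⨆ s ∈ Set.Icc (0:ℝ) t, MeasurableSpace.comap (Y s) inferInstance

/-- Progressive measurability of a process `u` with respect to the filtration `F`:
for every `t ≥ 0`, `(s, ω) ↦ u s ω` on `[0, t] × Ω` is `B([0,t]) ⊗ F t`-measurable. -/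
def ProgMeas (F : ℝ → MeasurableSpace Ω) (u : ℝ → Ω → ℝ) : Prop :=
  ∀ t : ℝ, 0 ≤ t →
    Measurable[MeasurableSpace.prod inferInstance (F t)]
      (fun p : Set.Icc (0:ℝ) t × Ω => u p.1 p.2)

/-- `X_t = #{k ≥ 1 : τ_k ≤ t}`. -/
def countX (τ : ℕ → Ω → ℝ) (t : ℝ) (ω : Ω) : ℕ :=
  Nat.card {k : ℕ // τ (k + 1) ω ≤ t}

/-- `X_{t-} = #{k ≥ 1 : τ_k < t}`. -/
def countXminus (τ : ℕ → Ω → ℝ) (t : ℝ) (ω : Ω) : ℕ :=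
  Nat.card {k : ℕ // τ (k + 1) ω < t}

/-- The filtration `G^k = F ∇ (A^1 ∇ ⋯ ∇ A^k)`, where `A^i` is the natural filtration of the
indicator process of the `i`-th jump time. -/
def jumpFilt (F : ℝ → MeasurableSpace Ω) (τ : ℕ → Ω → ℝ)
    (k : ℕ) : ℝ → MeasurableSpace Ω :=
  rcReg (fun t => F t ⊔
    ⨆ i ∈ Finset.range k, natFilt (fun s ω => if τ (i + 1) ω ≤ s then (1:ℝ) else 0) t)

/-- The filtration `G = F ∇ (∇_{i=1}^∞ A^i)`. -/
def jumpFiltInf (F : ℝ → MeasurableSpace Ω) (τ : ℕ → Ω → ℝ) :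
    ℝ → MeasurableSpace Ω :=
  rcReg (fun t => F t ⊔
    ⨆ i : ℕ, natFilt (fun s ω => if τ (i + 1) ω ≤ s then (1:ℝ) else 0) t)

/-- The hypotheses of the uniqueness theorem for a counting process with jump times `τ`:
the immersion chain (i), the regularity (ii) of the Azéma supermartingales, and the
martingale property of the compensated counting process. -/
def InversionSetting {m0 : MeasurableSpace Ω} (μ : Measure Ω)
    (F : ℝ → MeasurableSpace Ω) (η : ℝ → Ω → ℝ) (lam : ℝ → ℕ → ℝ)
    (τ : ℕ → Ω → ℝ) : Prop :=
  (∀ ω, τ 0 ω = 0) ∧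
  (∀ᵐ ω ∂μ, (0 < τ 1 ω) ∧ StrictMono (fun k => τ k ω) ∧
    Tendsto (fun k => τ k ω) atTop atTop) ∧
  (∀ k : ℕ, Immersed μ (jumpFilt F τ k) (jumpFilt F τ (k + 1))) ∧
  (∀ k : ℕ, Immersed μ (jumpFilt F τ k) (jumpFiltInf F τ)) ∧
  (∀ k : ℕ, ∃ Z : ℝ → Ω → ℝ,
    (∀ ω, Continuous fun t => Z t ω) ∧ (∀ t ω, 0 < Z t ω) ∧
    ∀ t : ℝ, 0 ≤ t →
      Z t =ᵐ[μ] μ[(fun ω => if t < τ (k + 1) ω then (1:ℝ) else 0) | jumpFilt F τ k t]) ∧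
  IsMartingale μ (jumpFiltInf F τ) (fun t ω =>
    (countX τ t ω : ℝ) -
      ∫ s in Set.Ioc 0 t,
        η s ω /
          (μ[η s | MeasurableSpace.comap (countXminus τ s) inferInstance]) ω *
          lam s (countXminus τ s ω))

/-- The nonnegative dyadic numbers. -/
def dyad : Set ℝ := {q | ∃ (j n : ℕ), q = (j:ℝ) / 2 ^ n}

/-- sampling of a process along the dyadic grid of level `n`. -/
def samp (M : ℝ → Ω → ℝ) (n : ℕ) : ℕ → Ω → ℝ := fun j => M ((j:ℝ) / 2 ^ n)

lemma dyad_level {q : ℝ} (hq : q ∈ dyad) :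
    ∃ n0 : ℕ, ∀ n ≥ n0, ∃ j : ℕ, q = (j:ℝ) / 2 ^ n := by
  obtain ⟨j, m, rfl⟩ := hq
  refine ⟨m, fun n hn => ⟨j * 2 ^ (n - m), ?_⟩⟩
  obtain ⟨d, rfl⟩ := Nat.exists_eq_add_of_le hn
  simp only [Nat.add_sub_cancel_left, pow_add]
  push_cast
  field_simp

lemma chain_upcrossings (M : ℝ → Ω → ℝ) (ω : Ω) (a b t : ℝ) (ht : 0 ≤ t) (hab : a < b)
    (h1 : ∃ᶠ q in 𝓝[dyad ∩ Ioi t] t, M q ω < a)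
    (h2 : ∃ᶠ q in 𝓝[dyad ∩ Ioi t] t, b < M q ω) (m : ℕ) :
    ∀ r > t, ∃ n0 : ℕ, ∀ n ≥ n0, ∃ N : ℕ, (N:ℝ) / 2 ^ n ≤ r ∧
      m ≤ upcrossingsBefore a b (samp M n) N ω := by
  induction m with
  | zero =>
    intro r hr
    exact ⟨0, fun n _ => ⟨0, by simp; linarith, Nat.zero_le _⟩⟩
  | succ m ih =>
    intro r hr
    have ev : ∀ r' > t, ∀ᶠ q in 𝓝[dyad ∩ Ioi t] t, q ∈ dyad ∧ t < q ∧ q < r' := by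
      intro r' hr'
      have h3 : ∀ᶠ q in 𝓝[dyad ∩ Ioi t] t, q < r' :=
        mem_nhdsWithin_of_mem_nhds (Iio_mem_nhds hr')
      filter_upwards [h3, self_mem_nhdsWithin] with q hq hq2
      exact ⟨hq2.1, hq2.2, hq⟩
    obtain ⟨q2, hq2, hq2d, hq2t, hq2r⟩ := (h2.and_eventually (ev r hr)).exists
    obtain ⟨q1, hq1, hq1d, hq1t, hq1r⟩ := (h1.and_eventually (ev q2 hq2t)).exists
    obtain ⟨n0, hn0⟩ := ih q1 hq1t
    obtain ⟨n1, hn1⟩ := dyad_level hq1d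
    obtain ⟨n2, hn2⟩ := dyad_level hq2d
    obtain ⟨n3, hn3⟩ := exists_nat_gt (1 / (r - q2))
    refine ⟨max (max n0 n1) (max n2 n3), fun n hn => ?_⟩
    obtain ⟨N, hN, hNm⟩ := hn0 n (by omega)
    obtain ⟨j1, hj1⟩ := hn1 n (by omega)
    obtain ⟨j2, hj2⟩ := hn2 n (by omega)
    have h2n : (0:ℝ) < 2 ^ n := by positivity
    have hNj : N ≤ j1 := by
      have : (N:ℝ) ≤ j1 := by
        rw [hj1] at hN
        exact (div_le_div_iff_of_pos_right h2n).1 hN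
      exact_mod_cast this
    have hjj : j1 ≤ j2 := by
      have : (j1:ℝ) ≤ j2 := by
        rw [hj1, hj2] at hq1r
        exact ((div_lt_div_iff_of_pos_right h2n).1 hq1r).le
      exact_mod_cast this
    refine ⟨j2 + 1, ?_, ?_⟩
    · push_cast
      rw [add_div, ← hj2]
      have h5 : (n3:ℝ) ≤ 2 ^ n := by
        have h6 : n3 ≤ 2 ^ n := by
          have := (Nat.lt_two_pow_self (n := n)).le
          omega
        exact_mod_cast h6
      have h7 : 1 / (2:ℝ) ^ n ≤ r - q2 := by
        rw [div_le_iff₀ h2n]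
        rw [div_lt_iff₀ (by linarith)] at hn3
        nlinarith
      linarith
    · have := upcrossingsBefore_lt_of_exists_upcrossing (f := samp M n) (ω := ω) hab hNj
        (by simpa [samp, ← hj1] using hq1) hjj (by simpa [samp, ← hj2] using hq2)
      omega

lemma exists_rlim (M : ℝ → Ω → ℝ) (ω : Ω) (K : ℝ) (hK : ∀ q ∈ dyad, |M q ω| ≤ K)
    (hup : ∀ a b : ℚ, a < b →
      liminf (fun n => upcrossings (a:ℝ) (b:ℝ) (samp M n) ω) atTop < ∞)
    (t : ℝ) (ht : 0 ≤ t) :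
    ∃ c, Tendsto (fun q => M q ω) (𝓝[dyad ∩ Ioi t] t) (𝓝 c) := by
  refine tendsto_of_no_upcrossings (s := Set.range ((↑) : ℚ → ℝ)) Rat.denseRange_cast ?_ ?_ ?_
  · rintro _ ⟨a, rfl⟩ _ ⟨b, rfl⟩ hab ⟨h1, h2⟩
    have hab' : a < b := by exact_mod_cast hab
    have hlt := hup a b hab'
    obtain ⟨m, hm⟩ := ENNReal.exists_nat_gt hlt.ne
    have hf := frequently_lt_of_liminf_lt (by isBoundedDefault) hm
    obtain ⟨n0, hn0⟩ := chain_upcrossings M ω a b t ht hab h1 h2 m (t + 1) (by linarith)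
    obtain ⟨n, hn, hn'⟩ := (hf.and_eventually (eventually_ge_atTop n0)).exists
    obtain ⟨N, -, hN⟩ := hn0 n hn'
    have : (m : ℝ≥0∞) ≤ upcrossings (a:ℝ) (b:ℝ) (samp M n) ω :=
      le_trans (by exact_mod_cast hN) (le_iSup (fun N =>
        (upcrossingsBefore (a:ℝ) (b:ℝ) (samp M n) N ω : ℝ≥0∞)) N)
    exact absurd hn (not_lt.2 this)
  · refine ⟨K, ?_⟩
    rw [eventually_map]
    filter_upwards [self_mem_nhdsWithin] with q hq
    exact (abs_le.1 (hK q hq.1)).2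
  · refine ⟨-K, ?_⟩
    rw [eventually_map]
    filter_upwards [self_mem_nhdsWithin] with q hq
    exact (abs_le.1 (hK q hq.1)).1

/-- dyadic approximation from the right. -/
def dyr (t : ℝ) (n : ℕ) : ℝ := ((⌊t * 2 ^ n⌋₊ + 1 : ℕ) : ℝ) / 2 ^ n

lemma dyr_mem (t : ℝ) (n : ℕ) : dyr t n ∈ dyad := ⟨_, _, rfl⟩

lemma dyr_gt (t : ℝ) (n : ℕ) : t < dyr t n := by
  rw [dyr, lt_div_iff₀ (by positivity)]
  push_cast
  exact Nat.lt_floor_add_one _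

lemma dyr_tendsto {t : ℝ} (ht : 0 ≤ t) :
    Tendsto (dyr t) atTop (𝓝[dyad ∩ Ioi t] t) := by
  refine tendsto_nhdsWithin_iff.2 ⟨?_, Eventually.of_forall fun n => ⟨dyr_mem t n, dyr_gt t n⟩⟩
  have h1 : Tendsto (fun n : ℕ => t + (1/2:ℝ) ^ n) atTop (𝓝 (t + 0)) :=
    tendsto_const_nhds.add (tendsto_pow_atTop_nhds_zero_of_lt_one (by norm_num) (by norm_num))
  rw [add_zero] at h1
  refine tendsto_of_tendsto_of_tendsto_of_le_of_le tendsto_const_nhds h1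
    (fun n => (dyr_gt t n).le) (fun n => ?_)
  have h2n : (0:ℝ) < 2 ^ n := by positivity
  simp only [dyr]
  rw [div_le_iff₀ h2n]
  push_cast
  have := Nat.floor_le (a := t * 2 ^ n) (by positivity)
  rw [add_mul, ← mul_pow]
  norm_num
  linarith

lemma neBot_dyad {t : ℝ} (ht : 0 ≤ t) : (𝓝[dyad ∩ Ioi t] t).NeBot :=
  (dyr_tendsto ht).neBot

lemma rlim_rc (g c : ℝ → ℝ)
    (h : ∀ t, 0 ≤ t → Tendsto g (𝓝[dyad ∩ Ioi t] t) (𝓝 (c t))) (t : ℝ) (ht : 0 ≤ t) :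
    ContinuousWithinAt c (Ici t) t := by
  rw [Metric.continuousWithinAt_iff]
  intro ε hε
  have h1 := (Metric.tendsto_nhds.1 (h t ht)) (ε / 2) (by linarith)
  rw [eventually_iff, Metric.mem_nhdsWithin_iff] at h1
  obtain ⟨δ, hδ, hsub⟩ := h1
  refine ⟨δ, hδ, fun s hs hst => ?_⟩
  have hs' : t ≤ s := hs
  rw [Real.dist_eq, abs_lt] at hst
  have := neBot_dyad (ht.trans hs')
  have h2 : ∀ᶠ q in 𝓝[dyad ∩ Ioi s] s, dist (g q) (c t) ≤ ε / 2 := by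
    have h3 : ∀ᶠ q in 𝓝[dyad ∩ Ioi s] s, q < t + δ :=
      mem_nhdsWithin_of_mem_nhds (Iio_mem_nhds (by linarith))
    filter_upwards [h3, self_mem_nhdsWithin] with q hq hq2
    have hq3 : s < q := hq2.2
    refine le_of_lt (hsub ⟨?_, hq2.1, lt_of_le_of_lt hs' hq2.2⟩)
    rw [Metric.mem_ball, Real.dist_eq, abs_lt]
    constructor <;> linarith
  have h4 := le_of_tendsto ((h s (ht.trans hs')).dist tendsto_const_nhds) h2
  linarith

/-- A good (right-continuous, complete) filtration. -/
structure GoodFilt {m0 : MeasurableSpace Ω} (μ : Measure Ω) (F : ℝ → MeasurableSpace Ω) : Prop where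
  mono : ∀ s t : ℝ, 0 ≤ s → s ≤ t → F s ≤ F t
  le : ∀ t : ℝ, 0 ≤ t → F t ≤ m0
  rc : ∀ t : ℝ, 0 ≤ t → F t = rcReg F t
  null : ∀ s : Set Ω, μ s = 0 → MeasurableSet[F 0] s

lemma measurable_rcReg {F : ℝ → MeasurableSpace Ω} {t : ℝ} {f : Ω → ℝ}
    (h : ∀ s > t, Measurable[F s] f) : Measurable[rcReg F t] f := by
  intro S hS
  unfold rcReg
  refine MeasurableSpace.measurableSet_iInf.2 fun s => MeasurableSpace.measurableSet_iInf.2 fun hs => ?_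
  exact h s hs hS

lemma exists_rc_mod {m0 : MeasurableSpace Ω} {μ : Measure Ω} [IsProbabilityMeasure μ]
    {F : ℝ → MeasurableSpace Ω} (hF : GoodFilt μ F) (ξ : Ω → ℝ) (hξ : Integrable ξ μ)
    (K : ℝ) (hK : ∀ ω, |ξ ω| ≤ K) :
    ∃ M : ℝ → Ω → ℝ, RCPaths M ∧ IsMartingale μ F M ∧ ∀ t, 0 ≤ t → M t =ᵐ[μ] μ[ξ | F t] := by
  classical
  set Mq : ℝ → Ω → ℝ := fun t => μ[ξ | F t] with hMq
  have hK0 : 0 ≤ K := by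
    have : Nonempty Ω := by
      by_contra h
      rw [not_nonempty_iff] at h
      have := measure_univ (μ := μ)
      simp [Measure.eq_zero_of_isEmpty μ] at this
    obtain ⟨ω⟩ := this
    exact (abs_nonneg _).trans (hK ω)
  have hbd : ∀ t, ∀ᵐ ω ∂μ, |Mq t ω| ≤ K := by
    intro t
    exact ae_bdd_abs_condExp_of_ae_bdd_abs (Eventually.of_forall hK)
  have hdc : dyad.Countable := by
    have : dyad = Set.range (fun p : ℕ × ℕ => (p.1:ℝ) / 2 ^ p.2) := by
      ext q
      simp only [dyad, Set.mem_ofPred_eq, Set.mem_range, Prod.exists]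
      constructor <;> rintro ⟨a, b, h⟩ <;> exact ⟨a, b, h.symm⟩
    rw [this]; exact Set.countable_range _
  have hb2 : ∀ᵐ ω ∂μ, ∀ q ∈ dyad, |Mq q ω| ≤ K :=
    (ae_ball_iff hdc).2 fun q _ => hbd q
  have hu : ∀ᵐ ω ∂μ, ∀ a b : ℚ, a < b →
      liminf (fun n => upcrossings (a:ℝ) (b:ℝ) (samp Mq n) ω) atTop < ∞ := by
    rw [ae_all_iff]; intro a
    rw [ae_all_iff]; intro b
    by_cases hab : a < b
    swap
    · exact Eventually.of_forall fun ω h => absurd h hab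
    have habR : (a:ℝ) < b := by exact_mod_cast hab
    let ℱ : ℕ → Filtration ℕ m0 := fun n =>
      { seq := fun j => F ((j:ℝ) / 2 ^ n)
        mono' := fun i j hij => hF.mono _ _ (by positivity)
          ((div_le_div_iff_of_pos_right (by positivity)).2 (by exact_mod_cast hij))
        le' := fun j => hF.le _ (by positivity) }
    have hmart : ∀ n, Martingale (samp Mq n) (ℱ n) μ := fun n => martingale_condExp ξ (ℱ n) μ
    have hmeas : ∀ n, Measurable (upcrossings (a:ℝ) (b:ℝ) (samp Mq n)) := fun n =>
      (hmart n).1.measurable_upcrossings habR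
    have hbound : ∀ n, ∫⁻ ω, upcrossings (a:ℝ) (b:ℝ) (samp Mq n) ω ∂μ ≤
        ENNReal.ofReal (K + |(a:ℝ)|) / ENNReal.ofReal (b - a) := by
      intro n
      have h1 := (hmart n).submartingale.mul_lintegral_upcrossings_le_lintegral_pos_part (a:ℝ) b
      rw [ENNReal.le_div_iff_mul_le (Or.inl (by simpa using habR)) (Or.inl ENNReal.ofReal_ne_top),
        mul_comm]
      refine h1.trans (iSup_le fun N => ?_)
      calc ∫⁻ ω, ENNReal.ofReal ((samp Mq n N ω - a)⁺) ∂μ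
          ≤ ∫⁻ ω, ENNReal.ofReal (K + |(a:ℝ)|) ∂μ := by
            refine lintegral_mono_ae ?_
            filter_upwards [hbd ((N:ℝ) / 2 ^ n)] with ω hω
            refine ENNReal.ofReal_le_ofReal (sup_le ?_ ?_)
            · have := (abs_le.1 hω).2
              have h3 := neg_abs_le (a:ℝ)
              simp only [samp]; linarith
            · positivity
        _ = _ := by simp
    have hfat := lintegral_liminf_le (μ := μ) (u := atTop) hmeas
    have h4 : ∫⁻ ω, liminf (fun n => upcrossings (a:ℝ) (b:ℝ) (samp Mq n) ω) atTop ∂μ ≠ ∞ := by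
      refine ne_of_lt (lt_of_le_of_lt hfat (lt_of_le_of_lt
        (b := ENNReal.ofReal (K + |(a:ℝ)|) / ENNReal.ofReal (b - a)) ?_ ?_))
      · refine liminf_le_of_frequently_le' (Frequently.of_forall hbound)
      · refine ENNReal.div_lt_top ENNReal.ofReal_ne_top ?_
        simpa using habR
    filter_upwards [ae_lt_top (Measurable.liminf hmeas) h4] with ω hω _
    exact hω
  have hgood := hb2.and hu
  obtain ⟨S, hSdef⟩ : ∃ S : Set Ω, S = {ω | (∀ q ∈ dyad, |Mq q ω| ≤ K) ∧ ∀ a b : ℚ, a < b →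
      liminf (fun n => upcrossings (a:ℝ) (b:ℝ) (samp Mq n) ω) atTop < ∞} := ⟨_, rfl⟩
  have hSae : ∀ᵐ ω ∂μ, ω ∈ S := by rw [hSdef]; exact hgood
  have hS0 : MeasurableSet[F 0] S := by
    have := hF.null Sᶜ hSae
    exact (@MeasurableSet.compl_iff _ _ (F 0)).1 this
  have hSlim : ∀ ω ∈ S, ∀ t, 0 ≤ t → ∃ c, Tendsto (fun q => Mq q ω) (𝓝[dyad ∩ Ioi t] t) (𝓝 c) := by
    intro ω hω t ht
    rw [hSdef] at hω
    exact exists_rlim Mq ω K hω.1 hω.2 t ht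
  set M : ℝ → Ω → ℝ := fun t ω =>
    if ω ∈ S then limUnder (𝓝[dyad ∩ Ioi t] t) (fun q => Mq q ω) else 0 with hM
  have hMlim : ∀ ω ∈ S, ∀ t, 0 ≤ t → Tendsto (fun q => Mq q ω) (𝓝[dyad ∩ Ioi t] t) (𝓝 (M t ω)) := by
    intro ω hω t ht
    have := neBot_dyad ht
    simp only [hM, hω, if_true]
    exact tendsto_nhds_limUnder (hSlim ω hω t ht)
  have hMseq : ∀ ω ∈ S, ∀ t, 0 ≤ t → Tendsto (fun n => Mq (dyr t n) ω) atTop (𝓝 (M t ω)) :=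
    fun ω hω t ht => (hMlim ω hω t ht).comp (dyr_tendsto ht)
  have hMm : ∀ t, 0 ≤ t → Measurable[F t] (M t) := by
    intro t ht
    rw [hF.rc t ht]
    refine measurable_rcReg fun s hs => ?_
    have hs' : t < s := hs
    have hev : ∀ᶠ n in atTop, dyr t n < s := by
      have := (dyr_tendsto ht).mono_right nhdsWithin_le_nhds
      exact this (Iio_mem_nhds hs')
    obtain ⟨n0, hn0⟩ := eventually_atTop.1 hev
    refine @measurable_of_tendsto_metrizable Ω ℝ (F s) _ _ _ _
      (fun n => S.indicator (Mq (dyr t (n + n0)))) (M t) (fun n => ?_) ?_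
    · have hS1 : MeasurableSet[F s] S := hF.mono 0 s le_rfl (by linarith) _ hS0
      refine Measurable.indicator (m := F s) ?_ hS1
      have hsm : StronglyMeasurable[F (dyr t (n + n0))] (Mq (dyr t (n + n0))) :=
        stronglyMeasurable_condExp
      exact hsm.measurable.mono (hF.mono _ _ (ht.trans (dyr_gt t _).le)
        (hn0 _ (Nat.le_add_left _ _)).le) le_rfl
    · rw [tendsto_pi_nhds]
      intro ω
      by_cases hω : ω ∈ S
      · simp only [Set.indicator_of_mem hω]
        exact (tendsto_add_atTop_iff_nat n0).2 (hMseq ω hω t ht)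
      · simp [hM, hω]
  have hMb : ∀ t, 0 ≤ t → ∀ ω, |M t ω| ≤ K := by
    intro t ht ω
    by_cases hω : ω ∈ S
    · refine le_of_tendsto (hMseq ω hω t ht).abs (Eventually.of_forall fun n => ?_)
      rw [hSdef] at hω
      exact hω.1 _ (dyr_mem t n)
    · simp [hM, hω, hK0]
  have hMi : ∀ t, 0 ≤ t → Integrable (M t) μ := fun t ht =>
    Integrable.of_bound ((hMm t ht).mono (hF.le t ht) le_rfl).aestronglyMeasurable K
      (Eventually.of_forall fun ω => hMb t ht ω)
  have hMe : ∀ t, 0 ≤ t → M t =ᵐ[μ] μ[ξ | F t] := by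
    intro t ht
    refine ae_eq_condExp_of_forall_setIntegral_eq (hF.le t ht) hξ
      (fun s _ _ => (hMi t ht).integrableOn) ?_ (hMm t ht).stronglyMeasurable.aestronglyMeasurable
    intro B hB _
    have h1 : ∀ n, ∫ ω in B, Mq (dyr t n) ω ∂μ = ∫ ω in B, ξ ω ∂μ := by
      intro n
      have h0 : 0 ≤ dyr t n := ht.trans (dyr_gt t n).le
      exact setIntegral_condExp (hF.le _ h0) hξ (hF.mono _ _ ht (dyr_gt t n).le _ hB)
    have h2 : Tendsto (fun n => ∫ ω in B, Mq (dyr t n) ω ∂μ) atTop (𝓝 (∫ ω in B, M t ω ∂μ)) := by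
      refine tendsto_integral_of_dominated_convergence (fun _ => K)
        (fun n => integrable_condExp.aestronglyMeasurable.restrict) (integrable_const K)
        (fun n => ae_restrict_of_ae (hbd _)) ?_
      refine ae_restrict_of_ae ?_
      filter_upwards [hSae] with ω hω
      exact hMseq ω hω t ht
    simp only [h1] at h2
    exact (tendsto_nhds_unique h2 tendsto_const_nhds)
  refine ⟨M, ?_, ⟨hMi, hMm, ?_⟩, hMe⟩
  · intro ω t ht
    by_cases hω : ω ∈ S
    · exact rlim_rc (fun q => Mq q ω) (fun s => M s ω) (fun s hs => hMlim ω hω s hs) t ht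
    · simp only [hM, hω, if_false]
      exact continuousWithinAt_const
  · intro s t hs hst
    have ht := hs.trans hst
    calc μ[M t | F s] =ᵐ[μ] μ[μ[ξ | F t] | F s] := condExp_congr_ae (hMe t ht)
      _ =ᵐ[μ] μ[ξ | F s] := condExp_condExp_of_le (hF.mono s t hs hst) (hF.le t ht)
      _ =ᵐ[μ] M s := (hMe s hs).symm

lemma abs_bd_nonneg {m0 : MeasurableSpace Ω} {μ : Measure Ω} [IsProbabilityMeasure μ] {f : Ω → ℝ}
    {K : ℝ} (h : ∀ᵐ ω ∂μ, |f ω| ≤ K) : 0 ≤ K := by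
  obtain ⟨ω, hω⟩ := h.exists
  exact (abs_nonneg _).trans hω

/-- `f` is a.e. `m`-measurable and a.e. bounded by `K`. -/
def BM {m0 : MeasurableSpace Ω} (μ : Measure Ω) (m : MeasurableSpace Ω) (K : ℝ) (f : Ω → ℝ) : Prop :=
  AEStronglyMeasurable[m] f μ ∧ ∀ᵐ ω ∂μ, |f ω| ≤ K

section BMsec

variable {m0 : MeasurableSpace Ω} {μ : Measure Ω} [IsProbabilityMeasure μ]

lemma BM.mono {m m' : MeasurableSpace Ω} {K : ℝ} {f : Ω → ℝ} (h : BM μ m K f) (hm : m ≤ m') :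
    BM μ m' K f := ⟨h.1.mono hm, h.2⟩

lemma BM.aesm {m : MeasurableSpace Ω} {K : ℝ} {f : Ω → ℝ} (h : BM μ m K f) (hm : m ≤ m0) :
    AEStronglyMeasurable[m0] f μ := h.1.mono hm

lemma BM.int {m : MeasurableSpace Ω} {K : ℝ} {f : Ω → ℝ} (h : BM μ m K f) (hm : m ≤ m0) :
    Integrable f μ := Integrable.of_bound (h.aesm hm) K h.2

lemma BM.congr {m : MeasurableSpace Ω} {K : ℝ} {f g : Ω → ℝ} (h : BM μ m K f) (hfg : f =ᵐ[μ] g) :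
    BM μ m K g := by
  refine ⟨h.1.congr hfg, ?_⟩
  filter_upwards [h.2, hfg] with ω h1 h2
  rwa [← h2]

lemma BM.mul {m : MeasurableSpace Ω} {K K' : ℝ} {f g : Ω → ℝ} (h : BM μ m K f)
    (h' : BM μ m K' g) : BM μ m (K * K') (fun ω => f ω * g ω) := by
  refine ⟨h.1.mul h'.1, ?_⟩
  filter_upwards [h.2, h'.2] with ω h1 h2
  rw [abs_mul]
  exact mul_le_mul h1 h2 (abs_nonneg _) ((abs_nonneg _).trans h1)

lemma BM.sub {m : MeasurableSpace Ω} {K K' : ℝ} {f g : Ω → ℝ} (h : BM μ m K f)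
    (h' : BM μ m K' g) : BM μ m (K + K') (fun ω => f ω - g ω) := by
  refine ⟨h.1.sub h'.1, ?_⟩
  filter_upwards [h.2, h'.2] with ω h1 h2
  exact (abs_sub _ _).trans (add_le_add h1 h2)

lemma BM.condExp {m m' : MeasurableSpace Ω} {K : ℝ} {f : Ω → ℝ} (h : BM μ m' K f) :
    BM μ m K (μ[f | m]) :=
  ⟨stronglyMeasurable_condExp.aestronglyMeasurable, ae_bdd_abs_condExp_of_ae_bdd_abs h.2⟩

lemma BM.mul_int {m : MeasurableSpace Ω} {K : ℝ} {f g : Ω → ℝ} (hf : Integrable f μ)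
    (h' : BM μ m K g) (hm : m ≤ m0) : Integrable (fun ω => f ω * g ω) μ :=
  hf.mul_bdd (c := K) (h'.aesm hm) h'.2

lemma int_cond {m : MeasurableSpace Ω} (hm : m ≤ m0) {K : ℝ} {f g : Ω → ℝ} (hf : Integrable f μ)
    (h' : BM μ m K g) : ∫ ω, f ω * g ω ∂μ = ∫ ω, (μ[f | m]) ω * g ω ∂μ := by
  have h1 := condExp_mul_of_aestronglyMeasurable_right h'.1 (BM.mul_int hf h' hm) hf
  have h2 := integral_congr_ae h1
  rw [integral_condExp hm] at h2
  exact h2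

end BMsec

lemma abs_sub_le_of {x y a b : ℝ} (h1 : |x| ≤ a) (h2 : |y| ≤ b) : |x - y| ≤ a + b :=
  (abs_sub _ _).trans (add_le_add h1 h2)

lemma imm_condExp {m0 : MeasurableSpace Ω} {μ : Measure Ω} [IsProbabilityMeasure μ]
    {H G : ℝ → MeasurableSpace Ω} (hH : GoodFilt μ H) (hI : Immersed μ H G)
    {ξ : Ω → ℝ} {K T t : ℝ} (hξ : BM μ (H T) K ξ) (ht : 0 ≤ t) (htT : t ≤ T) :
    μ[ξ | G t] =ᵐ[μ] μ[ξ | H t] := by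
  have hT := ht.trans htT
  have hK := abs_bd_nonneg hξ.2
  -- a version which is bounded everywhere
  obtain ⟨ζ, hζm, hζe⟩ := hξ.1
  set ζ' : Ω → ℝ := fun ω => max (-K) (min K (ζ ω)) with hζ'
  have he : ξ =ᵐ[μ] ζ' := by
    filter_upwards [hζe, hξ.2] with ω h1 h2
    rw [h1, abs_le] at h2
    rw [h1, hζ']
    simp [h2.1, h2.2]
  have hm' : StronglyMeasurable[H T] ζ' := by
    have : Measurable[H T] ζ' :=
      Measurable.max (measurable_const) (Measurable.min measurable_const hζm.measurable)
    exact this.stronglyMeasurable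
  have hb' : ∀ ω, |ζ' ω| ≤ K := by
    intro ω
    rw [abs_le]
    exact ⟨le_max_left _ _, max_le (by linarith) (min_le_left _ _)⟩
  have hinteg : Integrable ζ' μ := (hξ.int (hH.le T hT)).congr he
  obtain ⟨M, hrc, hM, hMe⟩ := exists_rc_mod hH ζ' hinteg K hb'
  have hG := hI.2 M hrc hM
  have h1 : M T =ᵐ[μ] ξ := by
    have : μ[ζ' | H T] = ζ' := condExp_of_stronglyMeasurable (hH.le T hT) hm' hinteg
    refine (hMe T hT).trans ?_
    rw [this]; exact he.symm
  calc μ[ξ | G t] =ᵐ[μ] μ[M T | G t] := condExp_congr_ae h1.symm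
    _ =ᵐ[μ] M t := hG.2.2 t T ht htT
    _ =ᵐ[μ] μ[ζ' | H t] := hMe t ht
    _ =ᵐ[μ] μ[ξ | H t] := condExp_congr_ae he.symm

lemma imm_dual {m0 : MeasurableSpace Ω} {μ : Measure Ω} [IsProbabilityMeasure μ]
    {H G : ℝ → MeasurableSpace Ω} (hH : GoodFilt μ H) (hGle : ∀ t, 0 ≤ t → G t ≤ m0)
    (hI : Immersed μ H G)
    {ζ Y : Ω → ℝ} {K K' T t : ℝ} (hζ : BM μ (H T) K ζ) (ht : 0 ≤ t) (htT : t ≤ T)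
    (hY : BM μ (G t) K' Y) :
    ∫ ω, ζ ω * Y ω ∂μ = ∫ ω, ζ ω * (μ[Y | H t]) ω ∂μ := by
  have hT := ht.trans htT
  rw [int_cond (hGle t ht) (hζ.int (hH.le T hT)) hY,
    int_cond (hH.le t ht) (hζ.int (hH.le T hT)) (hY.condExp (m := H t))]
  have h1 : ∫ ω, (μ[ζ | G t]) ω * Y ω ∂μ = ∫ ω, Y ω * (μ[ζ | H t]) ω ∂μ := by
    refine integral_congr_ae ?_
    filter_upwards [imm_condExp hH hI hζ ht htT] with ω h
    rw [h, mul_comm]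
  rw [h1, int_cond (hH.le t ht) (hY.int (hGle t ht)) (hζ.condExp (m := H t))]
  simp only [mul_comm]

/-- indicator of `s < σ ≤ t` -/
def Jn (σ : Ω → ℝ) (s t : ℝ) (ω : Ω) : ℝ := if s < σ ω ∧ σ ω ≤ t then 1 else 0

/-- Data for the weak compensator formula. -/
structure CompData {m0 : MeasurableSpace Ω} (μ : Measure Ω) (H G : ℝ → MeasurableSpace Ω)
    (σ : Ω → ℝ) (Z : ℝ → Ω → ℝ) (κ : ℝ → Ω → ℝ) (C T : ℝ) : Prop where
  hH : GoodFilt μ H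
  Gle : ∀ t, 0 ≤ t → G t ≤ m0
  Gmono : ∀ s t : ℝ, 0 ≤ s → s ≤ t → G s ≤ G t
  imm : Immersed μ H G
  σm : ∀ s, 0 ≤ s → MeasurableSet[G s] {ω | σ ω ≤ s}
  Zc : ∀ ω, Continuous fun t => Z t ω
  Ze : ∀ t : ℝ, 0 ≤ t → Z t =ᵐ[μ] μ[(fun ω => if t < σ ω then (1:ℝ) else 0) | H t]
  κm : Measurable (Function.uncurry κ)
  κb : ∀ u ω, |κ u ω| ≤ C
  κG : ∀ u, 0 < u → u ≤ T → Measurable[G u] (κ u)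
  mg : ∀ s t, 0 ≤ s → s ≤ t → t ≤ T → ∀ B, MeasurableSet[G s] B →
    ∫ ω in B, Jn σ s t ω ∂μ = ∫ u in Ioc s t, ∫ ω in B, κ u ω ∂μ

section Comp

variable {m0 : MeasurableSpace Ω} {μ : Measure Ω} [IsProbabilityMeasure μ]
  {H G : ℝ → MeasurableSpace Ω} {σ : Ω → ℝ} {Z κ : ℝ → Ω → ℝ} {C T : ℝ}

lemma fub_int (hκm : Measurable (Function.uncurry κ)) (hκb : ∀ u ω, |κ u ω| ≤ C) (s t : ℝ)
    {ζ : Ω → ℝ} (hζ : Integrable ζ μ) :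
    Integrable (Function.uncurry fun ω u => ζ ω * κ u ω) (μ.prod (volume.restrict (Ioc s t))) := by
  have h1 : Integrable (fun p : Ω × ℝ => ζ p.1) (μ.prod (volume.restrict (Ioc s t))) :=
    hζ.comp_fst _
  refine h1.mul_bdd (c := C) ?_ (Eventually.of_forall fun p => hκb p.2 p.1)
  exact (hκm.comp measurable_swap).aestronglyMeasurable

lemma fub (hκm : Measurable (Function.uncurry κ)) (hκb : ∀ u ω, |κ u ω| ≤ C) (s t : ℝ)
    {ζ : Ω → ℝ} (hζ : Integrable ζ μ) :
    ∫ ω, ζ ω * (∫ u in Ioc s t, κ u ω) ∂μ = ∫ u in Ioc s t, ∫ ω, ζ ω * κ u ω ∂μ := by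
  rw [← integral_integral_swap (fub_int hκm hκb s t hζ)]
  simp only [integral_const_mul]

lemma int_time (hκm : Measurable (Function.uncurry κ)) (hκb : ∀ u ω, |κ u ω| ≤ C) (s t : ℝ)
    {ζ : Ω → ℝ} (hζ : Integrable ζ μ) :
    IntegrableOn (fun u => ∫ ω, ζ ω * κ u ω ∂μ) (Ioc s t) :=
  (fub_int hκm hκb s t hζ).integral_prod_right

lemma Jn_eq (s t : ℝ) (hst : s ≤ t) (ω : Ω) :
    Jn σ s t ω = (if s < σ ω then (1:ℝ) else 0) - (if t < σ ω then (1:ℝ) else 0) := by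
  unfold Jn
  by_cases h1 : s < σ ω <;> by_cases h2 : t < σ ω
  · simp [h1, h2]
  · simp [h1, h2, not_lt.1 h2]
  · exact absurd (lt_of_le_of_lt hst h2) h1
  · simp [h1, h2]

namespace CompData

lemma bmI (D : CompData μ H G σ Z κ C T) (t : ℝ) (ht : 0 ≤ t) : BM μ (G t) 1 (fun ω => if t < σ ω then (1:ℝ) else 0) := by
  refine ⟨Measurable.aestronglyMeasurable (Measurable.ite ?_ measurable_const measurable_const),
    Eventually.of_forall fun ω => by dsimp only; split_ifs <;> simp⟩
  have h := @MeasurableSet.compl _ _ (G t) (D.σm t ht)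
  convert h using 1
  ext ω; simp

lemma bmJ (D : CompData μ H G σ Z κ C T) (s t : ℝ) (hs : 0 ≤ s) (hst : s ≤ t) : BM μ (G t) 1 (Jn σ s t) := by
  refine ⟨?_, Eventually.of_forall fun ω => by unfold Jn; split_ifs <;> simp⟩
  have h1 := ((D.bmI s hs).mono (D.Gmono s t hs hst)).1
  have h2 := (D.bmI t (hs.trans hst)).1
  refine (h1.sub h2).congr (Eventually.of_forall fun ω => ?_)
  simp only [Pi.sub_apply]
  rw [Jn_eq s t hst]

/-- functional associated with the compensated jump process -/
lemma mg_fun (D : CompData μ H G σ Z κ C T) (s t : ℝ) (hs : 0 ≤ s) (hst : s ≤ t) (htT : t ≤ T) {ζ : Ω → ℝ} {K : ℝ}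
    (hζ : BM μ (G s) K ζ) :
    ∫ ω, ζ ω * Jn σ s t ω ∂μ - ∫ u in Ioc s t, ∫ ω, ζ ω * κ u ω ∂μ = 0 := by
  have ht := hs.trans hst
  have hζi := hζ.int (D.Gle s hs)
  rw [← fub D.κm D.κb s t hζi]
  set m : Ω → ℝ := fun ω => Jn σ s t ω - ∫ u in Ioc s t, κ u ω with hm
  have hJ := (D.bmJ s t hs hst).int (D.Gle t ht)
  have hk : Integrable (fun ω => ∫ u in Ioc s t, κ u ω) μ := by
    have := (fub_int (μ := μ) D.κm D.κb s t (integrable_const (1:ℝ))).integral_prod_left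
    simpa using this
  have hmi : Integrable m μ := hJ.sub hk
  have h0 : μ[m | G s] =ᵐ[μ] 0 := by
    refine (ae_eq_condExp_of_forall_setIntegral_eq (D.Gle s hs) hmi
      (fun B _ _ => integrableOn_zero) ?_ aestronglyMeasurable_zero).symm
    intro B hB _
    have hB0 := D.Gle s hs B hB
    simp only [hm, Pi.zero_apply, integral_zero]
    rw [integral_sub hJ.integrableOn hk.integrableOn, D.mg s t hs hst htT B hB]
    have := fub (μ := μ) D.κm D.κb s t (ζ := B.indicator 1)
      ((integrable_const (1:ℝ)).indicator hB0)
    rw [← integral_indicator hB0]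
    have e1 : ∀ g : Ω → ℝ, ∀ ω, B.indicator g ω = B.indicator 1 ω * g ω := by
      intro g ω
      by_cases h : ω ∈ B <;> simp [h]
    have e2 : ∀ u, ∫ ω in B, κ u ω ∂μ = ∫ ω, B.indicator 1 ω * κ u ω ∂μ := by
      intro u
      rw [← integral_indicator hB0]
      exact integral_congr_ae (Eventually.of_forall fun ω => e1 _ ω)
    simp only [e2]
    rw [← this]
    simp only [e1 (fun ω => ∫ u in Ioc s t, κ u ω)]
    simp
  have h1 := int_cond (D.Gle s hs) hmi hζ
  have h2 : ∫ ω, (μ[m | G s]) ω * ζ ω ∂μ = 0 := by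
    rw [integral_congr_ae (g := fun _ => (0:ℝ))]
    · simp
    · filter_upwards [h0] with ω h
      simp [h]
  rw [h2] at h1
  rw [← integral_sub (by simpa only [mul_comm] using BM.mul_int hJ hζ (D.Gle s hs))
    (by simpa only [mul_comm] using BM.mul_int hk hζ (D.Gle s hs)), ← h1]
  refine integral_congr_ae (Eventually.of_forall fun ω => ?_)
  simp only [hm]; ring

lemma bmZ (D : CompData μ H G σ Z κ C T) (t : ℝ) (ht : 0 ≤ t) : BM μ (H t) 1 (Z t) :=
  ((D.bmI t ht).condExp (m := H t)).congr (D.Ze t ht).symm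

lemma Z_dual (D : CompData μ H G σ Z κ C T) (t : ℝ) (ht : 0 ≤ t) {S : ℝ} (htS : t ≤ S) {ζ : Ω → ℝ} {K : ℝ}
    (hζ : BM μ (H S) K ζ) :
    ∫ ω, ζ ω * (if t < σ ω then (1:ℝ) else 0) ∂μ = ∫ ω, ζ ω * Z t ω ∂μ := by
  rw [imm_dual D.hH D.Gle D.imm hζ ht htS (D.bmI t ht)]
  refine integral_congr_ae ?_
  filter_upwards [D.Ze t ht] with ω h
  rw [h]

lemma Z_eq (D : CompData μ H G σ Z κ C T) (t : ℝ) (ht : 0 ≤ t) {S : ℝ} (htS : t ≤ S) :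
    Z t =ᵐ[μ] μ[(fun ω => if t < σ ω then (1:ℝ) else 0) | H S] := by
  have hS := ht.trans htS
  refine ae_eq_condExp_of_forall_setIntegral_eq (D.hH.le S hS) ((D.bmI t ht).int (D.Gle t ht))
    (fun B _ _ => ((D.bmZ t ht).int (D.hH.le t ht)).integrableOn) ?_
    ((D.bmZ t ht).mono (D.hH.mono t S ht htS)).1
  intro B hB _
  have hB0 := D.hH.le S hS B hB
  have hbm : BM μ (H S) 1 (B.indicator 1) := by
    refine ⟨?_, Eventually.of_forall fun ω => by by_cases h : ω ∈ B <;> simp [h]⟩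
    exact (Measurable.indicator (m := H S) measurable_const hB).aestronglyMeasurable
  have e1 : ∀ g : Ω → ℝ, ∫ ω in B, g ω ∂μ = ∫ ω, B.indicator 1 ω * g ω ∂μ := by
    intro g
    rw [← integral_indicator hB0]
    refine integral_congr_ae (Eventually.of_forall fun ω => ?_)
    by_cases h : ω ∈ B <;> simp [h]
  rw [e1, e1, D.Z_dual t ht htS hbm]

lemma Z_anti (D : CompData μ H G σ Z κ C T) (s t : ℝ) (hs : 0 ≤ s) (hst : s ≤ t) : ∀ᵐ ω ∂μ, Z t ω ≤ Z s ω := by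
  have ht := hs.trans hst
  have h := condExp_mono (m := H t) ((D.bmI t ht).int (D.Gle t ht)) ((D.bmI s hs).int (D.Gle s hs))
    (Eventually.of_forall fun ω => by
      by_cases h1 : s < σ ω <;> by_cases h2 : t < σ ω
      · simp [h1, h2]
      · simp [h1, h2]
      · exact absurd (lt_of_le_of_lt hst h2) h1
      · simp [h1, h2])
  filter_upwards [h, D.Ze t ht, D.Z_eq s hs hst] with ω h1 h2 h3
  rw [h2, h3]; exact h1

lemma step (D : CompData μ H G σ Z κ C T) (s r : ℝ) (hs : 0 ≤ s) (hsr : s ≤ r) (hrT : r ≤ T) {ξ : Ω → ℝ} {K : ℝ}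
    (hξ : BM μ (H T) K ξ) (ε : ℝ) (hε : 0 < ε) :
    |∫ ω, ξ ω * Jn σ s r ω ∂μ - ∫ u in Ioc s r, ∫ ω, ξ ω * κ u ω ∂μ| ≤
      ε * (∫ ω, (μ[ξ | H r]) ω ^ 2 ∂μ - ∫ ω, (μ[ξ | H s]) ω ^ 2 ∂μ)
      + (1 / (2 * ε)) * ∫ ω, (Z s ω - Z r ω) ^ 2 ∂μ + (1 / (2 * ε)) * (C * (r - s)) ^ 2 := by
  have hr := hs.trans hsr
  have hT := hr.trans hrT
  have hsT := hsr.trans hrT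
  have hξi := hξ.int (D.hH.le T hT)
  have hC : 0 ≤ C := by
    obtain ⟨ω, -⟩ := (hξ.2).exists
    exact (abs_nonneg _).trans (D.κb 0 ω)
  set Nr := μ[ξ | H r] with hNr
  set Ns := μ[ξ | H s] with hNs
  have bNr : BM μ (H r) K Nr := hξ.condExp
  have bNs : BM μ (H s) K Ns := hξ.condExp
  have bNs' : BM μ (H r) K Ns := bNs.mono (D.hH.mono s r hs hsr)
  have iNr := bNr.int (D.hH.le r hr)
  have iNs := bNs.int (D.hH.le s hs)
  have bd : BM μ (H r) (K + K) (fun ω => Nr ω - Ns ω) := bNr.sub bNs'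
  have iD := bd.int (D.hH.le r hr)
  -- replace ξ by Nr
  have c1 : ∀ Y : Ω → ℝ, ∀ K', BM μ (G r) K' Y → ∫ ω, ξ ω * Y ω ∂μ = ∫ ω, Nr ω * Y ω ∂μ := by
    intro Y K' hY
    rw [int_cond (D.Gle r hr) hξi hY]
    refine integral_congr_ae ?_
    filter_upwards [imm_condExp D.hH D.imm hξ hr hrT] with ω h
    rw [h]
  have bκ : ∀ u, s < u → u ≤ r → BM μ (G r) C (κ u) := by
    intro u hu hur
    have h0 : 0 < u := lt_of_le_of_lt hs hu
    exact ⟨((D.κG u h0 (hur.trans hrT)).mono (D.Gmono u r h0.le hur) le_rfl).aestronglyMeasurable,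
      Eventually.of_forall fun ω => D.κb u ω⟩
  have e1 : ∫ ω, ξ ω * Jn σ s r ω ∂μ - ∫ u in Ioc s r, ∫ ω, ξ ω * κ u ω ∂μ =
      ∫ ω, Nr ω * Jn σ s r ω ∂μ - ∫ u in Ioc s r, ∫ ω, Nr ω * κ u ω ∂μ := by
    rw [c1 _ 1 (D.bmJ s r hs hsr)]
    congr 1
    refine setIntegral_congr_fun measurableSet_Ioc fun u hu => ?_
    exact c1 _ C (bκ u hu.1 hu.2)
  have e2 := D.mg_fun s r hs hsr hrT (bNs.mono (D.imm.1 s hs))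
  have bJ := D.bmJ s r hs hsr
  have e3 : ∫ ω, Nr ω * Jn σ s r ω ∂μ - ∫ u in Ioc s r, ∫ ω, Nr ω * κ u ω ∂μ =
      ∫ ω, (Nr ω - Ns ω) * Jn σ s r ω ∂μ - ∫ ω, (Nr ω - Ns ω) * (∫ u in Ioc s r, κ u ω) ∂μ := by
    have f1 : ∫ ω, (Nr ω - Ns ω) * Jn σ s r ω ∂μ =
        ∫ ω, Nr ω * Jn σ s r ω ∂μ - ∫ ω, Ns ω * Jn σ s r ω ∂μ := by
      rw [← integral_sub (BM.mul_int iNr bJ (D.Gle r hr)) (BM.mul_int iNs bJ (D.Gle r hr))]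
      simp only [sub_mul]
    have f2 : ∫ u in Ioc s r, ∫ ω, (Nr ω - Ns ω) * κ u ω ∂μ =
        (∫ u in Ioc s r, ∫ ω, Nr ω * κ u ω ∂μ) - ∫ u in Ioc s r, ∫ ω, Ns ω * κ u ω ∂μ := by
      rw [← integral_sub (int_time D.κm D.κb s r iNr) (int_time D.κm D.κb s r iNs)]
      refine setIntegral_congr_fun measurableSet_Ioc fun u hu => ?_
      have bk := bκ u hu.1 hu.2
      rw [← integral_sub (BM.mul_int iNr bk (D.Gle r hr)) (BM.mul_int iNs bk (D.Gle r hr))]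
      simp only [sub_mul]
    rw [fub D.κm D.κb s r iD, f1, f2]
    linarith
  have e4 : ∫ ω, (Nr ω - Ns ω) * Jn σ s r ω ∂μ = ∫ ω, (Nr ω - Ns ω) * (Z s ω - Z r ω) ∂μ := by
    have g1 := D.Z_dual s hs hsr bd
    have g2 := D.Z_dual r hr le_rfl bd
    have bIs := (D.bmI s hs)
    have bIr := (D.bmI r hr)
    have bZs := D.bmZ s hs
    have bZr := D.bmZ r hr
    simp only [Jn_eq s r hsr, mul_sub]
    rw [integral_sub (BM.mul_int iD bIs (D.Gle s hs)) (BM.mul_int iD bIr (D.Gle r hr)),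
      integral_sub (BM.mul_int iD bZs (D.hH.le s hs)) (BM.mul_int iD bZr (D.hH.le r hr)), g1, g2]
  have bZd : BM μ (H r) (1 + 1) (fun ω => Z s ω - Z r ω) :=
    ((D.bmZ s hs).mono (D.hH.mono s r hs hsr)).sub (D.bmZ r hr)
  have hk : Integrable (fun ω => ∫ u in Ioc s r, κ u ω) μ := by
    have := (fub_int (μ := μ) D.κm D.κb s r (integrable_const (1:ℝ))).integral_prod_left
    simpa using this
  have hkb : ∀ ω, |∫ u in Ioc s r, κ u ω| ≤ C * (r - s) := by
    intro ω
    have := norm_setIntegral_le_of_norm_le_const (μ := volume) (s := Ioc s r) (f := fun u => κ u ω)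
      (C := C) (by simp) (fun u _ => D.κb u ω)
    simpa [Measure.real, hsr] using this
  have bK : BM μ m0 (C * (r - s)) (fun ω => ∫ u in Ioc s r, κ u ω) :=
    ⟨hk.1, Eventually.of_forall hkb⟩
  have iZ2 : Integrable (fun ω => (Z s ω - Z r ω) ^ 2) μ := by
    simpa only [sq] using (bZd.mul bZd).int (D.hH.le r hr)
  have iD2 : Integrable (fun ω => (Nr ω - Ns ω) ^ 2) μ := by
    simpa only [sq] using (bd.mul bd).int (D.hH.le r hr)
  have e5 : ∫ ω, (Nr ω - Ns ω) ^ 2 ∂μ = ∫ ω, Nr ω ^ 2 ∂μ - ∫ ω, Ns ω ^ 2 ∂μ := by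
    have hc : ∫ ω, Nr ω * Ns ω ∂μ = ∫ ω, Ns ω * Ns ω ∂μ := by
      rw [int_cond (D.hH.le s hs) iNr bNs]
      refine integral_congr_ae ?_
      filter_upwards [condExp_condExp_of_le (f := ξ) (μ := μ) (D.hH.mono s r hs hsr) (D.hH.le r hr)]
        with ω h
      rw [h]
    have i1 := (bNr.mul bNr).int (D.hH.le r hr)
    have i2 := (bNr.mul bNs').int (D.hH.le r hr)
    have i3 := (bNs.mul bNs).int (D.hH.le s hs)
    have : ∀ ω, (Nr ω - Ns ω) ^ 2 = Nr ω * Nr ω - 2 * (Nr ω * Ns ω) + Ns ω * Ns ω := by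
      intro ω; ring
    simp only [this]
    have i12 : Integrable (fun ω => Nr ω * Nr ω - 2 * (Nr ω * Ns ω)) μ := i1.sub (i2.const_mul 2)
    rw [integral_add i12 i3, integral_sub i1 (i2.const_mul 2),
      integral_const_mul, hc]
    simp only [sq]; ring
  rw [e1, e3, e4, ← e5, ← integral_sub
    (by simpa using BM.mul_int iD bZd (D.hH.le r hr)) (BM.mul_int iD bK le_rfl)]
  calc |∫ ω, ((Nr ω - Ns ω) * (Z s ω - Z r ω) - (Nr ω - Ns ω) * ∫ u in Ioc s r, κ u ω) ∂μ|
      ≤ ∫ ω, |((Nr ω - Ns ω) * (Z s ω - Z r ω) - (Nr ω - Ns ω) * ∫ u in Ioc s r, κ u ω)| ∂μ :=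
        abs_integral_le_integral_abs
    _ ≤ ∫ ω, (ε * (Nr ω - Ns ω) ^ 2 + (1 / (2 * ε)) * (Z s ω - Z r ω) ^ 2
          + (1 / (2 * ε)) * (C * (r - s)) ^ 2) ∂μ := by
        refine integral_mono ?_ ?_ ?_
        · exact (Integrable.sub (by simpa using BM.mul_int iD bZd (D.hH.le r hr))
            (BM.mul_int iD bK le_rfl)).abs
        · exact ((iD2.const_mul _).add (iZ2.const_mul _)).add (integrable_const _)
        · intro ω
          simp only
          generalize Nr ω - Ns ω = x
          generalize Z s ω - Z r ω = y
          have hz := hkb ω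
          generalize (∫ u in Ioc s r, κ u ω) = z at hz
          have hz2 : z ^ 2 ≤ (C * (r - s)) ^ 2 := sq_le_sq' (abs_le.1 hz).1 (abs_le.1 hz).2
          have h6 : (1 / (2 * ε)) * z ^ 2 ≤ (1 / (2 * ε)) * (C * (r - s)) ^ 2 :=
            mul_le_mul_of_nonneg_left hz2 (by positivity)
          refine le_trans ?_ (add_le_add_right h6 _)
          have key : ∀ w : ℝ, x * w ≤ ε * x ^ 2 + 1 / (4 * ε) * w ^ 2 := by
            intro w
            have : ε * x ^ 2 + 1 / (4 * ε) * w ^ 2 - x * w = (2 * ε * x - w) ^ 2 / (4 * ε) := by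
              field_simp; ring
            have h7 : 0 ≤ (2 * ε * x - w) ^ 2 / (4 * ε) := by positivity
            linarith
          have h8 : 1 / (4 * ε) * (y - z) ^ 2 ≤ 1 / (2 * ε) * y ^ 2 + 1 / (2 * ε) * z ^ 2 := by
            have : 1 / (2 * ε) * y ^ 2 + 1 / (2 * ε) * z ^ 2 - 1 / (4 * ε) * (y - z) ^ 2
              = (y + z) ^ 2 / (4 * ε) := by field_simp; ring
            have h7 : 0 ≤ (y + z) ^ 2 / (4 * ε) := by positivity
            linarith
          rw [← mul_sub, abs_le]
          have k1 := key (y - z)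
          have k2 := key (-(y - z))
          constructor
          · nlinarith
          · nlinarith
    _ = _ := by
        have i12 : Integrable (fun ω => ε * (Nr ω - Ns ω) ^ 2
            + (1 / (2 * ε)) * (Z s ω - Z r ω) ^ 2) μ := (iD2.const_mul _).add (iZ2.const_mul _)
        rw [integral_add i12 (integrable_const _),
          integral_add (iD2.const_mul _) (iZ2.const_mul _), integral_const_mul, integral_const_mul]
        simp

end CompData

end Comp

lemma sq_sum_bound (f : ℕ → ℝ) (n : ℕ) (δ : ℝ) (ha : ∀ i < n, f (i + 1) ≤ f i)
    (hd : ∀ i < n, f i - f (i + 1) ≤ δ) :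
    ∑ i ∈ Finset.range n, (f i - f (i + 1)) ^ 2 ≤ δ * (f 0 - f n) := by
  rw [← Finset.sum_range_sub' f n, Finset.mul_sum]
  refine Finset.sum_le_sum fun i hi => ?_
  have hi := Finset.mem_range.1 hi
  rw [sq]
  exact mul_le_mul_of_nonneg_right (hd i hi) (sub_nonneg.2 (ha i hi))

/-- uniform grid -/
def gr (t : ℝ) (n i : ℕ) : ℝ := t * i / (n + 1)

lemma gr_zero (t : ℝ) (n : ℕ) : gr t n 0 = 0 := by simp [gr]

lemma gr_last (t : ℝ) (n : ℕ) : gr t n (n + 1) = t := by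
  unfold gr; push_cast; field_simp

lemma gr_sub (t : ℝ) (n i : ℕ) : gr t n (i + 1) - gr t n i = t / (n + 1) := by
  unfold gr; push_cast; field_simp; ring

lemma gr_nonneg {t : ℝ} (ht : 0 ≤ t) (n i : ℕ) : 0 ≤ gr t n i := by unfold gr; positivity

lemma gr_mono {t : ℝ} (ht : 0 ≤ t) (n i : ℕ) : gr t n i ≤ gr t n (i + 1) := by
  have := gr_sub t n i
  have h : 0 ≤ t / (n + 1) := by positivity
  linarith

lemma gr_le {t : ℝ} (ht : 0 ≤ t) (n i : ℕ) (hi : i ≤ n + 1) : gr t n i ≤ t := by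
  unfold gr
  rw [div_le_iff₀ (by positivity)]
  have : (i : ℝ) ≤ n + 1 := by exact_mod_cast hi
  exact mul_le_mul_of_nonneg_left this ht

lemma mesh_tendsto (t : ℝ) : Tendsto (fun n : ℕ => t / ((n : ℝ) + 1)) atTop (𝓝 0) := by
  have := tendsto_one_div_add_atTop_nhds_zero_nat (𝕜 := ℝ)
  have h := this.const_mul t
  simpa [div_eq_mul_inv] using h

lemma sq_var_tendsto (f : ℝ → ℝ) (hf : Continuous f) {t : ℝ} (ht : 0 ≤ t)
    (ha : ∀ n i : ℕ, f (gr t n (i + 1)) ≤ f (gr t n i)) (hb : f 0 - f t ≤ 2) :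
    Tendsto (fun n : ℕ => ∑ i ∈ Finset.range (n + 1), (f (gr t n i) - f (gr t n (i + 1))) ^ 2)
      atTop (𝓝 0) := by
  have huc := isCompact_Icc.uniformContinuousOn_of_continuous (s := Icc 0 t) hf.continuousOn
  rw [Metric.uniformContinuousOn_iff] at huc
  rw [Metric.tendsto_atTop]
  intro ε hε
  obtain ⟨d, hd, h⟩ := huc (ε / 3) (by positivity)
  obtain ⟨n0, hn0⟩ := Metric.tendsto_atTop.1 (mesh_tendsto t) d hd
  refine ⟨n0, fun n hn => ?_⟩
  have hm := hn0 n hn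
  have h1 := sq_sum_bound (fun i => f (gr t n i)) (n + 1) (ε / 3) (fun i _ => ha n i) (by
    intro i hi
    have := h (gr t n i) ⟨gr_nonneg ht n i, gr_le ht n i hi.le⟩ (gr t n (i + 1))
      ⟨gr_nonneg ht n _, gr_le ht n _ hi⟩ (by
        rw [dist_comm, Real.dist_eq, gr_sub]
        rwa [dist_zero_right, Real.norm_eq_abs] at hm)
    rw [Real.dist_eq] at this
    exact (le_abs_self _).trans this.le)
  have h0 : 0 ≤ ∑ i ∈ Finset.range (n + 1), (f (gr t n i) - f (gr t n (i + 1))) ^ 2 :=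
    Finset.sum_nonneg fun i _ => sq_nonneg _
  rw [dist_zero_right, Real.norm_of_nonneg h0]
  simp only [gr_zero, gr_last] at h1
  have : ε / 3 * (f 0 - f t) ≤ ε / 3 * 2 := mul_le_mul_of_nonneg_left hb (by positivity)
  linarith

section Comp

variable {m0 : MeasurableSpace Ω} {μ : Measure Ω} [IsProbabilityMeasure μ]
  {H G : ℝ → MeasurableSpace Ω} {σ : Ω → ℝ} {Z κ : ℝ → Ω → ℝ} {C T : ℝ}

lemma CompData.sum_step (D : CompData μ H G σ Z κ C T) {ξ : Ω → ℝ} {K : ℝ}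
    (hξ : BM μ (H T) K ξ) (ε : ℝ) (hε : 0 < ε) {t : ℝ} (ht : 0 ≤ t) (htT : t ≤ T) (n : ℕ) (k : ℕ)
    (hk : k ≤ n + 1) :
    |∫ ω, ξ ω * Jn σ 0 (gr t n k) ω ∂μ - ∫ u in Ioc 0 (gr t n k), ∫ ω, ξ ω * κ u ω ∂μ| ≤
      ε * (∫ ω, (μ[ξ | H (gr t n k)]) ω ^ 2 ∂μ - ∫ ω, (μ[ξ | H 0]) ω ^ 2 ∂μ)
      + (1 / (2 * ε)) * ∑ i ∈ Finset.range k,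
          ∫ ω, (Z (gr t n i) ω - Z (gr t n (i + 1)) ω) ^ 2 ∂μ
      + k * ((1 / (2 * ε)) * (C * (t / (n + 1))) ^ 2) := by
  have hT := ht.trans htT
  induction k with
  | zero =>
    have : ∀ ω, Jn σ 0 0 ω = 0 := by
      intro ω; unfold Jn
      rw [if_neg]
      rintro ⟨h1, h2⟩; linarith
    simp [gr_zero, this]
  | succ k ih =>
    have ih := ih (by omega)
    set s := gr t n k with hs
    set r := gr t n (k + 1) with hr
    have hs0 : 0 ≤ s := gr_nonneg ht n k
    have hsr : s ≤ r := gr_mono ht n k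
    have hrT : r ≤ T := (gr_le ht n (k + 1) hk).trans htT
    have st := D.step s r hs0 hsr hrT hξ ε hε
    have hξi := hξ.int (D.hH.le T hT)
    rw [gr_sub] at st
    have d1 : ∫ ω, ξ ω * Jn σ 0 r ω ∂μ = ∫ ω, ξ ω * Jn σ 0 s ω ∂μ + ∫ ω, ξ ω * Jn σ s r ω ∂μ := by
      rw [← integral_add (BM.mul_int hξi (D.bmJ 0 s le_rfl hs0) (D.Gle s hs0))
        (BM.mul_int hξi (D.bmJ s r hs0 hsr) (D.Gle r (hs0.trans hsr)))]
      refine integral_congr_ae (Eventually.of_forall fun ω => ?_)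
      simp only [Jn_eq 0 r (hs0.trans hsr), Jn_eq 0 s hs0, Jn_eq s r hsr]
      ring
    have d2 : ∫ u in Ioc 0 r, ∫ ω, ξ ω * κ u ω ∂μ = (∫ u in Ioc 0 s, ∫ ω, ξ ω * κ u ω ∂μ) +
        ∫ u in Ioc s r, ∫ ω, ξ ω * κ u ω ∂μ := by
      rw [← setIntegral_union (Ioc_disjoint_Ioc_of_le le_rfl) measurableSet_Ioc
        (int_time D.κm D.κb 0 s hξi) (int_time D.κm D.κb s r hξi), Ioc_union_Ioc_eq_Ioc hs0 hsr]
    rw [d1, d2, Finset.sum_range_succ, mul_add]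
    have tri := abs_add_le (∫ ω, ξ ω * Jn σ 0 s ω ∂μ - ∫ u in Ioc 0 s, ∫ ω, ξ ω * κ u ω ∂μ)
      (∫ ω, ξ ω * Jn σ s r ω ∂μ - ∫ u in Ioc s r, ∫ ω, ξ ω * κ u ω ∂μ)
    refine le_trans (le_of_eq ?_) (tri.trans ((add_le_add ih st).trans (le_of_eq ?_)))
    · congr 1; ring
    · push_cast; ring

lemma CompData.weak (D : CompData μ H G σ Z κ C T) {ξ : Ω → ℝ} {K : ℝ}
    (hξ : BM μ (H T) K ξ) {t : ℝ} (ht : 0 ≤ t) (htT : t ≤ T) :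
    ∫ ω, ξ ω * Jn σ 0 t ω ∂μ = ∫ u in Ioc 0 t, ∫ ω, ξ ω * κ u ω ∂μ := by
  have hT := ht.trans htT
  have hZb : ∀ᵐ ω ∂μ, ∀ n i : ℕ, |Z (gr t n i) ω| ≤ 1 := by
    rw [ae_all_iff]; intro n; rw [ae_all_iff]; intro i
    exact (D.bmZ _ (gr_nonneg ht n i)).2
  have hZa : ∀ᵐ ω ∂μ, ∀ n i : ℕ, Z (gr t n (i + 1)) ω ≤ Z (gr t n i) ω := by
    rw [ae_all_iff]; intro n; rw [ae_all_iff]; intro i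
    exact D.Z_anti _ _ (gr_nonneg ht n i) (gr_mono ht n i)
  have bZd : ∀ n i : ℕ, BM μ m0 (1 + 1) (fun ω => Z (gr t n i) ω - Z (gr t n (i + 1)) ω) :=
    fun n i => ((D.bmZ _ (gr_nonneg ht n i)).mono (D.hH.le _ (gr_nonneg ht n i))).sub
      ((D.bmZ _ (gr_nonneg ht n _)).mono (D.hH.le _ (gr_nonneg ht n _)))
  have iZ2 : ∀ n i : ℕ, Integrable (fun ω => (Z (gr t n i) ω - Z (gr t n (i + 1)) ω) ^ 2) μ := by
    intro n i
    simpa only [sq] using ((bZd n i).mul (bZd n i)).int le_rfl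
  have hQ : Tendsto (fun n : ℕ => ∑ i ∈ Finset.range (n + 1),
      ∫ ω, (Z (gr t n i) ω - Z (gr t n (i + 1)) ω) ^ 2 ∂μ) atTop (𝓝 0) := by
    have h := tendsto_integral_of_dominated_convergence (μ := μ)
      (F := fun n : ℕ => fun ω => ∑ i ∈ Finset.range (n + 1),
        (Z (gr t n i) ω - Z (gr t n (i + 1)) ω) ^ 2) (f := fun _ => (0:ℝ)) (fun _ => 4)
      (fun n => (integrable_finsetSum _ fun i _ => iZ2 n i).1) (integrable_const _) (by
        intro n
        filter_upwards [hZb, hZa] with ω h1 h2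
        have h3 := sq_sum_bound (fun i => Z (gr t n i) ω) (n + 1) 2 (fun i _ => h2 n i) (by
          intro i _
          have a := abs_le.1 (h1 n i); have b := abs_le.1 (h1 n (i + 1)); linarith)
        rw [Real.norm_of_nonneg (Finset.sum_nonneg fun i _ => sq_nonneg _)]
        have a := abs_le.1 (h1 n 0); have b := abs_le.1 (h1 n (n + 1))
        linarith) (by
        filter_upwards [hZb, hZa] with ω h1 h2
        refine sq_var_tendsto (fun u => Z u ω) (D.Zc ω) ht h2 ?_
        have a := abs_le.1 (h1 0 0); have b := abs_le.1 (h1 0 1)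
        have g1 := gr_last t 0
        simp only [zero_add] at g1
        rw [gr_zero] at a; rw [g1] at b
        linarith)
    simp only [integral_zero] at h
    refine h.congr fun n => ?_
    exact integral_finsetSum _ fun i _ => iZ2 n i
  set A := ∫ ω, ξ ω * Jn σ 0 t ω ∂μ - ∫ u in Ioc 0 t, ∫ ω, ξ ω * κ u ω ∂μ with hA
  have main : ∀ ε : ℝ, 0 < ε → |A| ≤ ε * K ^ 2 := by
    intro ε hε
    have hlim : Tendsto (fun n : ℕ => ε * K ^ 2 + (1 / (2 * ε)) * (∑ i ∈ Finset.range (n + 1),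
        ∫ ω, (Z (gr t n i) ω - Z (gr t n (i + 1)) ω) ^ 2 ∂μ)
        + (1 / (2 * ε)) * C ^ 2 * t * (t / (n + 1))) atTop
        (𝓝 (ε * K ^ 2 + (1 / (2 * ε)) * 0 + (1 / (2 * ε)) * C ^ 2 * t * 0)) :=
      (tendsto_const_nhds.add (hQ.const_mul _)).add ((mesh_tendsto t).const_mul _)
    have h0 : ε * K ^ 2 = ε * K ^ 2 + (1 / (2 * ε)) * 0 + (1 / (2 * ε)) * C ^ 2 * t * 0 := by ring
    rw [h0]
    refine ge_of_tendsto' hlim fun n => ?_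
    have h := D.sum_step hξ ε hε ht htT n (n + 1) le_rfl
    rw [gr_last, ← hA] at h
    have b1 : ∫ ω, (μ[ξ | H t]) ω ^ 2 ∂μ ≤ K ^ 2 := by
      have bN : BM μ (H t) K (μ[ξ | H t]) := hξ.condExp
      have : ∫ ω, (μ[ξ | H t]) ω ^ 2 ∂μ ≤ ∫ _, K ^ 2 ∂μ := by
        refine integral_mono_ae ?_ (integrable_const _) ?_
        · simpa only [sq] using (bN.mul bN).int (D.hH.le t ht)
        · filter_upwards [bN.2] with ω h
          exact sq_le_sq' (abs_le.1 h).1 (abs_le.1 h).2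
      simpa using this
    have b2 : 0 ≤ ∫ ω, (μ[ξ | H 0]) ω ^ 2 ∂μ := integral_nonneg fun ω => sq_nonneg _
    have b3 : ε * (∫ ω, (μ[ξ | H t]) ω ^ 2 ∂μ - ∫ ω, (μ[ξ | H 0]) ω ^ 2 ∂μ) ≤ ε * K ^ 2 :=
      mul_le_mul_of_nonneg_left (by linarith) hε.le
    have b4 : ((n + 1 : ℕ) : ℝ) * ((1 / (2 * ε)) * (C * (t / (n + 1))) ^ 2) =
        (1 / (2 * ε)) * C ^ 2 * t * (t / (n + 1)) := by
      push_cast; field_simp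
    rw [b4] at h
    linarith
  have hA0 : |A| ≤ 0 := by
    refine le_of_forall_pos_le_add fun δ hδ => ?_
    have := main (δ / (K ^ 2 + 1)) (by positivity)
    have h2 : δ / (K ^ 2 + 1) * K ^ 2 ≤ δ := by
      rw [div_mul_eq_mul_div, div_le_iff₀ (by positivity)]
      nlinarith [sq_nonneg K]
    linarith
  have := abs_nonpos_iff.1 hA0
  linarith

end Comp

/-- good path of jump times -/
structure GP (τ : ℕ → Ω → ℝ) (ω : Ω) : Prop where
  z : τ 0 ω = 0
  sm : StrictMono (fun k => τ k ω)
  lim : Tendsto (fun k => τ k ω) atTop atTop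

section Path

variable {τ : ℕ → Ω → ℝ} {ω : Ω}

lemma GP.card_aux (h : GP τ ω) (p : ℝ → Prop) (hp : ∀ x y, x ≤ y → p y → p x)
    (hp0 : p 0) (hpt : ∃ M, ∀ x, M ≤ x → ¬ p x) (k : ℕ) :
    k ≤ Nat.card {j : ℕ // p (τ (j + 1) ω)} ↔ p (τ k ω) := by
  classical
  have hmono := h.sm.monotone
  have hex : ∃ n, ¬ p (τ (n + 1) ω) := by
    obtain ⟨M, hM⟩ := hpt
    obtain ⟨n, hn⟩ := (h.lim.eventually_ge_atTop M).exists
    exact ⟨n, fun hc => hM _ hn (hp _ _ (hmono (Nat.le_succ n)) hc)⟩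
  set n := Nat.find hex with hn
  have h1 : ¬ p (τ (n + 1) ω) := Nat.find_spec hex
  have h2 : ∀ j < n, p (τ (j + 1) ω) := fun j hj => not_not.1 (Nat.find_min hex hj)
  have h3 : ∀ j, p (τ (j + 1) ω) ↔ j < n := by
    intro j
    refine ⟨fun hj => ?_, h2 j⟩
    by_contra hc
    exact h1 (hp _ _ (hmono (by omega : n + 1 ≤ j + 1)) hj)
  have h4 : Nat.card {j : ℕ // p (τ (j + 1) ω)} = n := by
    simp only [h3]
    rw [Nat.card_congr (Fin.equivSubtype (n := n)).symm]
    simp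
  rw [h4]
  cases k with
  | zero => simp [h.z, hp0]
  | succ k => rw [h3]; omega

lemma GP.le_countX (h : GP τ ω) {t : ℝ} (ht : 0 ≤ t) (k : ℕ) : k ≤ countX τ t ω ↔ τ k ω ≤ t :=
  h.card_aux (fun x => x ≤ t) (fun _ _ h1 h2 => h1.trans h2) ht
    ⟨t + 1, fun x hx h => by linarith⟩ k

lemma GP.le_countXm (h : GP τ ω) {t : ℝ} (ht : 0 < t) (k : ℕ) :
    k ≤ countXminus τ t ω ↔ τ k ω < t :=
  h.card_aux (fun x => x < t) (fun _ _ h1 h2 => h1.trans_lt h2) ht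
    ⟨t, fun x hx h => by linarith⟩ k

lemma GP.countX_eq (h : GP τ ω) {t : ℝ} (ht : 0 ≤ t) (k : ℕ) :
    countX τ t ω = k ↔ τ k ω ≤ t ∧ t < τ (k + 1) ω := by
  rw [← h.le_countX ht, ← not_le, ← h.le_countX ht]; omega

lemma GP.countXm_eq (h : GP τ ω) {t : ℝ} (ht : 0 < t) (k : ℕ) :
    countXminus τ t ω = k ↔ τ k ω < t ∧ t ≤ τ (k + 1) ω := by
  rw [← h.le_countXm ht, ← not_lt (a := τ (k + 1) ω), ← h.le_countXm ht]; omega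

lemma GP.countX_mono (h : GP τ ω) {s t : ℝ} (hs : 0 ≤ s) (hst : s ≤ t) :
    countX τ s ω ≤ countX τ t ω :=
  (h.le_countX (hs.trans hst) _).2 (((h.le_countX hs _).1 le_rfl).trans hst)

lemma GP.nonneg (h : GP τ ω) (k : ℕ) : 0 ≤ τ k ω := by
  rw [← h.z]; exact h.sm.monotone (Nat.zero_le k)

end Path

lemma rcReg_mono (F : ℝ → MeasurableSpace Ω) {s t : ℝ} (hst : s ≤ t) : rcReg F s ≤ rcReg F t := by
  unfold rcReg
  exact biInf_mono fun x hx => lt_of_le_of_lt hst hx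

lemma rcReg_idem (F : ℝ → MeasurableSpace Ω) (t : ℝ) : rcReg F t = rcReg (rcReg F) t := by
  apply le_antisymm
  · refine le_iInf₂ fun s hs => rcReg_mono F (le_of_lt hs)
  · refine le_iInf₂ fun s hs => ?_
    obtain ⟨r, hr, hrs⟩ := exists_between (show t < s from hs)
    exact (iInf₂_le r hr).trans (iInf₂_le s hrs)

lemma le_rcReg (F : ℝ → MeasurableSpace Ω) (hF : ∀ s t : ℝ, 0 ≤ s → s ≤ t → F s ≤ F t) {t : ℝ}
    (ht : 0 ≤ t) : F t ≤ rcReg F t :=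
  le_iInf₂ fun s hs => hF t s ht (le_of_lt hs)

lemma natFilt_mono (Y : ℝ → Ω → ℝ) {s t : ℝ} (hst : s ≤ t) : natFilt Y s ≤ natFilt Y t := by
  unfold natFilt
  exact biSup_mono fun x hx => ⟨hx.1, hx.2.trans hst⟩

lemma natFilt_meas (σ : Ω → ℝ) {s : ℝ} (hs : 0 ≤ s) :
    MeasurableSet[natFilt (fun s ω => if σ ω ≤ s then (1:ℝ) else 0) s] {ω | σ ω ≤ s} := by
  have h : MeasurableSpace.comap (fun ω => if σ ω ≤ s then (1:ℝ) else 0) inferInstance ≤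
      natFilt (fun s ω => if σ ω ≤ s then (1:ℝ) else 0) s :=
    le_iSup₂_of_le (f := fun r (_ : r ∈ Icc 0 s) =>
      MeasurableSpace.comap (fun ω => if σ ω ≤ r then (1:ℝ) else 0) inferInstance)
      s ⟨hs, le_rfl⟩ le_rfl
  refine h _ ⟨{1}, measurableSet_singleton _, ?_⟩
  ext ω
  by_cases h : σ ω ≤ s <;> simp [h]

section Filt

variable {F : ℝ → MeasurableSpace Ω} {τ : ℕ → Ω → ℝ}

lemma pre_mono (hF : ∀ s t : ℝ, 0 ≤ s → s ≤ t → F s ≤ F t) (k : ℕ) :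
    ∀ s t : ℝ, 0 ≤ s → s ≤ t → (F s ⊔
    ⨆ i ∈ Finset.range k, natFilt (fun s ω => if τ (i + 1) ω ≤ s then (1:ℝ) else 0) s) ≤ (F t ⊔
    ⨆ i ∈ Finset.range k, natFilt (fun s ω => if τ (i + 1) ω ≤ s then (1:ℝ) else 0) t) :=
  fun s t hs hst => sup_le_sup (hF s t hs hst) (iSup₂_mono fun _ _ => natFilt_mono _ hst)

lemma preI_mono (hF : ∀ s t : ℝ, 0 ≤ s → s ≤ t → F s ≤ F t) :
    ∀ s t : ℝ, 0 ≤ s → s ≤ t → (F s ⊔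
    ⨆ i : ℕ, natFilt (fun s ω => if τ (i + 1) ω ≤ s then (1:ℝ) else 0) s) ≤ (F t ⊔
    ⨆ i : ℕ, natFilt (fun s ω => if τ (i + 1) ω ≤ s then (1:ℝ) else 0) t) :=
  fun s t hs hst => sup_le_sup (hF s t hs hst) (iSup_mono fun _ => natFilt_mono _ hst)

lemma F_le_jump (hF : ∀ s t : ℝ, 0 ≤ s → s ≤ t → F s ≤ F t) (k : ℕ) {s : ℝ} (hs : 0 ≤ s) :
    F s ≤ jumpFilt F τ k s :=
  le_sup_left.trans (le_rcReg _ (pre_mono hF k) hs)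

lemma F_le_jumpI (hF : ∀ s t : ℝ, 0 ≤ s → s ≤ t → F s ≤ F t) {s : ℝ} (hs : 0 ≤ s) :
    F s ≤ jumpFiltInf F τ s :=
  le_sup_left.trans (le_rcReg _ (preI_mono hF) hs)

lemma jump_meas (hF : ∀ s t : ℝ, 0 ≤ s → s ≤ t → F s ≤ F t) (k j : ℕ) (hj : j < k) {s : ℝ}
    (hs : 0 ≤ s) : MeasurableSet[jumpFilt F τ k s] {ω | τ (j + 1) ω ≤ s} := by
  refine le_rcReg _ (pre_mono hF k) hs _ ?_
  have h : natFilt (fun s ω => if τ (j + 1) ω ≤ s then (1:ℝ) else 0) s ≤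
    ⨆ i ∈ Finset.range k, natFilt (fun s ω => if τ (i + 1) ω ≤ s then (1:ℝ) else 0) s :=
    le_iSup₂_of_le (f := fun i (_ : i ∈ Finset.range k) =>
      natFilt (fun s ω => if τ (i + 1) ω ≤ s then (1:ℝ) else 0) s) j (Finset.mem_range.2 hj) le_rfl
  exact (h.trans le_sup_right) _ (natFilt_meas _ hs)

lemma jumpI_meas (hF : ∀ s t : ℝ, 0 ≤ s → s ≤ t → F s ≤ F t) (j : ℕ) {s : ℝ}
    (hs : 0 ≤ s) : MeasurableSet[jumpFiltInf F τ s] {ω | τ (j + 1) ω ≤ s} := by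
  refine le_rcReg _ (preI_mono hF) hs _ ?_
  have h : natFilt (fun s ω => if τ (j + 1) ω ≤ s then (1:ℝ) else 0) s ≤
    ⨆ i : ℕ, natFilt (fun s ω => if τ (i + 1) ω ≤ s then (1:ℝ) else 0) s :=
    le_iSup_of_le (f := fun i : ℕ =>
      natFilt (fun s ω => if τ (i + 1) ω ≤ s then (1:ℝ) else 0) s) j le_rfl
  exact (h.trans le_sup_right) _ (natFilt_meas _ hs)

/-- the contradiction behind measurability: a counting path cannot be absolutely continuous -/
lemma path_contra {ω : Ω} (h : GP τ ω) (f : ℝ → ℝ) {t : ℝ} (ht : 0 ≤ t)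
    (hf : ∀ q : ℚ, t ≤ q → (countX τ q ω : ℝ) - ∫ s in Ioc 0 (q:ℝ), f s = 0) : False := by
  have hX : ∀ n : ℕ, ∃ q : ℚ, t ≤ q ∧ n ≤ countX τ q ω := by
    intro n
    obtain ⟨q, hq⟩ := exists_rat_gt (max t (τ n ω))
    refine ⟨q, (le_max_left _ _).trans hq.le, (h.le_countX ?_ n).2 ((le_max_right _ _).trans hq.le)⟩
    exact ht.trans ((le_max_left _ _).trans hq.le)
  obtain ⟨q1, hq1, -⟩ := hX 0
  obtain ⟨q2, hq2, hc⟩ := hX (countX τ q1 ω + 1)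
  have hq1' := ht.trans hq1
  have hlt : (q1 : ℝ) < q2 := by
    by_contra hn
    have := h.countX_mono (ht.trans hq2) (not_lt.1 hn)
    omega
  have e1 := hf q1 hq1
  have e2 := hf q2 hq2
  have hc' : (countX τ q1 ω : ℝ) + 1 ≤ countX τ q2 ω := by exact_mod_cast hc
  have hinteg : IntegrableOn f (Icc 0 (q2:ℝ)) := by
    rw [integrableOn_Icc_iff_integrableOn_Ioc]
    by_contra hn
    rw [integral_undef hn] at e2
    have : (0:ℝ) ≤ countX τ q1 ω := Nat.cast_nonneg _
    linarith
  have hcont := intervalIntegral.continuousOn_primitive hinteg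
  have hc2 : ContinuousOn (fun x => ∫ s in Ioc 0 x, f s) (Icc (q1:ℝ) q2) :=
    hcont.mono (Icc_subset_Icc_left hq1')
  obtain ⟨x, hx, hxv⟩ := intermediate_value_Ioo hlt.le hc2
    (show (countX τ q1 ω : ℝ) + 1/2 ∈ Ioo _ _ from ⟨by linarith, by linarith⟩)
  have hca : ContinuousAt (fun x => ∫ s in Ioc 0 x, f s) x :=
    hc2.continuousAt (Icc_mem_nhds hx.1 hx.2)
  have hnb : ∀ᶠ y in 𝓝 x, (∫ s in Ioc 0 y, f s) ∈ Ioo ((countX τ q1 ω : ℝ)) (countX τ q1 ω + 1) :=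
    hca.eventually (Ioo_mem_nhds (by simp only [hxv]; linarith) (by simp only [hxv]; linarith))
  have hnb2 : ∀ᶠ y in 𝓝 x, y ∈ Ioo (q1:ℝ) q2 := Ioo_mem_nhds hx.1 hx.2
  obtain ⟨l, u, hlu, hsub⟩ := (mem_nhds_iff_exists_Ioo_subset (a := x)).1 (hnb.and hnb2)
  obtain ⟨q, hq⟩ := exists_rat_btwn (hlu.1.trans hlu.2)
  obtain ⟨h3, h4⟩ := hsub ⟨hq.1, hq.2⟩
  have e3 := hf q (hq1.trans h4.1.le)
  have h5 : (∫ s in Ioc 0 (q:ℝ), f s) = countX τ q ω := by linarith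
  rw [h5] at h3
  have a1 : countX τ q1 ω < countX τ q ω := by exact_mod_cast h3.1
  have a2 : countX τ q ω < countX τ q1 ω + 1 := by exact_mod_cast h3.2
  omega

end Filt

lemma ae_GP {m0 : MeasurableSpace Ω} {μ : Measure Ω} {F : ℝ → MeasurableSpace Ω}
    {η : ℝ → Ω → ℝ} {lam : ℝ → ℕ → ℝ} {τ : ℕ → Ω → ℝ} (h : InversionSetting μ F η lam τ) :
    ∀ᵐ ω ∂μ, GP τ ω := by
  filter_upwards [h.2.1] with ω hω
  exact ⟨h.1 ω, hω.2.1, hω.2.2⟩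

lemma G_le {m0 : MeasurableSpace Ω} {μ : Measure Ω} [IsProbabilityMeasure μ]
    {F : ℝ → MeasurableSpace Ω}
    {η : ℝ → Ω → ℝ} {lam : ℝ → ℕ → ℝ} {τ : ℕ → Ω → ℝ} (h : InversionSetting μ F η lam τ)
    {t : ℝ} (ht : 0 ≤ t) : jumpFiltInf F τ t ≤ m0 := by
  by_contra hn
  have hM := h.2.2.2.2.2
  have hz : ∀ᵐ ω ∂μ, ∀ q : ℚ, t ≤ q → (countX τ q ω : ℝ) -
      ∫ s in Set.Ioc 0 (q:ℝ), η s ω /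
          (μ[η s | MeasurableSpace.comap (countXminus τ s) inferInstance]) ω *
          lam s (countXminus τ s ω) = 0 := by
    rw [ae_all_iff]
    intro q
    by_cases hq : t ≤ (q:ℝ)
    · have h1 : ¬ (jumpFiltInf F τ q ≤ m0) := fun hc => hn ((rcReg_mono _ hq).trans hc)
      have h2 := hM.2.2 q q (ht.trans hq) le_rfl
      rw [condExp_of_not_le h1] at h2
      filter_upwards [h2] with ω hω _
      exact hω.symm
    · exact Eventually.of_forall fun ω hc => absurd hc hq
  obtain ⟨ω, h1, h2⟩ := (hz.and (ae_GP h)).exists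
  exact path_contra h2 _ ht h1

/-- consequences of the setting on filtrations and measurability -/
structure JS {m0 : MeasurableSpace Ω} (μ : Measure Ω) (F : ℝ → MeasurableSpace Ω)
    (τ : ℕ → Ω → ℝ) : Prop where
  Fmono : ∀ s t : ℝ, 0 ≤ s → s ≤ t → F s ≤ F t
  Fnull : ∀ s : Set Ω, μ s = 0 → MeasurableSet[F 0] s
  z : ∀ ω, τ 0 ω = 0
  good : ∀ᵐ ω ∂μ, GP τ ω
  gH : ∀ k, GoodFilt μ (jumpFilt F τ k)
  gG : GoodFilt μ (jumpFiltInf F τ)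
  imm : ∀ k : ℕ, Immersed μ (jumpFilt F τ k) (jumpFiltInf F τ)

lemma mk_JS {m0 : MeasurableSpace Ω} {μ : Measure Ω} [IsProbabilityMeasure μ]
    {F : ℝ → MeasurableSpace Ω} (hUC : UsualConditions μ F)
    {η : ℝ → Ω → ℝ} {lam : ℝ → ℕ → ℝ} {τ : ℕ → Ω → ℝ} (h : InversionSetting μ F η lam τ) :
    JS μ F τ where
  Fmono := hUC.1.1
  Fnull := hUC.2.2
  z := h.1
  good := ae_GP h
  gH k :=
    { mono := fun s t _ hst => rcReg_mono _ hst
      le := fun t ht => ((h.2.2.2.1 k).1 t ht).trans (G_le h ht)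
      rc := fun t _ => rcReg_idem _ t
      null := fun s hs => F_le_jump hUC.1.1 k le_rfl _ (hUC.2.2 s hs) }
  gG :=
    { mono := fun s t _ hst => rcReg_mono _ hst
      le := fun t ht => G_le h ht
      rc := fun t _ => rcReg_idem _ t
      null := fun s hs => F_le_jumpI hUC.1.1 le_rfl _ (hUC.2.2 s hs) }
  imm := h.2.2.2.1

/-- a.e. equal sets in a complete sub-σ-algebra -/
lemma meas_of_ae {m0 : MeasurableSpace Ω} {μ : Measure Ω} {m : MeasurableSpace Ω}
    (hn : ∀ s : Set Ω, μ s = 0 → MeasurableSet[m] s) {A B : Set Ω} (hB : MeasurableSet[m] B)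
    (h : ∀ᵐ ω ∂μ, ω ∈ A ↔ ω ∈ B) : MeasurableSet[m] A := by
  have h1 : μ {ω | ¬ (ω ∈ A ↔ ω ∈ B)} = 0 := h
  have h2 : μ (A \ B) = 0 := measure_mono_null (fun ω hω => show ¬ _ from fun hc => hω.2 (hc.1 hω.1)) h1
  have h3 : μ (B \ A) = 0 := measure_mono_null (fun ω hω => show ¬ _ from fun hc => hω.2 (hc.2 hω.1)) h1
  have : A = (B \ (B \ A)) ∪ (A \ B) := by ext ω; simp only [mem_union, mem_diff]; tauto
  rw [this]
  exact @MeasurableSet.union _ m _ _ (@MeasurableSet.diff _ m _ _ hB (hn _ h3)) (hn _ h2)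

section JSsec

variable {m0 : MeasurableSpace Ω} {μ : Measure Ω} [IsProbabilityMeasure μ]
    {F : ℝ → MeasurableSpace Ω} {τ : ℕ → Ω → ℝ}

lemma JS.nullG (J : JS μ F τ) {t : ℝ} (ht : 0 ≤ t) : ∀ s : Set Ω, μ s = 0 →
    MeasurableSet[jumpFiltInf F τ t] s := fun s hs => J.gG.mono 0 t le_rfl ht _ (J.gG.null s hs)

lemma JS.nullH (J : JS μ F τ) (k : ℕ) {t : ℝ} (ht : 0 ≤ t) : ∀ s : Set Ω, μ s = 0 →
    MeasurableSet[jumpFilt F τ k t] s :=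
  fun s hs => (J.gH k).mono 0 t le_rfl ht _ ((J.gH k).null s hs)

lemma JS.null0 (J : JS μ F τ) : ∀ s : Set Ω, μ s = 0 → MeasurableSet s :=
  fun s hs => J.gG.le 0 le_rfl _ (J.gG.null s hs)

lemma JS.mG (J : JS μ F τ) (k : ℕ) {s : ℝ} (hs : 0 ≤ s) :
    MeasurableSet[jumpFiltInf F τ s] {ω | τ k ω ≤ s} := by
  cases k with
  | zero => simp [J.z, hs]
  | succ k => exact jumpI_meas J.Fmono k hs

lemma JS.mH (J : JS μ F τ) {k j : ℕ} (hj : j ≤ k) {s : ℝ} (hs : 0 ≤ s) :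
    MeasurableSet[jumpFilt F τ k s] {ω | τ j ω ≤ s} := by
  cases j with
  | zero => simp [J.z, hs]
  | succ j => exact jump_meas J.Fmono k j (by omega) hs

lemma JS.mτ (J : JS μ F τ) (k : ℕ) : Measurable (τ k) := by
  refine measurable_of_Iic fun x => ?_
  by_cases hx : 0 ≤ x
  · exact J.gG.le x hx _ (J.mG k hx)
  · refine J.null0 _ ?_
    have := J.good
    refine measure_mono_null (fun ω hω => show ¬ _ from fun hc => ?_) (ae_iff.1 this)
    have h1 := hc.nonneg k
    have h2 : τ k ω ≤ x := hω
    exact hx (h1.trans h2)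

lemma JS.mGlt (J : JS μ F τ) (k : ℕ) {s : ℝ} (hs : 0 < s) :
    MeasurableSet[jumpFiltInf F τ s] {ω | τ k ω < s} := by
  have : {ω | τ k ω < s} = ⋃ n : ℕ, {ω | τ k ω ≤ s - s / (n + 1)} := by
    ext ω
    simp only [mem_ofPred_eq, mem_iUnion]
    constructor
    · intro h
      obtain ⟨n, hn⟩ := ((mesh_tendsto s).eventually (gt_mem_nhds (sub_pos.2 h))).exists
      exact ⟨n, by linarith⟩
    · rintro ⟨n, hn⟩
      have : 0 < s / ((n:ℝ) + 1) := by positivity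
      linarith
  rw [this]
  refine @MeasurableSet.iUnion _ _ (jumpFiltInf F τ s) _ _ fun n => ?_
  have h1 : 0 < s / ((n:ℝ) + 1) := by positivity
  have h0 : 0 ≤ s - s / ((n:ℝ) + 1) := by
    rw [sub_nonneg]
    refine div_le_self hs.le ?_
    have : (0:ℝ) ≤ n := Nat.cast_nonneg n
    linarith
  exact J.gG.mono _ s h0 (by linarith) _ (J.mG k h0)

lemma JS.mX (J : JS μ F τ) {s : ℝ} (hs : 0 ≤ s) (k : ℕ) :
    MeasurableSet[jumpFiltInf F τ s] {ω | countX τ s ω = k} := by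
  refine meas_of_ae (J.nullG hs) (@MeasurableSet.diff _ (jumpFiltInf F τ s) _ _ (J.mG k hs)
    (J.mG (k + 1) hs)) ?_
  filter_upwards [J.good] with ω h
  simp only [mem_ofPred_eq, mem_diff, h.countX_eq hs, not_le]

lemma JS.mN (J : JS μ F τ) {s : ℝ} (hs : 0 < s) (k : ℕ) :
    MeasurableSet[jumpFiltInf F τ s] {ω | countXminus τ s ω = k} := by
  refine meas_of_ae (J.nullG hs.le) (@MeasurableSet.diff _ (jumpFiltInf F τ s) _ _ (J.mGlt k hs)
    (J.mGlt (k + 1) hs)) ?_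
  filter_upwards [J.good] with ω h
  simp only [mem_ofPred_eq, mem_diff, h.countXm_eq hs, not_lt]

lemma JS.mX' (J : JS μ F τ) {s : ℝ} (hs : 0 ≤ s) : Measurable (countX τ s) :=
  measurable_to_countable' fun k => J.gG.le s hs _ (J.mX hs k)

lemma JS.mN' (J : JS μ F τ) {s : ℝ} (hs : 0 < s) : Measurable (countXminus τ s) :=
  measurable_to_countable' fun k => J.gG.le s hs.le _ (J.mN hs k)

end JSsec

/-- clipping -/
def clip (L U x : ℝ) : ℝ := max L (min U x)

lemma clip_ge (L U x : ℝ) : L ≤ clip L U x := le_max_left _ _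

lemma clip_le {L U : ℝ} (h : L ≤ U) (x : ℝ) : clip L U x ≤ U := max_le h (min_le_left _ _)

lemma clip_eq {L U x : ℝ} (h1 : L ≤ x) (h2 : x ≤ U) : clip L U x = x := by
  simp [clip, h1, h2]

lemma clip_meas (L U : ℝ) : Measurable (clip L U) := by unfold clip; fun_prop

/-- clipped version of `η` on `[0,T]` -/
def eh (L U : ℝ) {T : ℝ} (hT : 0 ≤ T) (η : ℝ → Ω → ℝ) (s : ℝ) (ω : Ω) : ℝ :=
  clip L U (η (projIcc 0 T hT s) ω)

/-- indicator of `τ_k < u ≤ τ_{k+1}` -/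
def ind (τ : ℕ → Ω → ℝ) (k : ℕ) (u : ℝ) (ω : Ω) : ℝ :=
  if τ k ω < u ∧ u ≤ τ (k + 1) ω then 1 else 0

section eh
variable {L U T : ℝ} {hT : 0 ≤ T} {η : ℝ → Ω → ℝ} {F : ℝ → MeasurableSpace Ω}

lemma eh_ge (s : ℝ) (ω : Ω) : L ≤ eh L U hT η s ω := clip_ge _ _ _

lemma eh_le (h : L ≤ U) (s : ℝ) (ω : Ω) : eh L U hT η s ω ≤ U := clip_le h _

lemma eh_eq {s : ℝ} (hs : s ∈ Icc 0 T) (ω : Ω) : eh L U hT η s ω = clip L U (η s ω) := by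
  unfold eh; rw [projIcc_of_mem hT hs]

lemma eh_meas (h : ProgMeas F η) :
    Measurable[MeasurableSpace.prod inferInstance (F T)] (Function.uncurry (eh L U hT η)) := by
  have h1 := h T hT
  letI : MeasurableSpace Ω := F T
  have h2 : Measurable (fun p : ℝ × Ω => (projIcc 0 T hT p.1, p.2)) :=
    ((continuous_projIcc.measurable).comp measurable_fst).prodMk measurable_snd
  exact (clip_meas L U).comp (h1.comp h2)

lemma eh_adapted (h : ProgMeas F η) {s : ℝ} (hs : s ∈ Icc 0 T) :
    Measurable[F s] (eh L U hT η s) := by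
  have h1 := h s hs.1
  letI : MeasurableSpace Ω := F s
  have h2 : Measurable (fun ω : Ω => ((⟨s, hs.1, le_rfl⟩ : Icc (0:ℝ) s), ω)) :=
    measurable_const.prodMk measurable_id
  have h3 := (clip_meas L U).comp (h1.comp h2)
  convert h3 using 1
  ext ω
  simp [eh_eq hs]

end eh

section Basic

variable {m0 : MeasurableSpace Ω} (μ : Measure Ω) (τ : ℕ → Ω → ℝ) (e : ℝ → Ω → ℝ)

/-- probability of being in state `k` just before `u` -/
def pk (k : ℕ) (u : ℝ) : ℝ := ∫ ω, ind τ k u ω ∂μ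

/-- expectation of `e` in state `k` -/
def Ak (k : ℕ) (u : ℝ) : ℝ := ∫ ω, ind τ k u ω * e u ω ∂μ

/-- multiplier -/
def ak (l : ℝ → ℕ → ℝ) (k : ℕ) (u : ℝ) : ℝ := l u k * (pk μ τ k u / Ak μ τ e k u)

end Basic

/-- hypotheses on the clipped integrand -/
structure EHyp (m0 : MeasurableSpace Ω) (F : ℝ → MeasurableSpace Ω) (L U T : ℝ)
    (e : ℝ → Ω → ℝ) (l : ℝ → ℕ → ℝ) : Prop where
  hT : 0 < T
  hL : 0 < L
  hLU : L ≤ U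
  FT : F T ≤ m0
  em : Measurable[MeasurableSpace.prod inferInstance (F T)] (Function.uncurry e)
  ead : ∀ s ∈ Icc 0 T, Measurable[F s] (e s)
  ege : ∀ s ω, L ≤ e s ω
  ele : ∀ s ω, e s ω ≤ U
  lm : ∀ k, Measurable (fun s => l s k)
  lge : ∀ s k, 0 ≤ l s k
  lle : ∀ s k, l s k ≤ U

section ESec

variable {m0 : MeasurableSpace Ω} {μ : Measure Ω} [IsProbabilityMeasure μ]
  {F : ℝ → MeasurableSpace Ω} {τ : ℕ → Ω → ℝ} {L U T : ℝ} {e : ℝ → Ω → ℝ} {l : ℝ → ℕ → ℝ}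

lemma EHyp.em0 (E : EHyp m0 F L U T e l) : Measurable (Function.uncurry e) := by
  refine E.em.mono ?_ le_rfl
  exact sup_le_sup le_rfl (MeasurableSpace.comap_mono E.FT)

lemma ind_nonneg (k : ℕ) (u : ℝ) (ω : Ω) : 0 ≤ ind τ k u ω := by
  unfold ind; split_ifs <;> simp

lemma ind_le (k : ℕ) (u : ℝ) (ω : Ω) : ind τ k u ω ≤ 1 := by
  unfold ind; split_ifs <;> simp

lemma ind_set_meas (J : JS μ F τ) (k : ℕ) :
    MeasurableSet {p : ℝ × Ω | τ k p.2 < p.1 ∧ p.1 ≤ τ (k + 1) p.2} :=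
  (measurableSet_lt ((J.mτ k).comp measurable_snd) measurable_fst).inter
    (measurableSet_le measurable_fst ((J.mτ (k + 1)).comp measurable_snd))

lemma ind_meas (J : JS μ F τ) (k : ℕ) : Measurable (Function.uncurry (ind τ k)) :=
  Measurable.ite (ind_set_meas J k) measurable_const measurable_const

lemma ind_meas' (J : JS μ F τ) (k : ℕ) (u : ℝ) : Measurable (ind τ k u) :=
  (ind_meas J k).comp measurable_prodMk_left

lemma ind_int (J : JS μ F τ) (k : ℕ) (u : ℝ) : Integrable (ind τ k u) μ :=
  Integrable.of_bound (ind_meas' J k u).aestronglyMeasurable 1 (Eventually.of_forall fun ω => by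
    rw [Real.norm_of_nonneg (ind_nonneg k u ω)]; exact ind_le k u ω)

lemma EHyp.me (E : EHyp m0 F L U T e l) (u : ℝ) : Measurable (e u) :=
  E.em0.comp measurable_prodMk_left

lemma EHyp.eb (E : EHyp m0 F L U T e l) (u : ℝ) (ω : Ω) : |e u ω| ≤ U := by
  rw [abs_of_nonneg (E.hL.le.trans (E.ege u ω))]; exact E.ele u ω

lemma EHyp.int_e (E : EHyp m0 F L U T e l) (u : ℝ) : Integrable (e u) μ :=
  Integrable.of_bound (E.me u).aestronglyMeasurable U (Eventually.of_forall fun ω => E.eb u ω)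

lemma EHyp.int_ie (E : EHyp m0 F L U T e l) (J : JS μ F τ) (k : ℕ) (u : ℝ) :
    Integrable (fun ω => ind τ k u ω * e u ω) μ :=
  (ind_int J k u).mul_bdd (c := U) (E.me u).aestronglyMeasurable
    (Eventually.of_forall fun ω => E.eb u ω)

lemma pk_nonneg (k : ℕ) (u : ℝ) : 0 ≤ pk μ τ k u := integral_nonneg fun ω => ind_nonneg k u ω

lemma EHyp.Ak_ge (E : EHyp m0 F L U T e l) (J : JS μ F τ) (k : ℕ) (u : ℝ) :
    L * pk μ τ k u ≤ Ak μ τ e k u := by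
  unfold pk Ak
  rw [← integral_const_mul]
  refine integral_mono ((ind_int J k u).const_mul _) (E.int_ie J k u) fun ω => ?_
  simp only
  rw [mul_comm]
  exact mul_le_mul_of_nonneg_left (E.ege u ω) (ind_nonneg k u ω)

lemma EHyp.Ak_nonneg (E : EHyp m0 F L U T e l) (J : JS μ F τ) (k : ℕ) (u : ℝ) :
    0 ≤ Ak μ τ e k u :=
  (mul_nonneg E.hL.le (pk_nonneg k u)).trans (E.Ak_ge J k u)

lemma EHyp.ratio_le (E : EHyp m0 F L U T e l) (J : JS μ F τ) (k : ℕ) (u : ℝ) :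
    pk μ τ k u / Ak μ τ e k u ≤ 1 / L := by
  have h := E.Ak_ge J k u
  have hL := E.hL
  rcases (E.Ak_nonneg J k u).eq_or_lt with h0 | h0
  · rw [← h0]; simp [hL.le]
  · rw [div_le_div_iff₀ h0 hL]; linarith

lemma EHyp.ak_nonneg (E : EHyp m0 F L U T e l) (J : JS μ F τ) (k : ℕ) (u : ℝ) :
    0 ≤ ak μ τ e l k u :=
  mul_nonneg (E.lge u k) (div_nonneg (pk_nonneg k u) (E.Ak_nonneg J k u))

lemma EHyp.U0 (E : EHyp m0 F L U T e l) : 0 < U := E.hL.trans_le E.hLU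

lemma EHyp.ak_le (E : EHyp m0 F L U T e l) (J : JS μ F τ) (k : ℕ) (u : ℝ) :
    ak μ τ e l k u ≤ U * (1 / L) :=
  mul_le_mul (E.lle u k) (E.ratio_le J k u)
    (div_nonneg (pk_nonneg k u) (E.Ak_nonneg J k u)) E.U0.le

lemma pk_meas (J : JS μ F τ) (k : ℕ) : Measurable (pk μ τ k) :=
  ((ind_meas J k).stronglyMeasurable.integral_prod_right).measurable

lemma EHyp.iem (E : EHyp m0 F L U T e l) (J : JS μ F τ) (k : ℕ) :
    Measurable (Function.uncurry fun u ω => ind τ k u ω * e u ω) :=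
  (ind_meas J k).mul E.em0

lemma EHyp.Ak_meas (E : EHyp m0 F L U T e l) (J : JS μ F τ) (k : ℕ) : Measurable (Ak μ τ e k) :=
  ((E.iem J k).stronglyMeasurable.integral_prod_right).measurable

lemma EHyp.ak_meas (E : EHyp m0 F L U T e l) (J : JS μ F τ) (k : ℕ) :
    Measurable (ak μ τ e l k) :=
  (E.lm k).mul ((pk_meas J k).div (E.Ak_meas J k))

/-- the intensity of the `k+1`-st jump -/
def kap {m0 : MeasurableSpace Ω} (μ : Measure Ω) (τ : ℕ → Ω → ℝ) (e : ℝ → Ω → ℝ) (l : ℝ → ℕ → ℝ)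
    (k : ℕ) (u : ℝ) (ω : Ω) : ℝ := ind τ k u ω * e u ω * ak μ τ e l k u

/-- the total intensity -/
def fh {m0 : MeasurableSpace Ω} (μ : Measure Ω) (τ : ℕ → Ω → ℝ) (e : ℝ → Ω → ℝ) (l : ℝ → ℕ → ℝ)
    (u : ℝ) (ω : Ω) : ℝ := e u ω * ak μ τ e l (countXminus τ u ω) u

lemma EHyp.fh_nonneg (E : EHyp m0 F L U T e l) (J : JS μ F τ) (u : ℝ) (ω : Ω) :
    0 ≤ fh μ τ e l u ω :=
  mul_nonneg (E.hL.le.trans (E.ege u ω)) (E.ak_nonneg J _ u)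

lemma EHyp.fh_le (E : EHyp m0 F L U T e l) (J : JS μ F τ) (u : ℝ) (ω : Ω) :
    fh μ τ e l u ω ≤ U * (U * (1 / L)) :=
  mul_le_mul (E.ele u ω) (E.ak_le J _ u) (E.ak_nonneg J _ u) E.U0.le

lemma EHyp.kap_nonneg (E : EHyp m0 F L U T e l) (J : JS μ F τ) (k : ℕ) (u : ℝ) (ω : Ω) :
    0 ≤ kap μ τ e l k u ω :=
  mul_nonneg (mul_nonneg (ind_nonneg k u ω) (E.hL.le.trans (E.ege u ω))) (E.ak_nonneg J _ u)

lemma EHyp.kap_abs (E : EHyp m0 F L U T e l) (J : JS μ F τ) (k : ℕ) (u : ℝ) (ω : Ω) :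
    |kap μ τ e l k u ω| ≤ U * (U * (1 / L)) := by
  rw [abs_of_nonneg (E.kap_nonneg J k u ω)]
  refine mul_le_mul ?_ (E.ak_le J _ u) (E.ak_nonneg J _ u) E.U0.le
  have := mul_le_mul (ind_le (τ := τ) k u ω) (E.ele u ω) (E.hL.le.trans (E.ege u ω)) zero_le_one
  linarith

lemma EHyp.kap_meas (E : EHyp m0 F L U T e l) (J : JS μ F τ) (k : ℕ) :
    Measurable (Function.uncurry (kap μ τ e l k)) :=
  (E.iem J k).mul ((E.ak_meas J k).comp measurable_fst)

lemma EHyp.kap_G (E : EHyp m0 F L U T e l) (J : JS μ F τ) (k : ℕ) {u : ℝ} (hu : 0 < u) (huT : u ≤ T) :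
    Measurable[jumpFiltInf F τ u] (kap μ τ e l k u) := by
  have h1 : Measurable[jumpFiltInf F τ u] (e u) :=
    (E.ead u ⟨hu.le, huT⟩).mono (F_le_jumpI J.Fmono hu.le) le_rfl
  have h2 : Measurable[jumpFiltInf F τ u] (ind τ k u) := by
    refine Measurable.ite ?_ measurable_const measurable_const
    have := @MeasurableSet.diff _ (jumpFiltInf F τ u) _ _ (J.mGlt k hu) (J.mGlt (k + 1) hu)
    convert this using 1
    ext ω
    simp
  exact (h2.mul h1).mul_const _

lemma kap_eq {ω : Ω} (h : GP τ ω) (k : ℕ) {u : ℝ} (hu : 0 < u) :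
    kap μ τ e l k u ω = if countXminus τ u ω = k then fh μ τ e l u ω else 0 := by
  unfold kap fh ind
  by_cases hc : countXminus τ u ω = k
  · rw [if_pos hc, if_pos ((h.countXm_eq hu k).1 hc), hc]; ring
  · rw [if_neg hc, if_neg (fun h' => hc ((h.countXm_eq hu k).2 h'))]; ring

lemma condExp_atom {N : Ω → ℕ} (hN : Measurable N) {f : Ω → ℝ} (hf : Integrable f μ) (k : ℕ)
    (hp : μ.real (N ⁻¹' {k}) ≠ 0) (ω : Ω) (hω : N ω = k) :
    (μ[f | MeasurableSpace.comap N inferInstance]) ω =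
      (∫ ω in N ⁻¹' {k}, f ω ∂μ) / μ.real (N ⁻¹' {k}) := by
  have hm : MeasurableSpace.comap N inferInstance ≤ m0 := hN.comap_le
  have hsm := (stronglyMeasurable_condExp (μ := μ) (f := f)
    (m := MeasurableSpace.comap N inferInstance)).measurable
  have hft := hsm.factorsThrough
  have hs := setIntegral_condExp hm hf (s := N ⁻¹' {k}) ⟨{k}, measurableSet_singleton _, rfl⟩
  rw [← hs, eq_div_iff hp, mul_comm]
  rw [← smul_eq_mul, ← setIntegral_const]
  refine setIntegral_congr_fun (hN (measurableSet_singleton k)) fun x hx => ?_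
  exact hft (by rw [hω]; exact hx.symm)

lemma integrand_eq (E : EHyp m0 F L U T e l) (J : JS μ F τ) {η : ℝ → Ω → ℝ} {lam : ℝ → ℕ → ℝ}
    (hη1 : ∀ᵐ ω ∂μ, ∀ᵐ u ∂(volume.restrict (Ioc 0 T)), η u ω = e u ω)
    (hη2 : ∀ᵐ u ∂(volume.restrict (Ioc 0 T)), ∀ᵐ ω ∂μ, η u ω = e u ω)
    (hl : ∀ k, ∀ᵐ u ∂(volume.restrict (Ioc 0 T)), lam u k = l u k) :
    ∀ᵐ ω ∂μ, ∀ᵐ u ∂(volume.restrict (Ioc 0 T)),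
      η u ω / (μ[η u | MeasurableSpace.comap (countXminus τ u) inferInstance]) ω *
          lam u (countXminus τ u ω) = fh μ τ e l u ω := by
  have hbad : ∀ k, ∀ᵐ ω ∂μ, ∀ᵐ u ∂(volume.restrict (Ioc 0 T)),
      ¬ ((τ k ω < u ∧ u ≤ τ (k + 1) ω) ∧ pk μ τ k u = 0) := by
    intro k
    have hms : MeasurableSet {x : Ω × ℝ |
        ¬ ((τ k x.1 < x.2 ∧ x.2 ≤ τ (k + 1) x.1) ∧ pk μ τ k x.2 = 0)} := by
      refine MeasurableSet.compl (MeasurableSet.inter ?_ ?_)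
      · exact measurable_swap (ind_set_meas J k)
      · exact ((pk_meas (μ := μ) J k).comp measurable_snd) (measurableSet_singleton 0)
    refine (Measure.ae_ae_comm hms).2 (Eventually.of_forall fun u => ?_)
    by_cases hp : pk μ τ k u = 0
    · have h0 : ind τ k u =ᵐ[μ] 0 :=
        (integral_eq_zero_iff_of_nonneg (ind_nonneg k u) (ind_int J k u)).1 hp
      filter_upwards [h0] with ω hω hc
      simp [ind, hc.1] at hω
    · exact Eventually.of_forall fun ω hc => hp hc.2
  have hl' := ae_all_iff.2 hl
  filter_upwards [J.good, ae_all_iff.2 hbad, hη1] with ω hg hb h1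
  filter_upwards [h1, ae_all_iff.2 hb, hη2, hl', ae_restrict_mem measurableSet_Ioc] with
    u hu1 hub hu2 hul hmem
  set N := countXminus τ u with hN
  set k := N ω with hk
  have hNm : Measurable N := J.mN' hmem.1
  have hind : ∀ᵐ x ∂μ, ind τ k u x = (N ⁻¹' {k}).indicator 1 x := by
    filter_upwards [J.good] with x hx
    have := hx.countXm_eq hmem.1 k
    unfold ind
    by_cases hc : N x = k
    · rw [if_pos (this.1 hc), indicator_of_mem (by exact hc)]; rfl
    · rw [if_neg (fun h => hc (this.2 h)), indicator_of_notMem (by exact hc)]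
  have hNk : MeasurableSet (N ⁻¹' {k}) := hNm (measurableSet_singleton k)
  have hpk : pk μ τ k u = μ.real (N ⁻¹' {k}) := by
    unfold pk
    rw [integral_congr_ae hind, integral_indicator_one hNk]
  have hAk : Ak μ τ e k u = ∫ x in N ⁻¹' {k}, η u x ∂μ := by
    unfold Ak
    rw [← integral_indicator hNk]
    refine integral_congr_ae ?_
    filter_upwards [hind, hu2] with x hx h2
    rw [hx]
    by_cases hc : x ∈ N ⁻¹' {k}
    · simp only [indicator_of_mem hc, h2]; simp
    · simp only [indicator_of_notMem hc]; simp
  have hp : pk μ τ k u ≠ 0 := fun hc => hub k ⟨(hg.countXm_eq hmem.1 k).1 rfl, hc⟩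
  have hηi : Integrable (η u) μ := (E.int_e u).congr (by
    filter_upwards [hu2] with x hx; exact hx.symm)
  rw [condExp_atom hNm hηi k (by rwa [← hpk]) ω rfl, ← hAk, ← hpk, hul k, hu1]
  unfold fh ak
  rw [div_div_eq_mul_div, ← hN, ← hk]
  ring

end ESec

/-- grid on `[s,t]` -/
def gv (s t : ℝ) (n i : ℕ) : ℝ := s + gr (t - s) n i

lemma gv_zero (s t : ℝ) (n : ℕ) : gv s t n 0 = s := by simp [gv, gr_zero]

lemma gv_last (s t : ℝ) (n : ℕ) : gv s t n (n + 1) = t := by simp [gv, gr_last]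

lemma gv_sub (s t : ℝ) (n i : ℕ) : gv s t n (i + 1) - gv s t n i = (t - s) / (n + 1) := by
  unfold gv; rw [← gr_sub]; ring

lemma gv_mono {s t : ℝ} (h : s ≤ t) (n i : ℕ) : gv s t n i ≤ gv s t n (i + 1) := by
  have := gr_mono (sub_nonneg.2 h) n i
  unfold gv; linarith

lemma gv_ge {s t : ℝ} (h : s ≤ t) (n i : ℕ) : s ≤ gv s t n i := by
  have := gr_nonneg (sub_nonneg.2 h) n i
  unfold gv; linarith

lemma gv_le {s t : ℝ} (h : s ≤ t) (n i : ℕ) (hi : i ≤ n + 1) : gv s t n i ≤ t := by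
  have := gr_le (sub_nonneg.2 h) n i hi
  unfold gv; linarith

lemma Ioc_int_sub {f : ℝ → ℝ} {s t a b : ℝ} (hf : IntegrableOn f (Ioc s t)) (h1 : s ≤ a) (h2 : a ≤ b)
    (h3 : b ≤ t) : ∫ u in Ioc a b, f u = (∫ u in Ioc s b, f u) - ∫ u in Ioc s a, f u := by
  have : ∫ u in Ioc s b, f u = (∫ u in Ioc s a, f u) + ∫ u in Ioc a b, f u := by
    rw [← setIntegral_union (Ioc_disjoint_Ioc_of_le le_rfl) measurableSet_Ioc
      (hf.mono_set (Ioc_subset_Ioc_right (h2.trans h3))) (hf.mono_set (Ioc_subset_Ioc h1 h3)),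
      Ioc_union_Ioc_eq_Ioc h1 h2]
  linarith

lemma gv_int_sum {f : ℝ → ℝ} {s t : ℝ} (hst : s ≤ t) (hf : IntegrableOn f (Ioc s t)) (n : ℕ) :
    ∑ i ∈ Finset.range (n + 1), ∫ u in Ioc (gv s t n i) (gv s t n (i + 1)), f u =
      ∫ u in Ioc s t, f u := by
  have h := Finset.sum_range_sub (fun i => ∫ u in Ioc s (gv s t n i), f u) (n + 1)
  rw [gv_last, gv_zero] at h
  simp only [Ioc_self, Measure.restrict_empty, integral_zero_measure, sub_zero] at h
  rw [← h]
  refine Finset.sum_congr rfl fun i hi => ?_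
  have hi := Finset.mem_range.1 hi
  exact Ioc_int_sub hf (gv_ge hst n i) (gv_mono hst n i) (gv_le hst n _ hi)

lemma gv_Jn_sum (σ : Ω → ℝ) (ω : Ω) {s t : ℝ} (hst : s ≤ t) (n : ℕ) :
    ∑ i ∈ Finset.range (n + 1), Jn σ (gv s t n i) (gv s t n (i + 1)) ω = Jn σ s t ω := by
  rw [Jn_eq s t hst]
  simp only [fun i => Jn_eq (σ := σ) _ _ (gv_mono hst n i) ω]
  rw [Finset.sum_range_sub' (fun i => if gv s t n i < σ ω then (1:ℝ) else 0), gv_zero, gv_last]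

lemma Jn_nonneg (σ : Ω → ℝ) (s t : ℝ) (ω : Ω) : 0 ≤ Jn σ s t ω := by
  unfold Jn; split_ifs <;> simp

lemma Jn_le (σ : Ω → ℝ) (s t : ℝ) (ω : Ω) : Jn σ s t ω ≤ 1 := by
  unfold Jn; split_ifs <;> simp

section Pathwise

variable {τ : ℕ → Ω → ℝ} {ω : Ω} {k : ℕ} {s t C : ℝ} {f g : ℝ → ℝ}

/-- indicator of being in state `k` -/
def st (τ : ℕ → Ω → ℝ) (k : ℕ) (u : ℝ) (ω : Ω) : ℝ := if countX τ u ω = k then 1 else 0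

lemma st_nonneg (u : ℝ) (ω : Ω) : 0 ≤ st τ k u ω := by unfold st; split_ifs <;> simp

lemma st_le (u : ℝ) (ω : Ω) : st τ k u ω ≤ 1 := by unfold st; split_ifs <;> simp

lemma st_incr (h : GP τ ω) (hs : 0 ≤ s) (hst : s ≤ t) (h1 : t - s < τ (k + 1) ω - τ k ω)
    (h2 : t - s < τ (k + 2) ω - τ (k + 1) ω) :
    st τ k s ω * ((countX τ t ω : ℝ) - countX τ s ω) = Jn (τ (k + 1)) s t ω := by
  have ht := hs.trans hst
  unfold st Jn
  by_cases hX : countX τ s ω = k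
  · rw [if_pos hX]
    have hX' := (h.countX_eq hs k).1 hX
    by_cases hc : τ (k + 1) ω ≤ t
    · have : countX τ t ω = k + 1 := (h.countX_eq ht (k + 1)).2 ⟨hc, by
        have : k + 1 + 1 = k + 2 := rfl
        rw [this]; linarith [hX'.2]⟩
      rw [if_pos ⟨hX'.2, hc⟩, this, hX]; push_cast; ring
    · have : countX τ t ω = k := (h.countX_eq ht k).2 ⟨hX'.1.trans hst, not_le.1 hc⟩
      rw [if_neg (fun hh => hc hh.2), this, hX]; ring
  · rw [if_neg hX, if_neg, zero_mul]
    rintro ⟨a, b⟩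
    refine hX ((h.countX_eq hs k).2 ⟨?_, a⟩)
    linarith

lemma int_bd (hst : s ≤ t) (hf0 : ∀ u, 0 ≤ f u) (hfC : ∀ u, f u ≤ C) :
    |∫ u in Ioc s t, f u| ≤ C * (t - s) := by
  have := norm_setIntegral_le_of_norm_le_const (μ := volume) (s := Ioc s t) (f := f)
      (C := C) (by simp) (fun u _ => by rw [Real.norm_of_nonneg (hf0 u)]; exact hfC u)
  simpa [Measure.real, hst] using this

lemma st_int (h : GP τ ω) (hs : 0 ≤ s) (hst : s ≤ t) (hf0 : ∀ u, 0 ≤ f u) (hfC : ∀ u, f u ≤ C)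
    (hfi : IntegrableOn f (Ioc s t)) (hgi : IntegrableOn g (Ioc s t))
    (hg : ∀ u, 0 < u → g u = if countXminus τ u ω = k then f u else 0) :
    |st τ k s ω * (∫ u in Ioc s t, f u) - ∫ u in Ioc s t, g u| ≤
      C * (t - s) * (Jn (τ k) s t ω + Jn (τ (k + 1)) s t ω) := by
  have hC : 0 ≤ C := (hf0 0).trans (hfC 0)
  have hCt : 0 ≤ C * (t - s) := mul_nonneg hC (sub_nonneg.2 hst)
  by_cases hJ : (s < τ k ω ∧ τ k ω ≤ t) ∨ (s < τ (k + 1) ω ∧ τ (k + 1) ω ≤ t)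
  · have hJ1 : 1 ≤ Jn (τ k) s t ω + Jn (τ (k + 1)) s t ω := by
      rcases hJ with hJ | hJ
      · have : Jn (τ k) s t ω = 1 := if_pos hJ
        linarith [Jn_nonneg (τ (k + 1)) s t ω]
      · have : Jn (τ (k + 1)) s t ω = 1 := if_pos hJ
        linarith [Jn_nonneg (τ k) s t ω]
    have h1 : |st τ k s ω * (∫ u in Ioc s t, f u) - ∫ u in Ioc s t, g u| ≤ C * (t - s) := by
      rw [← integral_const_mul, ← integral_sub (hfi.const_mul _) hgi]
      have := norm_setIntegral_le_of_norm_le_const (μ := volume) (s := Ioc s t)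
        (f := fun u => st τ k s ω * f u - g u)
        (C := C) (by simp) (fun u hu => by
          rw [hg u (lt_of_le_of_lt hs hu.1), Real.norm_eq_abs]
          unfold st
          have a1 := hf0 u
          have a2 := hfC u
          split_ifs <;> simp only [one_mul, zero_mul, sub_self, sub_zero, zero_sub, abs_neg, abs_zero,
            abs_of_nonneg a1] <;> linarith)
      simpa [Measure.real, hst] using this
    refine h1.trans ?_
    nlinarith
  · have hn := not_or.1 hJ
    have e : st τ k s ω * (∫ u in Ioc s t, f u) - ∫ u in Ioc s t, g u = 0 := by
      rw [← integral_const_mul, sub_eq_zero]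
      refine setIntegral_congr_fun measurableSet_Ioc fun u hu => ?_
      have hu0 := lt_of_le_of_lt hs hu.1
      simp only [hg u hu0]
      unfold st
      have : countX τ s ω = k ↔ countXminus τ u ω = k := by
        rw [h.countX_eq hs, h.countXm_eq hu0]
        constructor
        · rintro ⟨a, b⟩
          refine ⟨lt_of_le_of_lt a hu.1, ?_⟩
          by_contra hc
          exact hn.2 ⟨b, (not_le.1 hc).le.trans hu.2⟩
        · rintro ⟨a, b⟩
          refine ⟨?_, lt_of_lt_of_le hu.1 b⟩
          by_contra hc
          exact hn.1 ⟨not_le.1 hc, a.le.trans hu.2⟩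
      by_cases hc : countX τ s ω = k
      · rw [if_pos hc, if_pos (this.1 hc), one_mul]
      · rw [if_neg hc, if_neg (fun hh => hc (this.2 hh)), zero_mul]
    rw [e, abs_zero]
    exact mul_nonneg hCt (add_nonneg (Jn_nonneg _ _ _ _) (Jn_nonneg _ _ _ _))

/-- discretised stochastic integral -/
def dsum (τ : ℕ → Ω → ℝ) (k : ℕ) (f : ℝ → ℝ) (s t : ℝ) (n : ℕ) (ω : Ω) : ℝ :=
  ∑ i ∈ Finset.range (n + 1), st τ k (gv s t n i) ω *
    ((countX τ (gv s t n (i + 1)) ω : ℝ) - countX τ (gv s t n i) ω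
      - ∫ u in Ioc (gv s t n i) (gv s t n (i + 1)), f u)

lemma path_conv (h : GP τ ω) (hs : 0 ≤ s) (hst : s ≤ t) (hf0 : ∀ u, 0 ≤ f u) (hfC : ∀ u, f u ≤ C)
    (hfi : IntegrableOn f (Ioc s t)) (hgi : IntegrableOn g (Ioc s t))
    (hg : ∀ u, 0 < u → g u = if countXminus τ u ω = k then f u else 0) :
    Tendsto (fun n => dsum τ k f s t n ω) atTop
      (𝓝 (Jn (τ (k + 1)) s t ω - ∫ u in Ioc s t, g u)) := by
  have hC : 0 ≤ C := (hf0 0).trans (hfC 0)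
  have hgap : 0 < min (τ (k + 1) ω - τ k ω) (τ (k + 2) ω - τ (k + 1) ω) :=
    lt_min (sub_pos.2 (h.sm (Nat.lt_succ_self k))) (sub_pos.2 (h.sm (Nat.lt_succ_self (k + 1))))
  have hev := (mesh_tendsto (t - s)).eventually (gt_mem_nhds hgap)
  rw [tendsto_iff_norm_sub_tendsto_zero]
  have hlim : Tendsto (fun n : ℕ => 2 * C * ((t - s) / ((n:ℝ) + 1))) atTop (𝓝 0) := by
    simpa using (mesh_tendsto (t - s)).const_mul (2 * C)
  refine squeeze_zero' (Eventually.of_forall fun n => norm_nonneg _) ?_ hlim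
  filter_upwards [hev] with n hn
  have hS : ∑ i ∈ Finset.range (n + 1), st τ k (gv s t n i) ω *
      ((countX τ (gv s t n (i + 1)) ω : ℝ) - countX τ (gv s t n i) ω) = Jn (τ (k + 1)) s t ω := by
    rw [← gv_Jn_sum _ ω hst n]
    refine Finset.sum_congr rfl fun i hi => ?_
    refine st_incr h (hs.trans (gv_ge hst n i)) (gv_mono hst n i) ?_ ?_
    · rw [gv_sub]; exact hn.trans_le (min_le_left _ _)
    · rw [gv_sub]; exact hn.trans_le (min_le_right _ _)
  have hD : dsum τ k f s t n ω - (Jn (τ (k + 1)) s t ω - ∫ u in Ioc s t, g u) =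
      - ∑ i ∈ Finset.range (n + 1), (st τ k (gv s t n i) ω *
        (∫ u in Ioc (gv s t n i) (gv s t n (i + 1)), f u) -
          ∫ u in Ioc (gv s t n i) (gv s t n (i + 1)), g u) := by
    unfold dsum
    simp only [mul_sub, Finset.sum_sub_distrib] at hS ⊢
    rw [gv_int_sum hst hgi n, ← hS]
    ring
  rw [hD, norm_neg]
  refine (norm_sum_le _ _).trans ?_
  have : ∀ i ∈ Finset.range (n + 1), ‖st τ k (gv s t n i) ω *
        (∫ u in Ioc (gv s t n i) (gv s t n (i + 1)), f u) -
          ∫ u in Ioc (gv s t n i) (gv s t n (i + 1)), g u‖ ≤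
      C * ((t - s) / (n + 1)) * (Jn (τ k) (gv s t n i) (gv s t n (i + 1)) ω
        + Jn (τ (k + 1)) (gv s t n i) (gv s t n (i + 1)) ω) := by
    intro i hi
    have hi := Finset.mem_range.1 hi
    have hsub : Ioc (gv s t n i) (gv s t n (i + 1)) ⊆ Ioc s t :=
      Ioc_subset_Ioc (gv_ge hst n i) (gv_le hst n _ hi)
    rw [← gv_sub s t n i]
    exact st_int h (hs.trans (gv_ge hst n i)) (gv_mono hst n i) hf0 hfC (hfi.mono_set hsub)
      (hgi.mono_set hsub) hg
  refine (Finset.sum_le_sum this).trans ?_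
  rw [← Finset.mul_sum, Finset.sum_add_distrib, gv_Jn_sum _ ω hst, gv_Jn_sum _ ω hst]
  have a := Jn_le (τ k) s t ω
  have b := Jn_le (τ (k + 1)) s t ω
  have c : 0 ≤ C * ((t - s) / ((n:ℝ) + 1)) :=
    mul_nonneg hC (div_nonneg (sub_nonneg.2 hst) (by positivity))
  nlinarith

lemma path_bound (h : GP τ ω) (hs : 0 ≤ s) (hst : s ≤ t) (hf0 : ∀ u, 0 ≤ f u) (hfC : ∀ u, f u ≤ C)
    (hfi : IntegrableOn f (Ioc s t)) (n : ℕ) :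
    |dsum τ k f s t n ω| ≤ countX τ t ω + C * (t - s) := by
  have h1 : |dsum τ k f s t n ω| ≤ ∑ i ∈ Finset.range (n + 1),
      (((countX τ (gv s t n (i + 1)) ω : ℝ) - countX τ (gv s t n i) ω)
        + ∫ u in Ioc (gv s t n i) (gv s t n (i + 1)), f u) := by
    refine (Finset.abs_sum_le_sum_abs _ _).trans (Finset.sum_le_sum fun i _ => ?_)
    have a1 : (countX τ (gv s t n i) ω : ℝ) ≤ countX τ (gv s t n (i + 1)) ω := by
      exact_mod_cast h.countX_mono (hs.trans (gv_ge hst n i)) (gv_mono hst n i)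
    have a2 : 0 ≤ ∫ u in Ioc (gv s t n i) (gv s t n (i + 1)), f u :=
      integral_nonneg hf0
    rw [abs_mul, abs_of_nonneg (st_nonneg _ ω)]
    have a3 := abs_sub ((countX τ (gv s t n (i + 1)) ω : ℝ) - countX τ (gv s t n i) ω)
      (∫ u in Ioc (gv s t n i) (gv s t n (i + 1)), f u)
    rw [abs_of_nonneg a2, abs_of_nonneg (sub_nonneg.2 a1)] at a3
    have a4 := mul_le_mul_of_nonneg_right (st_le (τ := τ) (k := k) (gv s t n i) ω)
      (abs_nonneg ((countX τ (gv s t n (i + 1)) ω : ℝ) - countX τ (gv s t n i) ω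
      - ∫ u in Ioc (gv s t n i) (gv s t n (i + 1)), f u))
    linarith
  refine h1.trans ?_
  rw [Finset.sum_add_distrib, gv_int_sum hst hfi,
    Finset.sum_range_sub (fun i => (countX τ (gv s t n i) ω : ℝ)), gv_last, gv_zero]
  have := (le_abs_self _).trans (int_bd hst hf0 hfC)
  have h0 : (0:ℝ) ≤ countX τ s ω := Nat.cast_nonneg _
  linarith

end Pathwise

section MG

variable {m0 : MeasurableSpace Ω} {μ : Measure Ω} [IsProbabilityMeasure μ]
  {F : ℝ → MeasurableSpace Ω} {τ : ℕ → Ω → ℝ} {L U T : ℝ} {e : ℝ → Ω → ℝ} {l : ℝ → ℕ → ℝ}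

lemma GP.N_meas {ω : Ω} (h : GP τ ω) : Measurable fun u => countXminus τ u ω := by
  refine Monotone.measurable fun u v huv => ?_
  rcases le_or_gt u 0 with hu | hu
  · have : countXminus τ u ω = 0 := by
      unfold countXminus
      have : IsEmpty {k : ℕ // τ (k + 1) ω < u} :=
        ⟨fun x => absurd (h.nonneg (x.1 + 1)) (by have := x.2; linarith)⟩
      exact Nat.card_of_isEmpty
    simp only [this]; exact Nat.zero_le _
  · exact (h.le_countXm (hu.trans_le huv) _).2 (((h.le_countXm hu _).1 le_rfl).trans_le huv)

lemma EHyp.fh_int (E : EHyp m0 F L U T e l) (J : JS μ F τ) {ω : Ω} (h : GP τ ω) (s t : ℝ) :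
    IntegrableOn (fun u => fh μ τ e l u ω) (Ioc s t) := by
  have h1 : Measurable (fun u => e u ω) := E.em0.comp measurable_prodMk_right
  have h2 : Measurable (fun p : ℕ × ℝ => ak μ τ e l p.1 p.2) :=
    measurable_from_prod_countable_right fun k => E.ak_meas J k
  have h3 : Measurable (fun u => fh μ τ e l u ω) :=
    h1.mul (h2.comp (h.N_meas.prodMk measurable_id))
  refine Integrable.of_bound h3.aestronglyMeasurable (U * (U * (1 / L)))
    (Eventually.of_forall fun u => ?_)
  rw [Real.norm_of_nonneg (E.fh_nonneg J u ω)]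
  exact E.fh_le J u ω

lemma EHyp.kap_int (E : EHyp m0 F L U T e l) (J : JS μ F τ) (k : ℕ) (ω : Ω) (s t : ℝ) :
    IntegrableOn (fun u => kap μ τ e l k u ω) (Ioc s t) :=
  Integrable.of_bound ((E.kap_meas J k).comp measurable_prodMk_right).aestronglyMeasurable
    (U * (U * (1 / L))) (Eventually.of_forall fun u => E.kap_abs J k u ω)

lemma mg_main (E : EHyp m0 F L U T e l) (J : JS μ F τ) {M : ℝ → Ω → ℝ}
    (hM : IsMartingale μ (jumpFiltInf F τ) M)
    (hMe : ∀ t, 0 ≤ t → t ≤ T →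
      ∀ᵐ ω ∂μ, M t ω = (countX τ t ω : ℝ) - ∫ u in Ioc 0 t, fh μ τ e l u ω)
    (k : ℕ) {s t : ℝ} (hs : 0 ≤ s) (hst : s ≤ t) (htT : t ≤ T) {B : Set Ω}
    (hB : MeasurableSet[jumpFiltInf F τ s] B) :
    ∫ ω in B, Jn (τ (k + 1)) s t ω ∂μ = ∫ u in Ioc s t, ∫ ω in B, kap μ τ e l k u ω ∂μ := by
  have ht := hs.trans hst
  have hB0 := J.gG.le s hs _ hB
  set C := U * (U * (1 / L)) with hC
  have hXi : Integrable (fun ω => (countX τ t ω : ℝ)) μ := by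
    have hm : Measurable (fun ω => (countX τ t ω : ℝ)) := measurable_from_top.comp (J.mX' ht)
    refine Integrable.mono' ((hM.1 t ht).abs.add (integrable_const (C * (t - 0))))
      hm.aestronglyMeasurable ?_
    filter_upwards [hMe t ht htT] with ω hω
    have := int_bd (f := fun u => fh μ τ e l u ω) ht (fun u => E.fh_nonneg J u ω)
      (fun u => E.fh_le J u ω)
    have e1 : (countX τ t ω : ℝ) = M t ω + ∫ u in Ioc 0 t, fh μ τ e l u ω := by linarith
    rw [e1, Real.norm_eq_abs]
    exact (abs_add_le _ _).trans (add_le_add le_rfl this)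
  -- discretised martingale transform
  set Dn : ℕ → Ω → ℝ := fun n ω => ∑ i ∈ Finset.range (n + 1),
    st τ k (gv s t n i) ω * (M (gv s t n (i + 1)) ω - M (gv s t n i) ω) with hDn
  have hv0 : ∀ n i, 0 ≤ gv s t n i := fun n i => hs.trans (gv_ge hst n i)
  have hMi : ∀ n i, Integrable (fun ω => M (gv s t n (i + 1)) ω - M (gv s t n i) ω) μ :=
    fun n i => (hM.1 _ (hv0 n _)).sub (hM.1 _ (hv0 n _))
  have hstm : ∀ n i, Measurable (st τ k (gv s t n i)) := fun n i =>
    Measurable.ite (J.gG.le _ (hv0 n i) _ (J.mX (hv0 n i) k)) measurable_const measurable_const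
  have hti : ∀ n i, Integrable (fun ω => st τ k (gv s t n i) ω *
      (M (gv s t n (i + 1)) ω - M (gv s t n i) ω)) μ := by
    intro n i
    refine (hMi n i).bdd_mul (c := 1) (hstm n i).aestronglyMeasurable
      (Eventually.of_forall fun ω => ?_)
    rw [Real.norm_of_nonneg (st_nonneg _ ω)]; exact st_le _ ω
  have hz : ∀ n, ∫ ω in B, Dn n ω ∂μ = 0 := by
    intro n
    rw [integral_finsetSum _ fun i _ => (hti n i).integrableOn]
    refine Finset.sum_eq_zero fun i _ => ?_
    set v := gv s t n i with hv
    set w := gv s t n (i + 1) with hw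
    have hvw : v ≤ w := gv_mono hst n i
    have hv0' : 0 ≤ v := hv0 n i
    set S := {ω | countX τ v ω = k} with hS
    have hSm : MeasurableSet[jumpFiltInf F τ v] S := J.mX hv0' k
    have hBS : MeasurableSet[jumpFiltInf F τ v] (B ∩ S) :=
      @MeasurableSet.inter _ (jumpFiltInf F τ v) _ _ (J.gG.mono s v hs (gv_ge hst n i) _ hB) hSm
    have e1 : ∀ ω, st τ k v ω * (M w ω - M v ω) = S.indicator (fun ω => M w ω - M v ω) ω := by
      intro ω
      unfold st
      by_cases hc : countX τ v ω = k
      · rw [if_pos hc, indicator_of_mem (by exact hc), one_mul]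
      · rw [if_neg hc, indicator_of_notMem (by exact hc), zero_mul]
    simp only [e1]
    rw [setIntegral_indicator (J.gG.le v hv0' _ hSm),
      integral_sub (hM.1 _ (hv0 n _)).integrableOn (hM.1 _ (hv0 n _)).integrableOn,
      ← setIntegral_condExp (J.gG.le v hv0') (hM.1 w (hv0 n _)) hBS, sub_eq_zero]
    refine integral_congr_ae (ae_restrict_of_ae ?_)
    exact hM.2.2 v w hv0' hvw
  have hDe : ∀ᵐ ω ∂μ, ∀ n, Dn n ω = dsum τ k (fun u => fh μ τ e l u ω) s t n ω := by
    have hall : ∀ᵐ ω ∂μ, ∀ n i : ℕ, i ≤ n + 1 → M (gv s t n i) ω =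
        (countX τ (gv s t n i) ω : ℝ) - ∫ u in Ioc 0 (gv s t n i), fh μ τ e l u ω := by
      rw [ae_all_iff]; intro n; rw [ae_all_iff]; intro i
      by_cases hi : i ≤ n + 1
      · filter_upwards [hMe _ (hv0 n i) ((gv_le hst n i hi).trans htT)] with ω hω _
        exact hω
      · exact Eventually.of_forall fun ω hc => absurd hc hi
    filter_upwards [hall, J.good] with ω hω hg n
    simp only [hDn]
    unfold dsum
    refine Finset.sum_congr rfl fun i hi => ?_
    have hi := Finset.mem_range.1 hi
    rw [hω n i hi.le, hω n (i + 1) hi,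
      Ioc_int_sub (E.fh_int J hg 0 t) (hv0 n i) (gv_mono hst n i) (gv_le hst n _ hi)]
    ring
  have hlim : Tendsto (fun n => ∫ ω in B, Dn n ω ∂μ) atTop
      (𝓝 (∫ ω in B, (Jn (τ (k + 1)) s t ω - ∫ u in Ioc s t, kap μ τ e l k u ω) ∂μ)) := by
    refine tendsto_integral_of_dominated_convergence
      (fun ω => (countX τ t ω : ℝ) + C * (t - s)) ?_ ?_ ?_ ?_
    · intro n
      exact (integrable_finsetSum _ fun i _ => (hti n i)).1.restrict
    · exact (hXi.add (integrable_const _)).integrableOn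
    · intro n
      refine ae_restrict_of_ae ?_
      filter_upwards [hDe, J.good] with ω hω hg
      rw [hω n, Real.norm_eq_abs]
      exact path_bound hg hs hst (fun u => E.fh_nonneg J u ω) (fun u => E.fh_le J u ω)
        (E.fh_int J hg s t) n
    · refine ae_restrict_of_ae ?_
      filter_upwards [hDe, J.good] with ω hω hg
      simp only [hω]
      exact path_conv hg hs hst (fun u => E.fh_nonneg J u ω) (fun u => E.fh_le J u ω)
        (E.fh_int J hg s t) (E.kap_int J k ω s t) (fun u hu => kap_eq hg k hu)
  simp only [hz] at hlim
  have h0 := tendsto_nhds_unique hlim tendsto_const_nhds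
  have hJi : Integrable (Jn (τ (k + 1)) s t) μ := by
    refine Integrable.of_bound (C := 1) (Measurable.aestronglyMeasurable ?_)
      (Eventually.of_forall fun ω => ?_)
    · exact Measurable.ite ((measurableSet_lt measurable_const (J.mτ (k + 1))).inter
        (measurableSet_le (J.mτ (k + 1)) measurable_const)) measurable_const measurable_const
    · rw [Real.norm_of_nonneg (Jn_nonneg _ _ _ ω)]; exact Jn_le _ _ _ ω
  have hk : Integrable (fun ω => ∫ u in Ioc s t, kap μ τ e l k u ω) μ := by
    have := (fub_int (μ := μ) (E.kap_meas J k) (E.kap_abs J k) s t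
      (integrable_const (1:ℝ))).integral_prod_left
    simpa using this
  rw [integral_sub hJi.integrableOn hk.integrableOn, sub_eq_zero] at h0
  rw [h0]
  have := fub (μ := μ) (E.kap_meas J k) (E.kap_abs J k) s t (ζ := B.indicator 1)
      ((integrable_const (1:ℝ)).indicator hB0)
  have e1 : ∀ g : Ω → ℝ, ∫ ω in B, g ω ∂μ = ∫ ω, B.indicator 1 ω * g ω ∂μ := by
    intro g
    rw [← integral_indicator hB0]
    refine integral_congr_ae (Eventually.of_forall fun ω => ?_)
    by_cases h : ω ∈ B <;> simp [h]
  simp only [e1]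
  exact this

end MG

section S7
variable {m0 : MeasurableSpace Ω} {μ : Measure Ω} [IsProbabilityMeasure μ]
  {F : ℝ → MeasurableSpace Ω} {τ : ℕ → Ω → ℝ} {L U T : ℝ}

lemma mk_E (hF : IsFiltration m0 F) (hL : 0 < L) (hLU : L < U) (hT : 0 < T)
    {η : ℝ → Ω → ℝ} (hη : ProgMeas F η) {lam : ℝ → ℕ → ℝ}
    (hlam_meas : ∀ x : ℕ, Measurable (fun t => lam t x)) :
    EHyp m0 F L U T (eh L U hT.le η) (fun s k => clip L U (lam s k)) where
  hT := hT
  hL := hL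
  hLU := hLU.le
  FT := hF.2 T
  em := eh_meas hη
  ead s hs := eh_adapted hη hs
  ege s ω := eh_ge s ω
  ele s ω := eh_le hLU.le s ω
  lm k := (clip_meas L U).comp (hlam_meas k)
  lge s k := hL.le.trans (clip_ge _ _ _)
  lle s k := clip_le hLU.le _

lemma eta_ae (hT : 0 < T) {η : ℝ → Ω → ℝ}
    (hη_bdd : ∀ᵐ p ∂(μ.prod (volume.restrict (Set.Ici (0:ℝ)))),
      L ≤ η p.2 p.1 ∧ η p.2 p.1 ≤ U) :
    (∀ᵐ ω ∂μ, ∀ᵐ u ∂(volume.restrict (Ioc 0 T)), η u ω = eh L U hT.le η u ω) ∧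
    (∀ᵐ u ∂(volume.restrict (Ioc 0 T)), ∀ᵐ ω ∂μ, η u ω = eh L U hT.le η u ω) := by
  have hsub : Ioc 0 T ⊆ Ici (0:ℝ) := fun x hx => hx.1.le
  have key : ∀ u ∈ Ioc 0 T, ∀ ω, (L ≤ η u ω ∧ η u ω ≤ U) → η u ω = eh L U hT.le η u ω := by
    intro u hu ω h
    rw [eh_eq ⟨hu.1.le, hu.2⟩, clip_eq h.1 h.2]
  constructor
  · have h1 := Measure.ae_ae_of_ae_prod hη_bdd
    filter_upwards [h1] with ω hω
    have h2 := ae_restrict_of_ae_restrict_of_subset hsub hω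
    filter_upwards [h2, ae_restrict_mem measurableSet_Ioc] with u hu hm
    exact key u hm ω hu
  · have h0 : ∀ᵐ p ∂((volume.restrict (Set.Ici (0:ℝ))).prod μ),
        L ≤ η p.1 p.2 ∧ η p.1 p.2 ≤ U :=
      (Measure.measurePreserving_swap (μ := volume.restrict (Set.Ici (0:ℝ))) (ν := μ)).quasiMeasurePreserving.ae hη_bdd
    have h1 := Measure.ae_ae_of_ae_prod h0
    have h2 := ae_restrict_of_ae_restrict_of_subset hsub h1
    filter_upwards [h2, ae_restrict_mem measurableSet_Ioc] with u hu hm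
    filter_upwards [hu] with ω hω
    exact key u hm ω hω

lemma weak_main (hUC : UsualConditions μ F) (hL : 0 < L) (hLU : L < U) (hT : 0 < T)
    {η : ℝ → Ω → ℝ} (hη_prog : ProgMeas F η)
    (hη_bdd : ∀ᵐ p ∂(μ.prod (volume.restrict (Set.Ici (0:ℝ)))),
      L ≤ η p.2 p.1 ∧ η p.2 p.1 ≤ U)
    {lam : ℝ → ℕ → ℝ} (hlam_meas : ∀ x : ℕ, Measurable (fun t => lam t x))
    (hlam_bdd : ∀ x : ℕ, ∀ᵐ t ∂(volume.restrict (Set.Ici (0:ℝ))),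
      L ≤ lam t x ∧ lam t x ≤ U)
    (h : InversionSetting μ F η lam τ) (k : ℕ) {ξ : Ω → ℝ} {K t : ℝ}
    (hξ : BM μ (jumpFilt F τ k T) K ξ) (ht : 0 ≤ t) (htT : t ≤ T) :
    ∫ ω, ξ ω * Jn (τ (k + 1)) 0 t ω ∂μ = ∫ u in Ioc 0 t, ∫ ω, ξ ω *
      kap μ τ (eh L U hT.le η) (fun s k => clip L U (lam s k)) k u ω ∂μ := by
  have E := mk_E (L := L) (U := U) hUC.1 hL hLU hT hη_prog hlam_meas
  have J := mk_JS hUC h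
  obtain ⟨e1, e2⟩ := eta_ae hT hη_bdd
  have hsub : Ioc 0 T ⊆ Ici (0:ℝ) := fun x hx => hx.1.le
  have hl : ∀ k, ∀ᵐ u ∂(volume.restrict (Ioc 0 T)), lam u k = clip L U (lam u k) := by
    intro k
    filter_upwards [ae_restrict_of_ae_restrict_of_subset hsub (hlam_bdd k)] with u hu
    rw [clip_eq hu.1 hu.2]
  have hI := integrand_eq E J e1 e2 hl
  obtain ⟨Z, Zc, -, Ze⟩ := h.2.2.2.2.1 k
  have D : CompData μ (jumpFilt F τ k) (jumpFiltInf F τ) (τ (k + 1)) Z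
      (kap μ τ (eh L U hT.le η) (fun s k => clip L U (lam s k)) k) (U * (U * (1 / L))) T :=
    { hH := J.gH k
      Gle := J.gG.le
      Gmono := J.gG.mono
      imm := J.imm k
      σm := fun s hs => J.mG (k + 1) hs
      Zc := Zc
      Ze := Ze
      κm := E.kap_meas J k
      κb := E.kap_abs J k
      κG := fun u hu huT => E.kap_G J k hu huT
      mg := fun s t hs hst htT B hB => by
        refine mg_main E J h.2.2.2.2.2 ?_ k hs hst htT hB
        intro t ht htT
        filter_upwards [hI] with ω hω
        have := ae_restrict_of_ae_restrict_of_subset (show Ioc 0 t ⊆ Ioc 0 T from fun x hx => ⟨hx.1, hx.2.trans htT⟩) hω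
        rw [integral_congr_ae this] }
  exact D.weak hξ ht htT

end S7

section S8
variable {m0 : MeasurableSpace Ω} {E : Type*} [mE : MeasurableSpace E]

lemma ratio_est {L U p p' A A' b : ℝ} (hL : 0 < L) (hU : 0 ≤ U) (hp : 0 ≤ p) (hp' : 0 ≤ p')
    (hA : L * p ≤ A) (hA' : L * p' ≤ A') (hb : |p - p'| ≤ b) (hbA : |A - A'| ≤ U * b) :
    p' * |p / A - p' / A'| ≤ (U / L ^ 2 + 1 / L) * b := by
  have hb0 : 0 ≤ b := (abs_nonneg _).trans hb
  have hC : 0 ≤ U / L ^ 2 + 1 / L := by positivity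
  rcases hp'.eq_or_lt with h | hp'
  · rw [← h, zero_mul]; positivity
  have hA'0 : 0 < A' := (mul_pos hL hp').trans_le hA'
  have hr' : p' / A' ≤ 1 / L := by
    rw [div_le_div_iff₀ hA'0 hL]; linarith
  have hr'0 : 0 ≤ p' / A' := by positivity
  rcases hp.eq_or_lt with h | hp
  · subst h
    rw [zero_div, zero_sub, abs_neg, abs_of_nonneg hr'0]
    rw [zero_sub, abs_neg, abs_of_pos hp'] at hb
    have h1 : p' * (p' / A') ≤ b * (1 / L) := mul_le_mul hb hr' hr'0 hb0
    have h2 : 0 ≤ U / L ^ 2 * b := by positivity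
    linarith
  have hA0 : 0 < A := (mul_pos hL hp).trans_le hA
  have hr : p / A ≤ 1 / L := by
    rw [div_le_div_iff₀ hA0 hL]; linarith
  have hr0 : 0 ≤ p / A := by positivity
  have e1 : p' * (p / A - p' / A') = (p' / A') * ((p / A) * (A' - A)) + (p' / A') * (p - p') := by
    field_simp; ring
  rw [← abs_of_pos hp', ← abs_mul, abs_of_pos hp', e1]
  have hbA' : |A' - A| ≤ U * b := by rw [abs_sub_comm]; exact hbA
  calc _ ≤ |(p' / A') * ((p / A) * (A' - A))| + |(p' / A') * (p - p')| := abs_add_le _ _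
    _ = (p' / A') * ((p / A) * |A' - A|) + (p' / A') * |p - p'| := by
      rw [abs_mul, abs_mul, abs_mul, abs_of_nonneg hr'0, abs_of_nonneg hr0]
    _ ≤ (1 / L) * ((1 / L) * (U * b)) + (1 / L) * b := by gcongr
    _ = _ := by field_simp

/-- integral of a function of `Y` on the event `u ≤ σ`. -/
def Sf (μ : Measure Ω) (Y : Ω → E) (σ : Ω → ℝ) (Φ : E → ℝ) (u : ℝ) : ℝ :=
  ∫ ω, Φ (Y ω) * (if u ≤ σ ω then 1 else 0) ∂μ

/-- integral of a function of `Y` on the event `u < σ`. -/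
def Df (μ : Measure Ω) (Y : Ω → E) (σ : Ω → ℝ) (Φ : E → ℝ) (u : ℝ) : ℝ :=
  ∫ ω, Φ (Y ω) * (if u < σ ω then 1 else 0) ∂μ

/-- indicator of `ρ < u`. -/
def ri (ρ : E → ℝ) (u : ℝ) (y : E) : ℝ := if ρ y < u then 1 else 0

/-- the deterministic factor of the intensity. -/
def af (μ : Measure Ω) (Y : Ω → E) (σ : Ω → ℝ) (ρ : E → ℝ) (e : ℝ → E → ℝ) (l : ℝ → ℝ) (u : ℝ) : ℝ :=
  l u * (Sf μ Y σ (ri ρ u) u / Sf μ Y σ (fun y => ri ρ u y * e u y) u)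

/-- weak evolution equation for the law of `(Y, σ)`. -/
structure US (μ : Measure Ω) (Y : Ω → E) (σ : Ω → ℝ) (ρ : E → ℝ) (e : ℝ → E → ℝ) (l : ℝ → ℝ)
    (T : ℝ) : Prop where
  Ym : Measurable Y
  σm : Measurable σ
  σpos : ∀ᵐ ω ∂μ, 0 < σ ω
  Wi : ∀ Ψ : E → ℝ, Measurable Ψ → (∀ y, |Ψ y| ≤ 1) → ∀ t, 0 ≤ t → t ≤ T →
    IntegrableOn (fun u => af μ Y σ ρ e l u * Sf μ Y σ (fun y => Ψ y * (ri ρ u y * e u y)) u) (Ioc 0 t)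
  W : ∀ Ψ : E → ℝ, Measurable Ψ → (∀ y, |Ψ y| ≤ 1) → ∀ t, 0 ≤ t → t ≤ T →
    Df μ Y σ Ψ t = (∫ ω, Ψ (Y ω) ∂μ) -
      ∫ u in Ioc 0 t, af μ Y σ ρ e l u * Sf μ Y σ (fun y => Ψ y * (ri ρ u y * e u y)) u

lemma ri_nonneg (ρ : E → ℝ) (u : ℝ) (y : E) : 0 ≤ ri ρ u y := by unfold ri; split_ifs <;> simp

lemma ri_le (ρ : E → ℝ) (u : ℝ) (y : E) : ri ρ u y ≤ 1 := by unfold ri; split_ifs <;> simp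

lemma ri_meas {ρ : E → ℝ} (hρ : Measurable ρ) (u : ℝ) : Measurable (ri ρ u) :=
  Measurable.ite (measurableSet_lt hρ measurable_const) measurable_const measurable_const

variable {μ : Measure Ω} [IsProbabilityMeasure μ] {Y Y' : Ω → E} {σ σ' : Ω → ℝ}

lemma Sf_int (hY : Measurable Y) (hσ : Measurable σ) {Φ : E → ℝ} (hΦ : Measurable Φ) {c : ℝ}
    (hc : ∀ y, |Φ y| ≤ c) (u : ℝ) : Integrable (fun ω => Φ (Y ω) * (if u ≤ σ ω then (1:ℝ) else 0)) μ := by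
  refine Integrable.of_bound (C := c) ?_ (Eventually.of_forall fun ω => ?_)
  · exact ((hΦ.comp hY).mul (Measurable.ite (measurableSet_le measurable_const hσ)
      measurable_const measurable_const)).aestronglyMeasurable
  · have := hc (Y ω)
    have h0 : 0 ≤ c := (abs_nonneg _).trans this
    split_ifs <;> simp [this, h0]

lemma Sf_mono (hY : Measurable Y) (hσ : Measurable σ) {Φ Ψ : E → ℝ} (hΦ : Measurable Φ)
    (hΨ : Measurable Ψ) {c d : ℝ} (hc : ∀ y, |Φ y| ≤ c) (hd : ∀ y, |Ψ y| ≤ d) (u : ℝ)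
    (h : ∀ y, Φ y ≤ Ψ y) : Sf μ Y σ Φ u ≤ Sf μ Y σ Ψ u := by
  refine integral_mono (Sf_int hY hσ hΦ hc u) (Sf_int hY hσ hΨ hd u) fun ω => ?_
  have := h (Y ω)
  dsimp only
  split_ifs <;> simp [this]

lemma Sf_smul (Φ : E → ℝ) (c u : ℝ) : Sf μ Y σ (fun y => c * Φ y) u = c * Sf μ Y σ Φ u := by
  unfold Sf
  rw [← integral_const_mul]
  simp only [mul_assoc]

lemma Sf_eq_Df (hσ : Measurable σ) : ∀ᵐ u : ℝ, ∀ Φ : E → ℝ, Sf μ Y σ Φ u = Df μ Y σ Φ u := by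
  have h := Measure.countable_meas_level_set_pos (μ := μ) hσ
  filter_upwards [h.ae_notMem volume] with u hu Φ
  have h0 : μ {ω | σ ω = u} = 0 := by
    by_contra hc
    exact hu (pos_iff_ne_zero.mpr hc)
  have h1 : ∀ᵐ ω ∂μ, σ ω ≠ u := by
    rw [ae_iff]; simpa using h0
  refine integral_congr_ae ?_
  filter_upwards [h1] with ω hω
  have : u ≤ σ ω ↔ u < σ ω := ⟨fun h => lt_of_le_of_ne h hω.symm, le_of_lt⟩
  simp only [this]

lemma Df_abs {Φ : E → ℝ} (hc : ∀ y, |Φ y| ≤ 1) (u : ℝ) :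
    |Df μ Y σ Φ u| ≤ 1 := by
  have := norm_integral_le_of_norm_le_const (μ := μ) (C := 1)
    (f := fun ω => Φ (Y ω) * (if u < σ ω then (1:ℝ) else 0)) (Eventually.of_forall fun ω => by
      have := hc (Y ω)
      split_ifs <;> simp [this])
  simpa [Df] using this

variable {ρ : E → ℝ} {e : ℝ → E → ℝ} {l : ℝ → ℝ} {T L U : ℝ}

/-- one-time estimate -/
lemma point_est (hL : 0 < L) (hLU : L ≤ U) (hρ : Measurable ρ) {u : ℝ} (hem : Measurable (e u))
    (hge : ∀ y, L ≤ e u y) (hle : ∀ y, e u y ≤ U) (hl0 : 0 ≤ l u) (hlU : l u ≤ U)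
    (hY : Measurable Y) (hσ : Measurable σ) (hY' : Measurable Y') (hσ' : Measurable σ')
    {b : ℝ} (hb : ∀ Φ : E → ℝ, Measurable Φ → (∀ y, |Φ y| ≤ 1) → |Sf μ Y σ Φ u - Sf μ Y' σ' Φ u| ≤ b)
    {Ψ : E → ℝ} (hΨ : Measurable Ψ) (hΨ1 : ∀ y, |Ψ y| ≤ 1) :
    |af μ Y σ ρ e l u * Sf μ Y σ (fun y => Ψ y * (ri ρ u y * e u y)) u -
      af μ Y' σ' ρ e l u * Sf μ Y' σ' (fun y => Ψ y * (ri ρ u y * e u y)) u| ≤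
      (U ^ 2 / L + U ^ 2 * (U / L ^ 2 + 1 / L)) * b := by
  have hU : 0 < U := hL.trans_le hLU
  have hr := ri_meas hρ u
  have hr1 : ∀ y, |ri ρ u y| ≤ 1 := fun y => by
    rw [abs_of_nonneg (ri_nonneg _ _ _)]; exact ri_le _ _ _
  have hre : Measurable (fun y => ri ρ u y * e u y) := hr.mul hem
  have hre0 : ∀ y, 0 ≤ ri ρ u y * e u y := fun y =>
    mul_nonneg (ri_nonneg _ _ _) (hL.le.trans (hge y))
  have hre1 : ∀ y, |ri ρ u y * e u y| ≤ U := fun y => by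
    rw [abs_of_nonneg (hre0 y)]
    calc _ ≤ 1 * U := mul_le_mul (ri_le _ _ _) (hle y) (hL.le.trans (hge y)) zero_le_one
      _ = U := one_mul _
  have hF : Measurable (fun y => Ψ y * (ri ρ u y * e u y)) := hΨ.mul hre
  have hF1 : ∀ y, |Ψ y * (ri ρ u y * e u y)| ≤ U := fun y => by
    rw [abs_mul]
    calc _ ≤ 1 * U := mul_le_mul (hΨ1 y) (hre1 y) (abs_nonneg _) zero_le_one
      _ = U := one_mul _
  have hFr : ∀ y, |Ψ y * (ri ρ u y * e u y)| ≤ U * ri ρ u y := fun y => by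
    rw [abs_mul, abs_of_nonneg (hre0 y)]
    calc _ ≤ 1 * (ri ρ u y * U) := mul_le_mul (hΨ1 y)
          (mul_le_mul_of_nonneg_left (hle y) (ri_nonneg _ _ _)) (hre0 y) zero_le_one
      _ = _ := by ring
  have hbU : ∀ Φ : E → ℝ, Measurable Φ → (∀ y, |Φ y| ≤ U) →
      |Sf μ Y σ Φ u - Sf μ Y' σ' Φ u| ≤ U * b := by
    intro Φ hΦ hΦ1
    have h1 := hb (fun y => U⁻¹ * Φ y) (measurable_const.mul hΦ) (fun y => by
      rw [abs_mul, abs_of_pos (inv_pos.mpr hU), inv_mul_le_iff₀ hU, mul_one]; exact hΦ1 y)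
    rw [Sf_smul, Sf_smul, ← mul_sub, abs_mul, abs_of_pos (inv_pos.mpr hU),
      inv_mul_le_iff₀ hU] at h1
    exact h1
  have hb0 : 0 ≤ b := (abs_nonneg _).trans (hb _ hr hr1)
  have hp : ∀ {Y : Ω → E} {σ : Ω → ℝ}, 0 ≤ Sf μ Y σ (ri ρ u) u := fun {Y σ} =>
    integral_nonneg fun ω => mul_nonneg (ri_nonneg _ _ _) (by positivity)
  have hA : ∀ {Y : Ω → E} {σ : Ω → ℝ}, Measurable Y → Measurable σ →
      L * Sf μ Y σ (ri ρ u) u ≤ Sf μ Y σ (fun y => ri ρ u y * e u y) u := fun {Y σ} hY hσ => by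
    rw [← Sf_smul]
    refine Sf_mono hY hσ (hr.const_mul L) hre (c := L) (d := U) (fun y => ?_) hre1 u fun y => ?_
    · rw [abs_mul, abs_of_pos hL]
      exact (mul_le_mul_of_nonneg_left (hr1 y) hL.le).trans_eq (mul_one _)
    · rw [mul_comm]
      exact mul_le_mul_of_nonneg_left (hge y) (ri_nonneg _ _ _)
  have hS' : |Sf μ Y' σ' (fun y => Ψ y * (ri ρ u y * e u y)) u| ≤ U * Sf μ Y' σ' (ri ρ u) u := by
    rw [← Sf_smul]
    have hUr : ∀ y, |U * ri ρ u y| ≤ U := fun y => by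
      rw [abs_mul, abs_of_pos hU]
      exact (mul_le_mul_of_nonneg_left (hr1 y) hU.le).trans_eq (mul_one _)
    rw [abs_le]
    constructor
    · have h1 := Sf_mono (μ := μ) (Φ := fun y => (-U) * ri ρ u y) hY' hσ' (hr.const_mul (-U)) hF (c := U) (d := U)
        (fun y => by rw [neg_mul, abs_neg]; exact hUr y) hF1 u (fun y => by
          have := (abs_le.mp (hFr y)).1; linarith)
      rw [Sf_smul] at h1
      rw [Sf_smul]; linarith
    · exact Sf_mono hY' hσ' hF (hr.const_mul U) hF1 hUr u (fun y => (abs_le.mp (hFr y)).2)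
  have hR := ratio_est (U := U) hL hU.le (hp (Y := Y) (σ := σ)) (hp (Y := Y') (σ := σ')) (hA hY hσ) (hA hY' hσ')
    (hb _ hr hr1) (hbU _ hre hre1)
  have hSS := hbU _ hF hF1
  have haA : |Sf μ Y σ (ri ρ u) u / Sf μ Y σ (fun y => ri ρ u y * e u y) u| ≤ 1 / L := by
    have h1 := hA hY hσ
    have h2 := hp (Y := Y) (σ := σ)
    rw [abs_of_nonneg (div_nonneg h2 ((mul_nonneg hL.le h2).trans h1))]
    rcases h2.eq_or_lt with h | h
    · rw [← h, zero_div]; positivity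
    · rw [div_le_div_iff₀ ((mul_pos hL h).trans_le h1) hL]; linarith
  unfold af
  generalize Sf μ Y σ (fun y => Ψ y * (ri ρ u y * e u y)) u = S at *
  generalize Sf μ Y' σ' (fun y => Ψ y * (ri ρ u y * e u y)) u = S' at *
  generalize Sf μ Y σ (ri ρ u) u / Sf μ Y σ (fun y => ri ρ u y * e u y) u = q at *
  generalize Sf μ Y' σ' (ri ρ u) u / Sf μ Y' σ' (fun y => ri ρ u y * e u y) u = q' at *
  have hp' := hp (Y := Y') (σ := σ')
  generalize Sf μ Y' σ' (ri ρ u) u = p' at *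
  have e1 : l u * q * S - l u * q' * S' = l u * (q * (S - S')) + l u * (S' * (q - q')) := by ring
  rw [e1]
  calc _ ≤ |l u * (q * (S - S'))| + |l u * (S' * (q - q'))| := abs_add_le _ _
    _ = l u * (|q| * |S - S'|) + l u * (|S'| * |q - q'|) := by
      rw [abs_mul, abs_mul, abs_mul, abs_mul, abs_of_nonneg hl0]
    _ ≤ U * ((1 / L) * (U * b)) + U * (U * p' * |q - q'|) := by gcongr
    _ = U * ((1 / L) * (U * b)) + U ^ 2 * (p' * |q - q'|) := by ring
    _ ≤ U * ((1 / L) * (U * b)) + U ^ 2 * ((U / L ^ 2 + 1 / L) * b) := by gcongr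
    _ = _ := by field_simp

lemma pow_int {C t : ℝ} (ht : 0 ≤ t) (n : ℕ) :
    ∫ u in Ioc 0 t, C * (2 * (C * u) ^ n / n.factorial) = 2 * (C * t) ^ (n + 1) / (n + 1).factorial := by
  rw [← intervalIntegral.integral_of_le ht]
  have : ∀ u : ℝ, C * (2 * (C * u) ^ n / n.factorial) = (2 * C ^ (n + 1) / n.factorial) * u ^ n := by
    intro u; rw [mul_pow]; ring
  simp only [this]
  rw [intervalIntegral.integral_const_mul, integral_pow, Nat.factorial_succ]
  push_cast
  have h1 : (n.factorial : ℝ) ≠ 0 := by positivity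
  have h2 : (n : ℝ) + 1 ≠ 0 := by positivity
  field_simp
  simp [mul_pow]

lemma US.iter (hL : 0 < L) (hLU : L ≤ U) (hρ : Measurable ρ) (hem : ∀ u, Measurable (e u))
    (hge : ∀ u y, L ≤ e u y) (hle : ∀ u y, e u y ≤ U) (hl0 : ∀ u, 0 ≤ l u) (hlU : ∀ u, l u ≤ U)
    (h : US μ Y σ ρ e l T) (h' : US μ Y' σ' ρ e l T) (hlaw : Measure.map Y μ = Measure.map Y' μ) (n : ℕ) :
    ∀ Ψ : E → ℝ, Measurable Ψ → (∀ y, |Ψ y| ≤ 1) → ∀ t, 0 ≤ t → t ≤ T →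
      |Df μ Y σ Ψ t - Df μ Y' σ' Ψ t| ≤
        2 * ((U ^ 2 / L + U ^ 2 * (U / L ^ 2 + 1 / L)) * t) ^ n / n.factorial := by
  induction n with
  | zero =>
    intro Ψ hΨ h1 t ht htT
    have := abs_sub_le_of (Df_abs (μ := μ) (Y := Y) (σ := σ) h1 t) (Df_abs (μ := μ) (Y := Y') (σ := σ') h1 t)
    simp; linarith
  | succ n ih =>
    intro Ψ hΨ h1 t ht htT
    set C := U ^ 2 / L + U ^ 2 * (U / L ^ 2 + 1 / L) with hC
    have e0 : ∫ ω, Ψ (Y ω) ∂μ = ∫ ω, Ψ (Y' ω) ∂μ := by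
      rw [← integral_map h.Ym.aemeasurable hΨ.aestronglyMeasurable, hlaw,
        integral_map h'.Ym.aemeasurable hΨ.aestronglyMeasurable]
    rw [h.W Ψ hΨ h1 t ht htT, h'.W Ψ hΨ h1 t ht htT, e0, sub_sub_sub_cancel_left,
      ← integral_sub (h'.Wi Ψ hΨ h1 t ht htT) (h.Wi Ψ hΨ h1 t ht htT), ← pow_int ht n]
    rw [← Real.norm_eq_abs]
    refine norm_integral_le_of_norm_le ?_ ?_
    · exact (Continuous.integrableOn_Icc (by fun_prop)).mono_set Ioc_subset_Icc_self
    · filter_upwards [ae_restrict_mem measurableSet_Ioc, ae_restrict_of_ae (Sf_eq_Df (μ := μ) (Y := Y) h.σm),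
        ae_restrict_of_ae (Sf_eq_Df (μ := μ) (Y := Y') h'.σm)] with u hu s1 s2
      rw [norm_sub_rev]
      refine point_est hL hLU hρ (hem u) (hge u) (hle u) (hl0 u) (hlU u) h.Ym h.σm h'.Ym h'.σm ?_ hΨ h1
      intro Φ hΦ hΦ1
      rw [s1, s2]
      exact ih Φ hΦ hΦ1 u hu.1.le (hu.2.trans htT)

lemma US.Df_eq (hL : 0 < L) (hLU : L ≤ U) (hρ : Measurable ρ) (hem : ∀ u, Measurable (e u))
    (hge : ∀ u y, L ≤ e u y) (hle : ∀ u y, e u y ≤ U) (hl0 : ∀ u, 0 ≤ l u) (hlU : ∀ u, l u ≤ U)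
    (h : US μ Y σ ρ e l T) (h' : US μ Y' σ' ρ e l T) (hlaw : Measure.map Y μ = Measure.map Y' μ)
    {Ψ : E → ℝ} (hΨ : Measurable Ψ) (h1 : ∀ y, |Ψ y| ≤ 1) {t : ℝ} (ht : 0 ≤ t) (htT : t ≤ T) :
    Df μ Y σ Ψ t = Df μ Y' σ' Ψ t := by
  have h2 := (FloorSemiring.tendsto_pow_div_factorial_atTop
    ((U ^ 2 / L + U ^ 2 * (U / L ^ 2 + 1 / L)) * t)).const_mul 2
  rw [mul_zero] at h2
  have h3 : |Df μ Y σ Ψ t - Df μ Y' σ' Ψ t| ≤ 0 := ge_of_tendsto' h2 fun n => by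
    rw [← mul_div_assoc]
    exact US.iter hL hLU hρ hem hge hle hl0 hlU h h' hlaw n Ψ hΨ h1 t ht htT
  exact sub_eq_zero.mp (abs_nonpos_iff.mp h3)

lemma US.law (hL : 0 < L) (hLU : L ≤ U) (hρ : Measurable ρ) (hem : ∀ u, Measurable (e u))
    (hge : ∀ u y, L ≤ e u y) (hle : ∀ u y, e u y ≤ U) (hl0 : ∀ u, 0 ≤ l u) (hlU : ∀ u, l u ≤ U)
    (h : US μ Y σ ρ e l T) (h' : US μ Y' σ' ρ e l T) (hlaw : Measure.map Y μ = Measure.map Y' μ) :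
    Measure.map (fun ω => (Y ω, min (σ ω) T)) μ = Measure.map (fun ω => (Y' ω, min (σ' ω) T)) μ := by
  have hm : Measurable (fun ω => (Y ω, min (σ ω) T)) := h.Ym.prodMk (h.σm.min measurable_const)
  have hm' : Measurable (fun ω => (Y' ω, min (σ' ω) T)) := h'.Ym.prodMk (h'.σm.min measurable_const)
  have hp1 : IsProbabilityMeasure (Measure.map (fun ω => (Y ω, min (σ ω) T)) μ) :=
    Measure.isProbabilityMeasure_map hm.aemeasurable
  refine Measure.ext_prod fun {B S} hB hS => ?_
  rw [Measure.map_apply hm (hB.prod hS), Measure.map_apply hm' (hB.prod hS)]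
  have key : Measure.map (fun ω => min (σ ω) T) (μ.restrict (Y ⁻¹' B)) =
      Measure.map (fun ω => min (σ' ω) T) (μ.restrict (Y' ⁻¹' B)) := by
    have hf : IsFiniteMeasure (Measure.map (fun ω => min (σ ω) T) (μ.restrict (Y ⁻¹' B))) := by infer_instance
    refine Measure.ext_of_Iic _ _ fun t => ?_
    rw [Measure.map_apply (h.σm.min measurable_const) measurableSet_Iic,
      Measure.map_apply (h'.σm.min measurable_const) measurableSet_Iic,
      Measure.restrict_apply ((h.σm.min measurable_const) measurableSet_Iic),
      Measure.restrict_apply ((h'.σm.min measurable_const) measurableSet_Iic)]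
    have hlB : μ (Y ⁻¹' B) = μ (Y' ⁻¹' B) := by
      rw [← Measure.map_apply h.Ym hB, hlaw, Measure.map_apply h'.Ym hB]
    rcases le_or_gt T t with hTt | hTt
    · have e1 : ∀ σ : Ω → ℝ, (fun ω => min (σ ω) T) ⁻¹' Iic t = univ := fun σ => by
        ext ω; simp [hTt]
      rw [e1, e1, univ_inter, univ_inter, hlB]
    rcases lt_or_ge t 0 with ht | ht
    · have e1 : ∀ {σ : Ω → ℝ} {A : Set Ω}, (∀ᵐ ω ∂μ, 0 < σ ω) →
          μ ((fun ω => min (σ ω) T) ⁻¹' Iic t ∩ A) = 0 := by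
        intro σ A hσ
        refine measure_mono_null inter_subset_left ?_
        rw [← nonpos_iff_eq_zero, ← ae_iff.mp hσ]
        refine measure_mono fun ω hω => ?_
        have : min (σ ω) T ≤ t := hω
        have h3 : σ ω ≤ t := by
          rcases min_le_iff.mp this with h | h
          · exact h
          · linarith
        show ¬ (0 < σ ω)
        linarith
      rw [e1 h.σpos, e1 h'.σpos]
    · have hD := US.Df_eq hL hLU hρ hem hge hle hl0 hlU h h' hlaw
        (Ψ := B.indicator fun _ => 1) (measurable_const.indicator hB) (fun y => by
          by_cases hy : y ∈ B <;> simp [hy]) ht hTt.le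
      have e1 : ∀ {Y : Ω → E} {σ : Ω → ℝ}, Measurable Y → Measurable σ →
          Df μ Y σ (B.indicator fun _ => 1) t = μ.real (Y ⁻¹' B ∩ {ω | t < σ ω}) := by
        intro Y σ hY hσ
        rw [← integral_indicator_one ((hY hB).inter (measurableSet_lt measurable_const hσ))]
        refine integral_congr_ae (Eventually.of_forall fun ω => ?_)
        by_cases h1 : Y ω ∈ B <;> by_cases h2 : t < σ ω <;> simp [h1, h2, indicator]
      rw [e1 h.Ym h.σm, e1 h'.Ym h'.σm] at hD
      have hD' : μ (Y ⁻¹' B ∩ {ω | t < σ ω}) = μ (Y' ⁻¹' B ∩ {ω | t < σ' ω}) :=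
        (measureReal_eq_measureReal_iff).mp hD
      have e2 : ∀ {Y : Ω → E} {σ : Ω → ℝ}, Measurable Y → Measurable σ →
          μ ((fun ω => min (σ ω) T) ⁻¹' Iic t ∩ Y ⁻¹' B) = μ (Y ⁻¹' B) - μ (Y ⁻¹' B ∩ {ω | t < σ ω}) := by
        intro Y σ hY hσ
        rw [← measure_diff inter_subset_left
          (((hY hB).inter (measurableSet_lt measurable_const hσ)).nullMeasurableSet) (measure_ne_top _ _)]
        congr 1
        ext ω
        have : ¬ T ≤ t := not_le.mpr hTt
        simp only [mem_inter_iff, mem_preimage, mem_Iic, mem_diff, Set.mem_ofPred_eq, min_le_iff, this, or_false, not_and, not_lt]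
        tauto
      rw [e2 h.Ym h.σm, e2 h'.Ym h'.σm, hlB, hD']
  have e3 := congrArg (fun ν => ν S) key
  rw [Measure.map_apply (h.σm.min measurable_const) hS,
      Measure.map_apply (h'.σm.min measurable_const) hS,
      Measure.restrict_apply ((h.σm.min measurable_const) hS),
      Measure.restrict_apply ((h'.σm.min measurable_const) hS)] at e3
  rw [inter_comm, inter_comm (_ ⁻¹' S)] at e3
  exact e3

end S8

section S9
variable {m0 : MeasurableSpace Ω} {μ : Measure Ω} [IsProbabilityMeasure μ]
  {E₀ : Type*} [mE0 : MeasurableSpace E₀]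
  {F : ℝ → MeasurableSpace Ω} {τ τ' : ℕ → Ω → ℝ} {L U T : ℝ} {e : ℝ → Ω → ℝ} {l : ℝ → ℕ → ℝ}
  {ι : Ω → E₀} {e' : ℝ → E₀ → ℝ}

/-- the base information together with the first `k` (truncated) jump times. -/
def Yk (T : ℝ) (ι : Ω → E₀) (τ : ℕ → Ω → ℝ) (k : ℕ) (ω : Ω) : E₀ × (ℕ → ℝ) :=
  (ι ω, fun j => if j ≤ k then min (τ j ω) T else 0)

lemma JS.min_meas (J : JS μ F τ) (hT : 0 < T) {k j : ℕ} (hj : j ≤ k) :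
    Measurable[jumpFilt F τ k T] (fun ω => min (τ j ω) T) := by
  refine @measurable_of_Iic _ _ _ _ _ (jumpFilt F τ k T) _ _ _ _ fun s => ?_
  rcases le_or_gt T s with h | h
  · have : (fun ω => min (τ j ω) T) ⁻¹' Iic s = univ := by ext ω; simp [h]
    rw [this]; exact MeasurableSet.univ
  have e1 : (fun ω => min (τ j ω) T) ⁻¹' Iic s = {ω | τ j ω ≤ s} := by
    ext ω
    have : ¬ T ≤ s := not_le.mpr h
    simp [this]
  rw [e1]
  rcases lt_or_ge s 0 with hs | hs
  · refine J.nullH k hT.le _ ?_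
    refine measure_mono_null ?_ (ae_iff.mp J.good)
    intro ω hω
    show ¬ GP τ ω
    exact fun hc => by
      have h1 := hc.nonneg j
      have h2 : τ j ω ≤ s := hω
      linarith
  · exact (J.gH k).mono s T hs h.le _ (J.mH hj hs)

lemma JS.Yk_meas (J : JS μ F τ) (hT : 0 < T) (hι : Measurable[F T] ι) (k : ℕ) :
    Measurable[jumpFilt F τ k T] (Yk T ι τ k) := by
  letI : MeasurableSpace Ω := jumpFilt F τ k T
  refine Measurable.prodMk (hι.mono (F_le_jump J.Fmono k hT.le) le_rfl) ?_
  refine measurable_pi_lambda _ fun j => ?_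
  by_cases hj : j ≤ k
  · simp only [hj, if_true]
    exact J.min_meas hT hj
  · simp only [hj, if_false]
    exact measurable_const

lemma ind_split {u : ℝ} (hu : u ≤ T) (k : ℕ) (ω : Ω) :
    ri (fun y : E₀ × (ℕ → ℝ) => y.2 k) u (Yk T ι τ k ω) * (if u ≤ τ (k + 1) ω then 1 else 0) =
      ind τ k u ω := by
  have h1 : min (τ k ω) T < u ↔ τ k ω < u := by
    rw [min_lt_iff]; exact or_iff_left (not_lt.mpr hu)
  simp only [ri, Yk, ind, le_refl, if_true, h1]
  by_cases h2 : τ k ω < u <;> by_cases h3 : u ≤ τ (k + 1) ω <;> simp [h2, h3]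

lemma mk_US (E : EHyp m0 F L U T e l) (J : JS μ F τ) (hι : Measurable[F T] ι)
    (he : ∀ u ω, e u ω = e' u (ι ω))
    (hW : ∀ (k : ℕ) (ξ : Ω → ℝ) (K t : ℝ), BM μ (jumpFilt F τ k T) K ξ → 0 ≤ t → t ≤ T →
      ∫ ω, ξ ω * Jn (τ (k + 1)) 0 t ω ∂μ = ∫ u in Ioc 0 t, ∫ ω, ξ ω * kap μ τ e l k u ω ∂μ)
    (k : ℕ) :
    US μ (Yk T ι τ k) (τ (k + 1)) (fun y => y.2 k) (fun u y => e' u y.1) (fun u => l u k) T := by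
  have hT := E.hT
  have hYm := J.Yk_meas hT hι k
  have hYm0 : Measurable (Yk T ι τ k) := hYm.mono ((J.gH k).le T hT.le) le_rfl
  have hpos : ∀ᵐ ω ∂μ, 0 < τ (k + 1) ω := by
    filter_upwards [J.good] with ω hω
    have := hω.sm (Nat.succ_pos k)
    simpa [hω.z] using this
  have e1 : ∀ u ≤ T, Sf μ (Yk T ι τ k) (τ (k + 1)) (ri (fun y => y.2 k) u) u = pk μ τ k u := by
    intro u hu
    unfold Sf pk
    simp only [ind_split hu]
  have e2 : ∀ (Ψ : E₀ × (ℕ → ℝ) → ℝ), ∀ u ≤ T, Sf μ (Yk T ι τ k) (τ (k + 1))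
      (fun y => Ψ y * (ri (fun y => y.2 k) u y * e' u y.1)) u =
        ∫ ω, Ψ (Yk T ι τ k ω) * (ind τ k u ω * e u ω) ∂μ := by
    intro Ψ u hu
    unfold Sf
    refine integral_congr_ae (Eventually.of_forall fun ω => ?_)
    dsimp only
    rw [← ind_split (ι := ι) hu k ω, he u ω]
    show Ψ (Yk T ι τ k ω) * (_ * e' u (ι ω)) * _ = _
    ring
  have e3 : ∀ u ≤ T, Sf μ (Yk T ι τ k) (τ (k + 1))
      (fun y => (ri (fun y => y.2 k) u y * e' u y.1)) u = Ak μ τ e k u := by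
    intro u hu
    have := e2 (fun _ => 1) u hu
    simpa only [one_mul, Ak] using this
  have e4 : ∀ u ≤ T, af μ (Yk T ι τ k) (τ (k + 1)) (fun y => y.2 k) (fun u y => e' u y.1) (fun u => l u k) u
      = ak μ τ e l k u := by
    intro u hu
    unfold af ak
    rw [e1 u hu, e3 u hu]
  have e5 : ∀ (Ψ : E₀ × (ℕ → ℝ) → ℝ), ∀ u ≤ T,
      af μ (Yk T ι τ k) (τ (k + 1)) (fun y => y.2 k) (fun u y => e' u y.1) (fun u => l u k) u *
       Sf μ (Yk T ι τ k) (τ (k + 1))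
      (fun y => Ψ y * (ri (fun y => y.2 k) u y * e' u y.1)) u =
      ∫ ω, Ψ (Yk T ι τ k ω) * kap μ τ e l k u ω ∂μ := by
    intro Ψ u hu
    rw [e4 u hu, e2 Ψ u hu, ← integral_const_mul]
    unfold kap
    congr 1
    ext ω
    ring
  have hBM : ∀ Ψ : E₀ × (ℕ → ℝ) → ℝ, Measurable Ψ → (∀ y, |Ψ y| ≤ 1) →
      BM μ (jumpFilt F τ k T) 1 (fun ω => Ψ (Yk T ι τ k ω)) := fun Ψ hΨ h1 =>
    ⟨((hΨ.comp hYm).stronglyMeasurable).aestronglyMeasurable, Eventually.of_forall fun ω => h1 _⟩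
  refine ⟨hYm0, J.mτ (k + 1), hpos, ?_, ?_⟩
  · intro Ψ hΨ h1 t ht htT
    have hi := int_time (E.kap_meas J k) (E.kap_abs J k) 0 t ((hBM Ψ hΨ h1).int ((J.gH k).le T hT.le))
    refine hi.congr_fun (fun u hu => ?_) measurableSet_Ioc
    exact (e5 Ψ u (hu.2.trans htT)).symm
  · intro Ψ hΨ h1 t ht htT
    rw [setIntegral_congr_fun measurableSet_Ioc (fun u (hu : u ∈ Ioc 0 t) => e5 Ψ u (hu.2.trans htT)),
      ← hW k _ 1 t (hBM Ψ hΨ h1) ht htT]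
    have hinteg := (hBM Ψ hΨ h1).int ((J.gH k).le T hT.le)
    have hJi : Integrable (fun ω => Ψ (Yk T ι τ k ω) * Jn (τ (k + 1)) 0 t ω) μ := by
      refine hinteg.mul_bdd (c := 1) ?_ (Eventually.of_forall fun ω => ?_)
      · refine Measurable.aestronglyMeasurable ?_
        exact Measurable.ite ((measurableSet_lt measurable_const (J.mτ (k + 1))).inter
          (measurableSet_le (J.mτ (k + 1)) measurable_const)) measurable_const measurable_const
      · rw [Real.norm_eq_abs, abs_of_nonneg (Jn_nonneg _ _ _ _)]; exact Jn_le _ _ _ _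
    rw [← integral_sub hinteg hJi]
    unfold Df
    refine integral_congr_ae ?_
    filter_upwards [hpos] with ω hω
    rw [Jn_eq 0 t ht ω, if_pos hω]
    ring

lemma law_eq (E : EHyp m0 F L U T e l) (J : JS μ F τ) (J' : JS μ F τ') (hι : Measurable[F T] ι)
    (he : ∀ u ω, e u ω = e' u (ι ω)) (hem : ∀ u, Measurable (e' u))
    (hge : ∀ u y, L ≤ e' u y) (hle : ∀ u y, e' u y ≤ U)
    (hW : ∀ (k : ℕ) (ξ : Ω → ℝ) (K t : ℝ), BM μ (jumpFilt F τ k T) K ξ → 0 ≤ t → t ≤ T →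
      ∫ ω, ξ ω * Jn (τ (k + 1)) 0 t ω ∂μ = ∫ u in Ioc 0 t, ∫ ω, ξ ω * kap μ τ e l k u ω ∂μ)
    (hW' : ∀ (k : ℕ) (ξ : Ω → ℝ) (K t : ℝ), BM μ (jumpFilt F τ' k T) K ξ → 0 ≤ t → t ≤ T →
      ∫ ω, ξ ω * Jn (τ' (k + 1)) 0 t ω ∂μ = ∫ u in Ioc 0 t, ∫ ω, ξ ω * kap μ τ' e l k u ω ∂μ)
    (k : ℕ) : Measure.map (Yk T ι τ k) μ = Measure.map (Yk T ι τ' k) μ := by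
  induction k with
  | zero =>
    congr 1
    ext ω j
    · rfl
    · simp only [Yk, Nat.le_zero]
      split_ifs with h
      · rw [h, J.z, J'.z]
      · rfl
  | succ k ih =>
    have h1 := mk_US E J hι he hW k
    have h2 := mk_US E J' hι he hW' k
    have h3 := US.law E.hL E.hLU ((measurable_pi_apply k).comp measurable_snd)
      (fun u => (hem u).comp measurable_fst) (fun u y => hge u y.1) (fun u y => hle u y.1)
      (fun u => E.lge u k) (fun u => E.lle u k) h1 h2 ih
    let g : (E₀ × (ℕ → ℝ)) × ℝ → E₀ × (ℕ → ℝ) := fun p => (p.1.1, Function.update p.1.2 (k + 1) p.2)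
    have hg : Measurable g := by
      refine (measurable_fst.comp measurable_fst).prodMk ?_
      refine measurable_pi_lambda _ fun j => ?_
      by_cases hj : j = k + 1
      · subst hj; simp only [Function.update_self]; exact measurable_snd
      · simp only [Function.update_of_ne hj]
        exact (measurable_pi_apply j).comp (measurable_snd.comp measurable_fst)
    have h4 : ∀ τ : ℕ → Ω → ℝ, Yk T ι τ (k + 1) = g ∘ fun ω => (Yk T ι τ k ω, min (τ (k + 1) ω) T) := by
      intro τ
      ext ω j
      · rfl
      · simp only [Yk, g, Function.comp_apply]
        by_cases hj : j = k + 1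
        · subst hj; simp
        · rw [Function.update_of_ne hj]
          have : j ≤ k + 1 ↔ j ≤ k := by omega
          simp only [this]
    have m1 := h1.Ym.prodMk (h1.σm.min (measurable_const (a := T)))
    have m2 := h2.Ym.prodMk (h2.σm.min (measurable_const (a := T)))
    rw [h4 τ, h4 τ', ← Measure.map_map hg m1, ← Measure.map_map hg m2, h3]

end S9

section S10
variable {m0 : MeasurableSpace Ω} {μ : Measure Ω} [IsProbabilityMeasure μ]
  {E₀ : Type*} [mE0 : MeasurableSpace E₀]
  {F : ℝ → MeasurableSpace Ω} {τ τ' : ℕ → Ω → ℝ} {T : ℝ} {ι : Ω → E₀}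

/-- truncated counts as a function of the jump times. -/
def gK {n : ℕ} (t : Fin (n + 1) → ℝ) (K : ℕ) (y : E₀ × (ℕ → ℝ)) (i : Fin (n + 1)) : ℝ :=
  ∑ j ∈ Finset.range K, if y.2 (j + 1) ≤ t i then (1:ℝ) else 0

lemma gK_meas {n : ℕ} (t : Fin (n + 1) → ℝ) (K : ℕ) : Measurable (gK (E₀ := E₀) t K) := by
  refine measurable_pi_lambda _ fun i => ?_
  refine Finset.measurable_sum _ fun j _ => ?_
  refine Measurable.ite (measurableSet_le ?_ measurable_const) measurable_const measurable_const
  exact (measurable_pi_apply (j + 1)).comp measurable_snd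

lemma gK_eq {ω : Ω} (h : GP τ ω) {n : ℕ} {t : Fin (n + 1) → ℝ} (ht : ∀ i, 0 ≤ t i)
    (htT : ∀ i, t i < T) {K : ℕ} (i : Fin (n + 1)) (hK : countX τ (t i) ω ≤ K) :
    gK t K (Yk T ι τ K ω) i = (countX τ (t i) ω : ℝ) := by
  have h1 : ∀ j ∈ Finset.range K, (if (Yk T ι τ K ω).2 (j + 1) ≤ t i then (1:ℝ) else 0) =
      if j < countX τ (t i) ω then 1 else 0 := by
    intro j hj
    have hj' : j + 1 ≤ K := Finset.mem_range.mp hj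
    have h2 : min (τ (j + 1) ω) T ≤ t i ↔ j < countX τ (t i) ω := by
      rw [min_le_iff, or_iff_left (not_le.mpr (htT i)), ← h.le_countX (ht i), Nat.succ_le_iff]
    simp only [Yk, hj', if_true, h2]
  unfold gK
  rw [Finset.sum_congr rfl h1, ← Finset.sum_filter, Finset.sum_const, nsmul_eq_mul, mul_one]
  congr 1
  have : (Finset.range K).filter (fun j => j < countX τ (t i) ω) = Finset.range (countX τ (t i) ω) := by
    ext j; simp only [Finset.mem_filter, Finset.mem_range]; omega
  rw [this, Finset.card_range]

lemma fdd_meas (J : JS μ F τ) {n : ℕ} {t : Fin (n + 1) → ℝ} (ht : ∀ i, 0 ≤ t i) :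
    Measurable (fun ω (i : Fin (n + 1)) => (countX τ (t i) ω : ℝ)) :=
  measurable_pi_lambda _ fun i => measurable_from_top.comp (J.mX' (ht i))

lemma fdd_tendsto (J : JS μ F τ) {n : ℕ} {t : Fin (n + 1) → ℝ} (ht : ∀ i, 0 ≤ t i)
    (htT : ∀ i, t i < T) (hY : ∀ k, Measurable (Yk T ι τ k)) {S : Set (Fin (n + 1) → ℝ)}
    (hS : MeasurableSet S) :
    Tendsto (fun K => Measure.map (Yk T ι τ K) μ (gK t K ⁻¹' S)) atTop
      (𝓝 (μ ((fun ω (i : Fin (n + 1)) => (countX τ (t i) ω : ℝ)) ⁻¹' S))) := by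
  have h1 : ∀ K, Measure.map (Yk T ι τ K) μ (gK t K ⁻¹' S) = μ (Yk T ι τ K ⁻¹' (gK t K ⁻¹' S)) :=
    fun K => Measure.map_apply (hY K) (gK_meas t K hS)
  simp only [h1]
  refine tendsto_measure_of_ae_tendsto_indicator_of_isFiniteMeasure atTop (fdd_meas J ht hS)
    (fun K => hY K (gK_meas t K hS)) ?_
  filter_upwards [J.good] with ω hω
  have h2 : ∀ᶠ K in atTop, ∀ i, countX τ (t i) ω ≤ K :=
    eventually_all.mpr fun i => eventually_ge_atTop _
  filter_upwards [h2] with K hK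
  have h3 : gK t K (Yk T ι τ K ω) = fun i => (countX τ (t i) ω : ℝ) := by
    ext i; exact gK_eq hω ht htT i (hK i)
  simp only [mem_preimage, h3]

lemma fdd_eq (J : JS μ F τ) (J' : JS μ F τ') {n : ℕ} {t : Fin (n + 1) → ℝ} (ht : ∀ i, 0 ≤ t i)
    (htT : ∀ i, t i < T) (hT : 0 < T) (hι : Measurable[F T] ι)
    (hlaw : ∀ k, Measure.map (Yk T ι τ k) μ = Measure.map (Yk T ι τ' k) μ) :
    Measure.map (fun ω (i : Fin (n + 1)) => (countX τ (t i) ω : ℝ)) μ =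
      Measure.map (fun ω (i : Fin (n + 1)) => (countX τ' (t i) ω : ℝ)) μ := by
  ext S hS
  rw [Measure.map_apply (fdd_meas J ht) hS, Measure.map_apply (fdd_meas J' ht) hS]
  have h1 := fdd_tendsto J ht htT (fun k => (J.Yk_meas hT hι k).mono ((J.gH k).le T hT.le) le_rfl) hS
  have h2 := fdd_tendsto J' ht htT (fun k => (J'.Yk_meas hT hι k).mono ((J'.gH k).le T hT.le) le_rfl) hS
  simp only [hlaw] at h1
  exact tendsto_nhds_unique h1 h2

end S10

/-- Uniqueness in law of the inverted Markovian projection within the class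
of Cox-type counting processes: two counting processes satisfying the conditions of the
uniqueness theorem have the same finite-dimensional distributions. -/
theorem inversion_unique_in_law
    {m0 : MeasurableSpace Ω} (μ : Measure Ω) [IsProbabilityMeasure μ]
    (F : ℝ → MeasurableSpace Ω) (hUC : UsualConditions μ F)
    (L U : ℝ) (hL : 0 < L) (hLU : L < U)
    (η : ℝ → Ω → ℝ) (hη_prog : ProgMeas F η)
    (hη_bdd : ∀ᵐ p ∂(μ.prod (volume.restrict (Set.Ici (0:ℝ)))),
      L ≤ η p.2 p.1 ∧ η p.2 p.1 ≤ U)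
    (lam : ℝ → ℕ → ℝ) (hlam_meas : ∀ x : ℕ, Measurable (fun t => lam t x))
    (hlam_bdd : ∀ x : ℕ, ∀ᵐ t ∂(volume.restrict (Set.Ici (0:ℝ))),
      L ≤ lam t x ∧ lam t x ≤ U)
    (τ τ' : ℕ → Ω → ℝ)
    (h1 : InversionSetting μ F η lam τ)
    (h2 : InversionSetting μ F η lam τ') :
    ∀ (n : ℕ) (t : Fin (n + 1) → ℝ), (∀ i, 0 ≤ t i) → StrictMono t →
      Measure.map (fun ω (i : Fin (n + 1)) => (countX τ (t i) ω : ℝ)) μ =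
      Measure.map (fun ω (i : Fin (n + 1)) => (countX τ' (t i) ω : ℝ)) μ := by
  intro n t ht hmono
  have htT : ∀ i, t i < t (Fin.last n) + 1 := fun i =>
    (hmono.monotone (Fin.le_last i)).trans_lt (lt_add_one _)
  generalize hTdef : t (Fin.last n) + 1 = T at htT
  have hT : 0 < T := (ht 0).trans_lt (htT 0)
  have E := mk_E (L := L) (U := U) hUC.1 hL hLU hT hη_prog hlam_meas
  have J := mk_JS hUC h1
  have J' := mk_JS hUC h2
  have hid : @Measurable Ω Ω (F T) (F T) id := @measurable_id Ω (F T)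
  have hem : ∀ u, @Measurable Ω ℝ (F T) _ (eh L U hT.le η u) := fun u => by
    have hem0 := E.em
    letI : MeasurableSpace Ω := F T
    exact hem0.comp measurable_prodMk_left
  refine fdd_eq (mE0 := F T) (ι := id) J J' ht htT hT hid ?_
  exact law_eq (mE0 := F T) (ι := id) (e' := eh L U hT.le η) E J J' hid (fun _ _ => rfl) hem E.ege E.ele
    (fun k ξ K t hξ h0 h => weak_main hUC hL hLU hT hη_prog hη_bdd hlam_meas hlam_bdd h1 k hξ h0 h)
    (fun k ξ K t hξ h0 h => weak_main hUC hL hLU hT hη_prog hη_bdd hlam_meas hlam_bdd h2 k hξ h0 h)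

end InvMarkovJump
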